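/- Let n ≥ 0 be an integer such that n² − 4 is a nonsquare integer and O_{n²−4} is a maximal order (i.e., n² − 4 is a fundamental discriminant, meaning O_{n²−4} equals the full ring of integers of the quadratic field ℚ(√(n²−4))). Then the class number h_{n²−4} equals 1 if and only if n ∈ {0, 1, 3, 4, 5, 9, 21}, i.e., if and only if n² − 4 ∈ {−4, −3, 5, 12, 21, 77, 437}. -/

import Mathlib

noncomputable section

/-- A complex square root of an integer `d`. -/
def sqrtD (d : ℤ) : ℂ :=
  if 0 ≤ d then ((Real.sqrt d : ℝ) : ℂ) else Complex.I * ((Real.sqrt (-d) : ℝ) : ℂ)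

/-- The element `(Δ + √Δ)/2` generating the quadratic order of discriminant `Δ`. -/
def omegaD (d : ℤ) : ℂ := ((d : ℂ) + sqrtD d) / 2

/-- The quadratic order `O_Δ = ℤ[(Δ + √Δ)/2]` of discriminant `Δ`, as a subring of `ℂ`. -/
def QOrder (d : ℤ) : Subring ℂ := Subring.closure {omegaD d}

/-- The class number `h_Δ`: the order of the (wide) class group of `O_Δ`,
the group of invertible fractional ideals modulo principal fractional ideals. -/
def classNumber (d : ℤ) : ℕ := Nat.card (ClassGroup (QOrder d))

/-- `O_Δ` is a maximal order: every element of `ℚ(√Δ)` (the subfield of `ℂ` generated by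
`(Δ+√Δ)/2`) that is integral over `ℤ` already lies in `O_Δ`. -/
def IsMaximalOrder (d : ℤ) : Prop :=
  ∀ x ∈ Subfield.closure {omegaD d}, IsIntegral ℤ x → x ∈ QOrder d

/-!
Put `Δ = n ^ 2 - 4`. The order `O_Δ` is `ℤ[ε]` with `ε² = nε - 1`, and if it is maximal, class
number one means that `ℤ[ε]` is a principal ideal domain. For `n` in the list, no integer `a ≥ 2`
with `4 a² ≤ |Δ|` divides a value `b² + nb + 1`, so the reduction theory of quadratic forms makes
every ideal principal.

Suppose conversely that `ℤ[ε]` is principal and `n` is large. Norms below `n - 2` in absolute value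
are perfect squares, so no prime `p < n - 2` is a norm up to sign and all of them are inert: `n`
avoids the residues modulo `p` for which `x² + nx + 1` has a root. As in the work of Biró on the
conjecture of Yokoi, evaluating a zeta value in two ways yields congruences for `n`. The ideals of
norm `k` are counted by `(J(· | Δ) ∗ 1)(k)` and, since all of them are principal, also by points of
the cone `{x + yε | 0 < x, 0 ≤ y}`, on which the norm form is explicit. Weight `k` by an odd
function `w` modulo `q` and by `exp (-h² k)`, and let `h → 0`: both counts tend to finite sums over
residues. When `w` lifts a character modulo `q` with values in `ZMod r` and vanishing first moment,
the divisor side vanishes modulo `r`, and the cone side becomes a linear equation for `n` modulo `r`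
whose coefficients depend only on `n` modulo `q`.

For `n ≥ 214` inertness leaves six classes modulo `105`. The pair `(q, r) = (105, 13)` determines
`n` modulo `13` in each of them, and `13` is inert for two only; then `(q, r) = (91, 37)` determines
`n` modulo `37` and contradicts the inertness of `37`.
-/

open Real Filter Topology QuadraticAlgebra
open scoped NumberTheorySymbols

/-- The ring `ℤ[ε]` with `ε² = nε - 1`, an abstract model of the order of discriminant `n² - 4`
in which `ε = ⟨0, 1⟩` is a unit of norm one. -/
abbrev UnitOrder (n : ℤ) := QuadraticAlgebra ℤ (-1) n

theorem sqrtD_mul_self (d : ℤ) : sqrtD d * sqrtD d = d := by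
  unfold sqrtD
  split_ifs with hd
  · rw [← Complex.ofReal_mul, mul_self_sqrt (by exact_mod_cast hd), Complex.ofReal_intCast]
  · have hd' : (0 : ℝ) ≤ -d := by exact_mod_cast (neg_pos.2 (not_le.1 hd)).le
    rw [mul_mul_mul_comm, Complex.I_mul_I, ← Complex.ofReal_mul, mul_self_sqrt hd']
    simp

theorem isIntegrallyClosed_of_mem_subfield {K : Type*} [Field K] (R : Subring K)
    [Algebra.IsIntegral ℤ R]
    (hR : ∀ x ∈ Subfield.closure (R : Set K), IsIntegral ℤ x → x ∈ R) : IsIntegrallyClosed R := by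
  rw [isIntegrallyClosed_iff (FractionRing R)]
  intro x hx
  let g : FractionRing R →+* K := IsFractionRing.lift (g := R.subtype) Subtype.val_injective
  have hg (a : R) : g (algebraMap R _ a) = a := IsFractionRing.lift_algebraMap _ a
  have hgx : IsIntegral R (g x) :=
    hx.map_of_comp_eq (RingHom.id R) g (RingHom.ext fun a => (hg a).symm)
  have hmem : g x ∈ Subfield.closure (R : Set K) := by
    obtain ⟨a, b, -, rfl⟩ := IsFractionRing.div_surjective (A := R) x
    rw [map_div₀, hg, hg]
    exact div_mem (Subfield.subset_closure a.2) (Subfield.subset_closure b.2)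
  exact ⟨⟨g x, hR _ hmem (isIntegral_trans (R := ℤ) (A := R) _ hgx)⟩, g.injective (hg _)⟩

namespace UnitOrder

variable {n : ℤ}

theorem norm_mk (x y : ℤ) : norm (⟨x, y⟩ : UnitOrder n) = x ^ 2 + n * x * y + y ^ 2 := by
  rw [norm_def]; ring

theorem four_mul_norm (z : UnitOrder n) :
    4 * norm z = (2 * z.re + n * z.im) ^ 2 - (n ^ 2 - 4) * z.im ^ 2 := by
  rw [norm_def]; ring

theorem eq_zero_of_norm_eq_zero (hns : ¬IsSquare (n ^ 2 - 4)) {z : UnitOrder n}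
    (hz : norm z = 0) : z = 0 := by
  have hsq : (2 * z.re + n * z.im) ^ 2 = (n ^ 2 - 4) * z.im ^ 2 := by
    linarith [four_mul_norm z]
  have him : z.im = 0 := by
    by_contra h0
    obtain ⟨k, hk⟩ := (Int.pow_dvd_pow_iff two_ne_zero).1 (Dvd.intro_left _ hsq.symm)
    refine hns ⟨k, mul_right_cancel₀ (pow_ne_zero 2 h0) ?_⟩
    rw [← hsq, hk]; ring
  have hre : z.re = 0 := by simpa [him] using hsq
  ext <;> assumption

variable (n) in
/-- The image in `ℂ` of the unit `ε` of `UnitOrder n`. -/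
def complexUnit : ℂ := ((n : ℂ) + sqrtD (n ^ 2 - 4)) / 2

theorem complexUnit_mul_self :
    complexUnit n * complexUnit n = (-1 : ℤ) • (1 : ℂ) + n • complexUnit n := by
  have h := sqrtD_mul_self (n ^ 2 - 4)
  push_cast at h
  simp only [complexUnit, zsmul_eq_mul, Int.cast_neg, Int.cast_one]
  linear_combination h / 4

variable (n) in
theorem exists_complexUnit_eq_omegaD_sub :
    ∃ k : ℤ, complexUnit n = omegaD (n ^ 2 - 4) - k := by
  obtain ⟨k, hk⟩ : Even (n ^ 2 - 4 - n) := by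
    obtain ⟨j, hj⟩ := Int.even_mul_pred_self n
    exact ⟨j - 2, by linear_combination hj⟩
  refine ⟨k, ?_⟩
  have hkC : (n : ℂ) ^ 2 - 4 - n = k + k := mod_cast hk
  simp only [complexUnit, omegaD, Int.cast_sub, Int.cast_pow, Int.cast_ofNat]
  linear_combination -hkC / 2

variable (n) in
/-- The embedding of `UnitOrder n` in `ℂ` whose image is the quadratic order. -/
def toComplex : UnitOrder n →ₐ[ℤ] ℂ := QuadraticAlgebra.lift ⟨complexUnit n, complexUnit_mul_self⟩

theorem toComplex_apply (z : UnitOrder n) : toComplex n z = z.re + z.im * complexUnit n := by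
  simp [toComplex, QuadraticAlgebra.lift]

theorem toComplex_injective (hns : ¬IsSquare (n ^ 2 - 4)) :
    Function.Injective (toComplex n) := by
  refine (injective_iff_map_eq_zero _).2 fun z hz => eq_zero_of_norm_eq_zero hns ?_
  have h := congrArg (toComplex n) (algebraMap_norm_eq_mul_star z)
  rwa [AlgHom.commutes, map_mul, hz, zero_mul, eq_intCast, Int.cast_eq_zero] at h

theorem isDomain (hns : ¬IsSquare (n ^ 2 - 4)) : IsDomain (UnitOrder n) :=
  (toComplex_injective hns).isDomain (toComplex n).toRingHom

variable (n) in
theorem range_toComplex : (toComplex n).toRingHom.range = QOrder (n ^ 2 - 4) := by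
  obtain ⟨k, hk⟩ := exists_complexUnit_eq_omegaD_sub n
  refine le_antisymm ?_ ((Subring.closure_le).2 ?_)
  · rintro _ ⟨z, rfl⟩
    have homega : omegaD (n ^ 2 - 4) ∈ QOrder (n ^ 2 - 4) := Subring.subset_closure rfl
    change toComplex n z ∈ _
    rw [toComplex_apply, hk]
    exact add_mem (intCast_mem _ _)
      (mul_mem (intCast_mem _ _) (sub_mem homega (intCast_mem _ _)))
  · rintro _ rfl
    refine ⟨⟨k, 1⟩, ?_⟩
    change toComplex n _ = _
    rw [toComplex_apply, hk]
    push_cast; ring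

/-- The identification of `UnitOrder n` with the quadratic order of discriminant `n² - 4`. -/
def equivQOrder (hns : ¬IsSquare (n ^ 2 - 4)) : UnitOrder n ≃+* QOrder (n ^ 2 - 4) :=
  (RingEquiv.ofBijective (toComplex n).toRingHom.rangeRestrict
    ⟨fun _ _ h => toComplex_injective hns (congrArg Subtype.val h),
      RingHom.rangeRestrict_surjective _⟩).trans
    (RingEquiv.subringCongr (range_toComplex n))

theorem classNumber_eq_one [IsPrincipalIdealRing (UnitOrder n)] (hns : ¬IsSquare (n ^ 2 - 4)) :
    classNumber (n ^ 2 - 4) = 1 := by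
  have : IsPrincipalIdealRing (QOrder (n ^ 2 - 4)) :=
    IsPrincipalIdealRing.of_surjective (equivQOrder hns).toRingHom (equivQOrder hns).surjective
  rw [classNumber, Nat.card_eq_fintype_card, card_classGroup_eq_one]

theorem isDedekindDomain_QOrder (hns : ¬IsSquare (n ^ 2 - 4)) (hmax : IsMaximalOrder (n ^ 2 - 4)) :
    IsDedekindDomain (QOrder (n ^ 2 - 4)) := by
  have : Module.Finite ℤ (QOrder (n ^ 2 - 4)) :=
    Module.Finite.equiv (equivQOrder hns).toAddEquiv.toIntLinearEquiv
  have : IsNoetherianRing (QOrder (n ^ 2 - 4)) := isNoetherian_of_tower ℤ inferInstance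
  have : Algebra.IsIntegral ℤ (QOrder (n ^ 2 - 4)) := .of_finite _ _
  have : IsIntegrallyClosed (QOrder (n ^ 2 - 4)) := by
    refine isIntegrallyClosed_of_mem_subfield _ fun x hx => hmax x ?_
    refine Subfield.closure_le.2 (fun y hy => ?_) hx
    exact (Subring.closure_le (t := (Subfield.closure {omegaD (n ^ 2 - 4)}).toSubring)).2
      Subfield.subset_closure hy
  exact { }

theorem isPrincipalIdealRing_of_classNumber_eq_one (hns : ¬IsSquare (n ^ 2 - 4))
    (hmax : IsMaximalOrder (n ^ 2 - 4)) (h : classNumber (n ^ 2 - 4) = 1) :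
    IsPrincipalIdealRing (UnitOrder n) := by
  have := isDedekindDomain_QOrder hns hmax
  have : Finite (ClassGroup (QOrder (n ^ 2 - 4))) :=
    Nat.finite_of_card_ne_zero (by rw [← classNumber, h]; exact one_ne_zero)
  have := Fintype.ofFinite (ClassGroup (QOrder (n ^ 2 - 4)))
  have : IsPrincipalIdealRing (QOrder (n ^ 2 - 4)) := by
    rwa [← card_classGroup_eq_one_iff, ← Nat.card_eq_fintype_card]
  exact IsPrincipalIdealRing.of_surjective (equivQOrder hns).symm.toRingHom
    (equivQOrder hns).symm.surjective

end UnitOrder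

theorem isPrincipal_span_pair_of_mul_eq_mul {R : Type*} [CommRing R] [IsDomain R] {a c x y : R}
    (h : x * y = a * c) (hy : y ≠ 0) (hc : (Ideal.span {c, y}).IsPrincipal) :
    (Ideal.span {a, x}).IsPrincipal := by
  obtain ⟨g, hg⟩ := hc
  rw [Ideal.submodule_span_eq] at hg
  have hmul : Ideal.span {y} * Ideal.span {a, x} = Ideal.span {a * g} := by
    rw [← Ideal.span_singleton_mul_span_singleton, ← hg, Ideal.span_mul_span', Ideal.span_mul_span',
      Set.singleton_mul, Set.singleton_mul, Set.image_pair, Set.image_pair, mul_comm y x, h,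
      mul_comm y a, Set.pair_comm]
  have hmem : a * g ∈ Ideal.span {y} * Ideal.span {a, x} :=
    hmul ▸ Ideal.mem_span_singleton_self _
  obtain ⟨t, -, ht⟩ := Ideal.mem_span_singleton_mul.1 hmem
  rw [← ht, ← Ideal.span_singleton_mul_span_singleton,
    Ideal.span_singleton_mul_right_inj hy] at hmul
  exact ⟨t, hmul⟩

theorem exists_abs_two_mul_add_le (n b : ℤ) {a : ℤ} (ha : a ≠ 0) :
    ∃ k : ℤ, |2 * (b + k * a) + n| ≤ |a| := by
  refine ⟨-(a.sign * ((2 * b + n + |a|) / (2 * |a|))), ?_⟩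
  have h1 := Int.mul_ediv_add_emod (2 * b + n + |a|) (2 * |a|)
  have h2 := Int.emod_nonneg (2 * b + n + |a|) (show 2 * |a| ≠ 0 by simpa using ha)
  have h3 := Int.emod_lt_of_pos (2 * b + n + |a|) (show 0 < 2 * |a| by simpa using ha)
  have h4 : a.sign * a = |a| := Int.sign_mul_self_eq_abs a
  have h5 : 2 * (b + -(a.sign * ((2 * b + n + |a|) / (2 * |a|))) * a) + n =
      (2 * b + n + |a|) % (2 * |a|) - |a| := by
    linear_combination -h1 - 2 * ((2 * b + n + |a|) / (2 * |a|)) * h4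
  rw [h5, abs_le]
  constructor <;> linarith

namespace UnitOrder

variable {n : ℤ}

theorem norm_ne_zero [IsDomain (UnitOrder n)] {z : UnitOrder n} (hz : z ≠ 0) : norm z ≠ 0 := by
  intro h
  have hmul := algebraMap_norm_eq_mul_star z
  rw [h, map_zero, eq_comm, mul_eq_zero, star_eq_zero, or_self] at hmul
  exact hz hmul

theorem sq_add_mul_add_one_ne_zero [IsDomain (UnitOrder n)] (b : ℤ) : b ^ 2 + n * b + 1 ≠ 0 := by
  have hb : (⟨b, 1⟩ : UnitOrder n) ≠ 0 := fun h => one_ne_zero (congrArg QuadraticAlgebra.im h)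
  simpa [norm_mk] using norm_ne_zero hb

theorem abs_lt_abs_of_mul_eq {a a' b : ℤ} (ha : 1 < |a|) (hb : |2 * b + n| ≤ |a|)
    (hn : |n ^ 2 - 4| < 4 * a ^ 2) (h : a * a' = b ^ 2 + n * b + 1) : |a'| < |a| := by
  have hsq : (2 * b + n) ^ 2 ≤ a ^ 2 := sq_le_sq.2 hb
  have hmul : 4 * (a * a') = (2 * b + n) ^ 2 - (n ^ 2 - 4) := by rw [h]; ring
  have ha2 : 4 ≤ a ^ 2 := by rw [← sq_abs]; nlinarith
  obtain ⟨hn1, hn2⟩ := abs_lt.1 hn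
  have habs : |a| * |a'| < |a| * |a| := by
    rw [← abs_mul, abs_mul_abs_self, abs_lt]
    constructor <;> nlinarith [hmul, hn1, hn2, hsq, sq_nonneg n, sq_nonneg (2 * b + n)]
  exact lt_of_mul_lt_mul_left habs (abs_nonneg a)

/- Reduce `b` modulo `a` and let `a * a' = b² + nb + 1`; then `|a'| < |a|`, and multiplication by
the conjugate of `⟨b, 1⟩` turns the ideal `(a, ⟨b, 1⟩)` into `a * (a', ⟨-b - n, 1⟩)`. -/
theorem isPrincipal_span_intCast_mk_one [IsDomain (UnitOrder n)]
    (H : ∀ a b : ℤ, 2 ≤ a → 4 * a ^ 2 ≤ |n ^ 2 - 4| → ¬a ∣ b ^ 2 + n * b + 1) {a b : ℤ}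
    (h : a ∣ b ^ 2 + n * b + 1) : (Ideal.span {(a : UnitOrder n), ⟨b, 1⟩}).IsPrincipal := by
  induction hN : a.natAbs using Nat.strong_induction_on generalizing a b with
  | _ N ih =>
  subst hN
  have ha : a ≠ 0 := by
    rintro rfl
    exact sq_add_mul_add_one_ne_zero b (zero_dvd_iff.1 h)
  rcases (Int.one_le_abs ha).eq_or_lt with ha1 | ha1
  · have hunit : IsUnit (a : UnitOrder n) :=
      (Int.isUnit_iff_abs_eq.2 ha1.symm).map (Int.castRingHom (UnitOrder n))
    rw [Ideal.eq_top_of_isUnit_mem _ (Ideal.subset_span (Set.mem_insert _ _)) hunit]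
    infer_instance
  obtain ⟨k, hk⟩ := exists_abs_two_mul_add_le n b ha
  obtain ⟨a', ha'⟩ : a ∣ (b + k * a) ^ 2 + n * (b + k * a) + 1 := by
    have hdiff : (b + k * a) ^ 2 + n * (b + k * a) + 1 =
        b ^ 2 + n * b + 1 + a * (2 * b * k + k ^ 2 * a + n * k) := by ring
    exact hdiff ▸ h.add (dvd_mul_right _ _)
  have hshift : (⟨b, 1⟩ : UnitOrder n) + k * a = ⟨b + k * a, 1⟩ := by ext <;> simp
  rw [← Ideal.span_pair_add_mul_left _ _ (k : UnitOrder n), hshift]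
  have hlt : |a'| < |a| := by
    refine abs_lt_abs_of_mul_eq ha1 hk (not_le.1 fun hle => ?_) ha'.symm
    exact H |a| (b + k * a) ha1 (by rwa [sq_abs]) ((abs_dvd _ _).2 ⟨a', ha'⟩)
  have hprin := ih (-a').natAbs (by rwa [Int.natAbs_neg, ← Nat.cast_lt (α := ℤ),
    Int.natCast_natAbs, Int.natCast_natAbs]) (b := -(b + k * a) - n)
    ⟨-a, by linear_combination ha'⟩ rfl
  refine isPrincipal_span_pair_of_mul_eq_mul ?_
    (fun h0 => one_ne_zero (congrArg QuadraticAlgebra.im h0)) hprin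
  ext
  · simp only [re_mul, re_intCast, im_intCast]
    push_cast
    linear_combination -ha'
  · simp only [im_mul, re_intCast, im_intCast]
    ring

theorem exists_eq_span_mul_span_pair {I : Ideal (UnitOrder n)} (hI : I ≠ ⊥) :
    ∃ c a b : ℤ, a ∣ b ^ 2 + n * b + 1 ∧
      I = Ideal.span {(c : UnitOrder n)} * Ideal.span {(a : UnitOrder n), ⟨b, 1⟩} := by
  obtain ⟨c, hc⟩ := IsPrincipalIdealRing.principal ((I.restrictScalars ℤ).map (imₗ (-1) n))
  obtain ⟨m, hm⟩ := IsPrincipalIdealRing.principal (I.comap (Int.castRingHom (UnitOrder n)))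
  have hcim (z) (hz : z ∈ I) : c ∣ z.im := by
    rw [← Ideal.mem_span_singleton, ← Ideal.submodule_span_eq, ← hc]
    exact Submodule.mem_map_of_mem hz
  have hcre (z) (hz : z ∈ I) : c ∣ z.re := by
    have hε := hcim _ (I.mul_mem_left ⟨0, 1⟩ hz)
    simp only [im_mul, zero_mul, one_mul, mul_one, zero_add] at hε
    exact (dvd_add_left ((hcim z hz).mul_left n)).1 hε
  have hmdvd (k : ℤ) : (k : UnitOrder n) ∈ I ↔ m ∣ k := by
    rw [← Ideal.mem_span_singleton, ← Ideal.submodule_span_eq, ← hm]; rfl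
  have hc0 : c ≠ 0 := by
    rintro rfl
    exact hI ((Submodule.eq_bot_iff _).2 fun z hz =>
      QuadraticAlgebra.ext (zero_dvd_iff.1 (hcre z hz)) (zero_dvd_iff.1 (hcim z hz)))
  obtain ⟨z, hz, hzc⟩ : c ∈ (I.restrictScalars ℤ).map (imₗ (-1) n) := by
    rw [hc]; exact Submodule.mem_span_singleton_self c
  obtain ⟨b, hb⟩ := hcre z hz
  obtain ⟨a, rfl⟩ : c ∣ m := hcre m ((hmdvd m).2 dvd_rfl)
  have hz' : z = c * (⟨b, 1⟩ : UnitOrder n) := by ext <;> simp [hb, ← hzc]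
  refine ⟨c, a, b, ?_, ?_⟩
  · rw [← mul_dvd_mul_iff_left hc0, ← hmdvd]
    convert I.mul_mem_left ⟨b + n, -1⟩ hz using 1
    rw [hz']
    ext <;> simp only [re_intCast, im_intCast, re_mul, im_mul, Int.cast_id] <;> ring
  · rw [Ideal.span_mul_span', Set.singleton_mul, Set.image_pair, ← Int.cast_mul, ← hz']
    refine le_antisymm (fun w hw => Ideal.mem_span_pair.2 ?_) ?_
    · obtain ⟨v, hv⟩ := hcim w hw
      have hsub : ((w.re - v * z.re : ℤ) : UnitOrder n) ∈ I := by
        convert I.sub_mem hw (I.mul_mem_left v hz) using 1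
        ext <;> simp [hv, ← hzc, mul_comm]
      obtain ⟨k, hk⟩ := (hmdvd _).1 hsub
      refine ⟨k, v, ?_⟩
      ext
      · simp; linear_combination -hk
      · simp [hv, ← hzc, mul_comm]
    · rw [Ideal.span_le, Set.insert_subset_iff, Set.singleton_subset_iff]
      exact ⟨(hmdvd _).2 dvd_rfl, hz⟩

theorem isPrincipalIdealRing_of_forall_not_dvd [IsDomain (UnitOrder n)]
    (H : ∀ a b : ℤ, 2 ≤ a → 4 * a ^ 2 ≤ |n ^ 2 - 4| → ¬a ∣ b ^ 2 + n * b + 1) :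
    IsPrincipalIdealRing (UnitOrder n) := by
  refine ⟨fun I => ?_⟩
  rcases eq_or_ne I ⊥ with rfl | hI
  · infer_instance
  obtain ⟨c, a, b, hab, rfl⟩ := exists_eq_span_mul_span_pair hI
  obtain ⟨g, hg⟩ := isPrincipal_span_intCast_mk_one H hab
  exact ⟨c * g, by rw [hg, Ideal.submodule_span_eq, Ideal.span_singleton_mul_span_singleton]⟩

theorem not_dvd_of_forall_zmod_ne_zero {m : ℕ} (h : ∀ x : ZMod m, x ^ 2 + n * x + 1 ≠ 0) (b : ℤ) :
    ¬(m : ℤ) ∣ b ^ 2 + n * b + 1 := by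
  rw [← ZMod.intCast_zmod_eq_zero_iff_dvd]
  exact_mod_cast h b

theorem classNumber_eq_one_of_mem (hns : ¬IsSquare (n ^ 2 - 4))
    (hn : n ∈ ({0, 1, 3, 4, 5, 9, 21} : Set ℤ)) : classNumber (n ^ 2 - 4) = 1 := by
  have := isDomain hns
  have : IsPrincipalIdealRing (UnitOrder n) := by
    refine isPrincipalIdealRing_of_forall_not_dvd fun a b ha hle => ?_
    simp only [Set.mem_insert_iff, Set.mem_singleton_iff] at hn
    lift a to ℕ using by lia
    replace ha : 2 ≤ a := mod_cast ha
    have ha10 : a ≤ 10 := by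
      have : |n ^ 2 - 4| ≤ 437 := by
        rcases hn with rfl | rfl | rfl | rfl | rfl | rfl | rfl <;> norm_num
      zify
      nlinarith
    refine not_dvd_of_forall_zmod_ne_zero ?_ b
    rcases hn with rfl | rfl | rfl | rfl | rfl | rfl | rfl <;> interval_cases a <;>
      first
      | decide
      | exact absurd hle (by norm_num)
  exact classNumber_eq_one hns

end UnitOrder

namespace UnitOrder

variable {n : ℤ}

/-- The half-open cone `0 < re`, `0 ≤ im`: a fundamental domain for the action of the units on the
elements of positive norm. -/
def InCone (z : UnitOrder n) : Prop := 0 < z.re ∧ 0 ≤ z.im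

theorem isUnit_mk_zero_one : IsUnit (⟨0, 1⟩ : UnitOrder n) := by
  rw [isUnit_iff_norm_isUnit, norm_mk]; simp

theorem associated_mk_neg_add (x y : ℤ) : Associated (⟨x, y⟩ : UnitOrder n) ⟨-y, x + n * y⟩ := by
  obtain ⟨u, hu⟩ := isUnit_mk_zero_one (n := n)
  refine ⟨u, ?_⟩
  rw [hu]; ext <;> simp

theorem associated_mk_add_neg (x y : ℤ) : Associated (⟨x, y⟩ : UnitOrder n) ⟨n * x + y, -x⟩ := by
  convert (associated_mk_neg_add (n * x + y) (-x)).symm using 2 <;> ring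

theorem natAbs_norm_eq_of_associated {z w : UnitOrder n} (h : Associated z w) :
    (norm z).natAbs = (norm w).natAbs :=
  Int.natAbs_eq_iff_associated.2 (h.map (norm (R := ℤ) (a := -1) (b := n)))

theorem natAbs_mul_add_lt_natAbs (hn : 0 < n) {x y : ℤ} (hxy : x * y < 0)
    (hlt : x.natAbs < y.natAbs) (hq : 0 < x ^ 2 + n * x * y + y ^ 2) :
    (n * x + y).natAbs < y.natAbs := by
  rw [Int.natAbs_lt_iff_sq_lt] at hlt ⊢
  have hx : 0 < x ^ 2 := by
    have := left_ne_zero_of_mul hxy.ne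
    positivity
  have hs : x ^ 2 < -(x * y) :=
    lt_of_pow_lt_pow_left₀ 2 (by linarith) (by nlinarith [mul_lt_mul_of_pos_left hlt hx])
  have hns : n * x ^ 2 < -2 * (x * y) := by
    by_contra! hle
    nlinarith [mul_pos hx hq]
  nlinarith

theorem exists_associated_natAbs_add_natAbs_lt (hn : 2 ≤ n) {z : UnitOrder n}
    (hz : 0 < norm z) (hneg : z.re * z.im < 0) :
    ∃ w, Associated z w ∧ norm w = norm z ∧
      w.re.natAbs + w.im.natAbs < z.re.natAbs + z.im.natAbs := by
  obtain ⟨x, y⟩ := z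
  rw [norm_mk] at hz ⊢
  rcases lt_trichotomy x.natAbs y.natAbs with hlt | heq | hlt
  · have h := natAbs_mul_add_lt_natAbs (by lia) hneg hlt hz
    exact ⟨_, associated_mk_add_neg x y, by rw [norm_mk]; ring, by dsimp only at h ⊢; lia⟩
  · rcases Int.natAbs_eq_natAbs_iff.1 heq with rfl | rfl
    · exact absurd hneg (mul_self_nonneg x).not_gt
    · nlinarith [sq_nonneg y]
  · have h := natAbs_mul_add_lt_natAbs (n := n) (x := y) (y := x) (by lia) (by linarith) hlt
      (by linarith)
    exact ⟨_, associated_mk_neg_add x y, by rw [norm_mk]; ring, by dsimp only at h ⊢; lia⟩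

theorem exists_inCone_associated (hn : 2 ≤ n) {z : UnitOrder n} (hz : 0 < norm z) :
    ∃ w, InCone w ∧ Associated z w := by
  induction hN : z.re.natAbs + z.im.natAbs using Nat.strong_induction_on generalizing z with
  | _ N ih =>
  subst hN
  have hnonneg {w : UnitOrder n} (hw : 0 < norm w) (hre : 0 ≤ w.re) (him : 0 ≤ w.im) :
      ∃ v, InCone v ∧ Associated w v := by
    rcases hre.eq_or_lt with h0 | hpos
    · obtain ⟨x, y⟩ := w
      obtain rfl : 0 = x := h0
      rw [norm_mk] at hw
      refine ⟨_, ?_, associated_mk_add_neg 0 y⟩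
      exact ⟨by dsimp only at him ⊢; nlinarith, by simp⟩
    · exact ⟨w, ⟨hpos, him⟩, .refl w⟩
  rcases lt_or_ge (z.re * z.im) 0 with hneg | hsign
  · obtain ⟨w, hzw, hnorm, hlt⟩ := exists_associated_natAbs_add_natAbs_lt hn hz hneg
    obtain ⟨v, hv, hwv⟩ := ih _ hlt (hnorm ▸ hz) rfl
    exact ⟨v, hv, hzw.trans hwv⟩
  · rcases mul_nonneg_iff.1 hsign with ⟨hre, him⟩ | ⟨hre, him⟩
    · exact hnonneg hz hre him
    · obtain ⟨v, hv, hzv⟩ := hnonneg (w := -z)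
        (by rwa [QuadraticAlgebra.norm_neg]) (neg_nonneg.2 hre) (neg_nonneg.2 him)
      exact ⟨v, hv, (Associated.refl z).neg_right.trans hzv⟩

theorem InCone.norm_pos (hn : 0 ≤ n) {z : UnitOrder n} (hz : InCone z) : 0 < norm z := by
  obtain ⟨x, y⟩ := z
  obtain ⟨hx : 0 < x, hy : 0 ≤ y⟩ := hz
  rw [norm_mk]
  positivity

theorem InCone.eq_of_associated (hn : 0 ≤ n) {z w : UnitOrder n} (hz : InCone z) (hw : InCone w)
    (h : Associated z w) : z = w := by
  have hz0 := hz.norm_pos hn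
  have hnorm : norm z = norm w := by
    have := natAbs_norm_eq_of_associated h
    have := hw.norm_pos hn
    lia
  obtain ⟨u, hu⟩ := h
  have hu1 : norm (u : UnitOrder n) = 1 := by
    rw [← hu, map_mul] at hnorm
    exact (mul_eq_left₀ hz0.ne').1 hnorm.symm
  obtain ⟨⟨a, b⟩, hab⟩ : ∃ v : UnitOrder n, (u : UnitOrder n) = v := ⟨u, rfl⟩
  obtain ⟨x, y⟩ := z
  obtain ⟨x', y'⟩ := w
  obtain ⟨hx : 0 < x, hy : 0 ≤ y⟩ := hz
  obtain ⟨hx' : 0 < x', hy' : 0 ≤ y'⟩ := hw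
  rw [norm_mk] at hz0
  rw [hab, norm_mk] at hu1
  rw [hab, QuadraticAlgebra.mk_mul_mk, QuadraticAlgebra.mk.injEq] at hu
  obtain ⟨hre, him⟩ := hu
  have ha : 0 < a := by
    refine pos_of_mul_pos_right (a := x ^ 2 + n * x * y + y ^ 2) ?_ hz0.le
    have : (x ^ 2 + n * x * y + y ^ 2) * a = x' * x + n * x' * y + y' * y := by
      rw [← hre, ← him]; ring
    rw [this]; positivity
  have hab' : 0 < a + n * b := by
    refine pos_of_mul_pos_right (a := x ^ 2 + n * x * y + y ^ 2) ?_ hz0.le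
    have : (x ^ 2 + n * x * y + y ^ 2) * (a + n * b) = x' * x + n * y' * x + y' * y := by
      rw [← hre, ← him]; ring
    rw [this]; positivity
  obtain rfl : b = 0 := by
    rcases lt_trichotomy b 0 with hb | hb | hb
    · nlinarith [mul_nonneg (mul_nonneg hn hab'.le) (neg_pos.2 hb).le]
    · exact hb
    · nlinarith [mul_nonneg (mul_nonneg hn ha.le) hb.le]
  obtain rfl : a = 1 := by nlinarith
  simp_all

variable (n) in
/-- The element `ε - 1`, of norm `-(n - 2)`; multiplication by it turns negative norms into
positive ones. -/
def unitSubOne : UnitOrder n := ⟨-1, 1⟩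

variable (n) in
theorem norm_unitSubOne : norm (unitSubOne n) = -(n - 2) := by
  rw [unitSubOne, norm_mk]; ring

theorem unitSubOne_dvd_iff {z : UnitOrder n} : unitSubOne n ∣ z ↔ n - 2 ∣ z.re + z.im := by
  constructor
  · rintro ⟨w, rfl⟩
    exact ⟨w.im, by simp [unitSubOne]; ring⟩
  · rintro ⟨k, hk⟩
    refine ⟨⟨-z.re - k, k⟩, ?_⟩
    ext
    · simp [unitSubOne]
    · simp [unitSubOne]; linear_combination hk

theorem norm_unitSubOne_mul_pos (hn : 3 ≤ n) {z : UnitOrder n} (hz : norm z < 0) :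
    0 < norm (unitSubOne n * z) := by
  rw [map_mul, norm_unitSubOne]
  exact mul_pos_of_neg_of_neg (by lia) hz

theorem isSquare_norm_of_lt (hn : 2 ≤ n) {z : UnitOrder n} (hz : 0 < norm z)
    (hlt : norm z < n + 2) : IsSquare (norm z) := by
  obtain ⟨⟨x, y⟩, hw, hzw⟩ := exists_inCone_associated hn hz
  have hnorm := natAbs_norm_eq_of_associated hzw
  have hpos := hw.norm_pos (by lia)
  obtain ⟨hx : 0 < x, hy : 0 ≤ y⟩ := hw
  have heq : norm z = x ^ 2 + n * x * y + y ^ 2 := by rw [← norm_mk]; lia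
  rcases hy.eq_or_lt with rfl | hy
  · exact ⟨x, by rw [heq]; ring⟩
  · have hxy : 1 ≤ x * y := Int.mul_pos hx hy
    nlinarith

theorem sub_two_le_neg_norm (hn : 3 ≤ n) {z : UnitOrder n} (hz : norm z < 0) :
    n - 2 ≤ -norm z := by
  have hpos := norm_unitSubOne_mul_pos hn hz
  obtain ⟨w, hw, hzw⟩ := exists_inCone_associated (by lia) hpos
  obtain ⟨s, hs⟩ := unitSubOne_dvd_iff.1 ((dvd_mul_right _ z).trans hzw.dvd)
  have hnorm : norm w = (n - 2) * -norm z := by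
    have h := natAbs_norm_eq_of_associated hzw
    have hw0 := hw.norm_pos (by lia)
    rw [show norm w = norm (unitSubOne n * z) by lia, map_mul, norm_unitSubOne]
    ring
  obtain ⟨x, y⟩ := w
  obtain ⟨hx : 0 < x, hy : 0 ≤ y⟩ := hw
  dsimp only at hs
  rw [norm_mk] at hnorm
  have hsum : (n - 2) * s ^ 2 + x * y = -norm z := by
    refine mul_left_cancel₀ (show n - 2 ≠ 0 by lia) ?_
    linear_combination hnorm - (x + y + (n - 2) * s) * hs
  have hs0 : 0 < s := pos_of_mul_pos_right (a := n - 2) (by lia) (by lia)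
  nlinarith [mul_nonneg hx.le hy]

theorem norm_unit (hn : 4 ≤ n) (u : (UnitOrder n)ˣ) : norm (u : UnitOrder n) = 1 := by
  rcases Int.isUnit_iff.1 (isUnit_iff_norm_isUnit.1 u.isUnit) with h | h
  · exact h
  · have := sub_two_le_neg_norm (by lia) (h ▸ neg_one_lt_zero)
    lia

theorem not_prime_natCast_of_dvd_norm {m : ℕ} {z : UnitOrder n} (hz : (m : ℤ) ∣ norm z)
    (hndvd : ¬(m : UnitOrder n) ∣ z) : ¬Prime (m : UnitOrder n) := by
  intro hm
  have hdvd : (m : UnitOrder n) ∣ z * star z := by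
    rw [← algebraMap_norm_eq_mul_star]
    simpa using map_dvd (algebraMap ℤ (UnitOrder n)) hz
  rcases hm.dvd_or_dvd hdvd with h | h
  · exact hndvd h
  · exact hndvd (by simpa [starRingEnd_apply] using map_dvd (starRingEnd (UnitOrder n)) h)

theorem exists_natAbs_norm_eq_prime [IsDomain (UnitOrder n)] [IsPrincipalIdealRing (UnitOrder n)]
    {p : ℕ} (hp : p.Prime) {z : UnitOrder n} (hz : (p : ℤ) ∣ norm z)
    (hndvd : ¬(p : UnitOrder n) ∣ z) : ∃ g : UnitOrder n, (norm g).natAbs = p := by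
  have hirr := mt irreducible_iff_prime.1 (not_prime_natCast_of_dvd_norm hz hndvd)
  have hunit {w : UnitOrder n} : IsUnit w ↔ (norm w).natAbs = 1 := by
    rw [isUnit_iff_norm_isUnit, Int.isUnit_iff_natAbs_eq]
  have hnorm : (norm (p : UnitOrder n)).natAbs = p ^ 2 := by
    rw [QuadraticAlgebra.norm_natCast, Int.natAbs_pow, Int.natAbs_natCast]
  simp only [irreducible_iff, hunit, hnorm, not_and, not_forall, not_or] at hirr
  obtain ⟨a, b, hab, ha, hb⟩ := hirr (by simp [hp.one_lt.ne'])
  rw [hab, map_mul, Int.natAbs_mul] at hnorm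
  exact ⟨a, ((hp.mul_eq_prime_sq_iff ha hb).1 hnorm).1⟩

theorem not_prime_dvd_of_lt (hn : 3 ≤ n) [IsDomain (UnitOrder n)]
    [IsPrincipalIdealRing (UnitOrder n)] {p : ℕ} (hp : p.Prime) (hpn : (p : ℤ) < n - 2) (b : ℤ) :
    ¬(p : ℤ) ∣ b ^ 2 + n * b + 1 := by
  intro hdvd
  have hndvd : ¬(p : UnitOrder n) ∣ ⟨b, 1⟩ := by
    rintro ⟨k, hk⟩
    have h1 : (p : ℤ) ∣ 1 := ⟨k.im, by simpa using congrArg QuadraticAlgebra.im hk⟩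
    exact hp.one_lt.ne' (Nat.dvd_one.1 (mod_cast h1))
  obtain ⟨g, hg⟩ := exists_natAbs_norm_eq_prime hp (z := ⟨b, 1⟩) (by simpa [norm_mk]) hndvd
  have hp0 := hp.pos
  rcases Int.natAbs_eq (norm g) with h | h <;> rw [hg] at h
  · have hsq := isSquare_norm_of_lt (by lia) (z := g) (by lia) (by lia)
    exact (Nat.prime_iff_prime_int.1 hp).not_isSquare (h ▸ hsq)
  · have := sub_two_le_neg_norm hn (z := g) (by lia)
    lia

end UnitOrder

section MultiplicativeCount

variable {M : Type*} [CommMonoidWithZero M] [IsCancelMulZero M] (N : M →*₀ ℕ)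

theorem ncard_setOf_dvd_and_map_eq_mul {b : M} (hb : N b ≠ 0) (k : ℕ) :
    {c | b ∣ c ∧ N c = N b * k}.ncard = (N ⁻¹' {k}).ncard := by
  have hb0 : b ≠ 0 := by
    rintro rfl
    exact hb (map_zero N)
  rw [← Set.ncard_image_of_injective (N ⁻¹' {k}) (mul_right_injective₀ hb0)]
  congr 1
  ext c
  constructor
  · rintro ⟨⟨d, rfl⟩, hd⟩
    rw [map_mul] at hd
    exact ⟨d, Nat.eq_of_mul_eq_mul_left (Nat.pos_of_ne_zero hb) hd, rfl⟩
  · rintro ⟨d, rfl, rfl⟩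
    exact ⟨dvd_mul_right b d, map_mul N b d⟩

theorem ncard_setOf_dvd_and_map_eq_of_map_eq_sq {b : M} {p : ℕ} (hp : p ≠ 0) (hb : N b = p ^ 2)
    (k : ℕ) : {c | b ∣ c ∧ N c = p * k}.ncard = if p ∣ k then (N ⁻¹' {k / p}).ncard else 0 := by
  split_ifs with hpk
  · obtain ⟨j, rfl⟩ := hpk
    have hb0 : N b ≠ 0 := hb ▸ pow_ne_zero 2 hp
    rw [Nat.mul_div_cancel_left j (Nat.pos_of_ne_zero hp), ← ncard_setOf_dvd_and_map_eq_mul N hb0,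
      hb, pow_two, mul_assoc]
  · convert Set.ncard_empty M
    refine Set.eq_empty_of_forall_notMem ?_
    rintro _ ⟨⟨d, rfl⟩, hd⟩
    rw [map_mul, hb, pow_two, mul_assoc] at hd
    exact hpk ⟨N d, (Nat.eq_of_mul_eq_mul_left (Nat.pos_of_ne_zero hp) hd).symm⟩

theorem ncard_preimage_mul_of_inert {b : M} {p : ℕ} (hp : p ≠ 0) (hb : N b = p ^ 2)
    (hdvd : ∀ c, p ∣ N c → b ∣ c) (k : ℕ) :
    (N ⁻¹' {p * k}).ncard = if p ∣ k then (N ⁻¹' {k / p}).ncard else 0 := by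
  rw [← ncard_setOf_dvd_and_map_eq_of_map_eq_sq N hp hb]
  congr 1
  ext c
  exact ⟨fun hc => ⟨hdvd c (hc ▸ dvd_mul_right p k), hc⟩, fun hc => hc.2⟩

theorem ncard_preimage_mul_of_ramified {a : M} (ha : N a ≠ 0) (hdvd : ∀ c, N a ∣ N c → a ∣ c)
    (k : ℕ) : (N ⁻¹' {N a * k}).ncard = (N ⁻¹' {k}).ncard := by
  rw [← ncard_setOf_dvd_and_map_eq_mul N ha k]
  congr 1
  ext c
  exact ⟨fun hc => ⟨hdvd c (hc ▸ dvd_mul_right (N a) k), hc⟩, fun hc => hc.2⟩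

theorem ncard_preimage_mul_add_of_split {a b : M} {p : ℕ} (hp : p ≠ 0) (ha : N a = p) (hb : N b = p)
    (hprime : Prime a) (hab : ¬a ∣ b) (hdvd : ∀ c, p ∣ N c → a ∣ c ∨ b ∣ c) {k : ℕ}
    (hfin : (N ⁻¹' {p * k}).Finite) :
    (N ⁻¹' {p * k}).ncard + (if p ∣ k then (N ⁻¹' {k / p}).ncard else 0) =
      2 * (N ⁻¹' {k}).ncard := by
  have hunion : N ⁻¹' {p * k} = {c | a ∣ c ∧ N c = p * k} ∪ {c | b ∣ c ∧ N c = p * k} := by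
    ext c
    constructor
    · exact fun hc => (hdvd c (hc ▸ dvd_mul_right p k)).imp (⟨·, hc⟩) (⟨·, hc⟩)
    · rintro (hc | hc) <;> exact hc.2
  have hinter : {c | a ∣ c ∧ N c = p * k} ∩ {c | b ∣ c ∧ N c = p * k} =
      {c | a * b ∣ c ∧ N c = p * k} := by
    ext c
    constructor
    · rintro ⟨⟨hac, hc⟩, ⟨d, rfl⟩, -⟩
      obtain ⟨e, rfl⟩ := (hprime.dvd_or_dvd hac).resolve_left hab
      exact ⟨⟨e, by ac_rfl⟩, hc⟩
    · rintro ⟨habc, hc⟩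
      exact ⟨⟨dvd_of_mul_right_dvd habc, hc⟩, dvd_of_mul_left_dvd habc, hc⟩
  rw [← ncard_setOf_dvd_and_map_eq_of_map_eq_sq N hp (b := a * b) (by rw [map_mul, ha, hb, sq]),
    ← hinter, hunion, Set.ncard_union_add_ncard_inter _ _ (hfin.subset fun c hc => hc.2)
      (hfin.subset fun c hc => hc.2)]
  have hacard := ncard_setOf_dvd_and_map_eq_mul N (b := a) (ha ▸ hp) k
  have hbcard := ncard_setOf_dvd_and_map_eq_mul N (b := b) (hb ▸ hp) k
  rw [ha] at hacard
  rw [hb] at hbcard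
  rw [hacard, hbcard, two_mul]

end MultiplicativeCount

namespace UnitOrder

variable {n : ℤ}

/-- The absolute value of the norm on classes of associated elements; when every ideal is
principal, this is the absolute norm of ideals. -/
def absNorm (n : ℤ) : Associates (UnitOrder n) →*₀ ℕ where
  toFun := Quotient.lift (fun z => (norm z).natAbs) fun _ _ => natAbs_norm_eq_of_associated
  map_zero' := congrArg Int.natAbs QuadraticAlgebra.norm_zero
  map_one' := congrArg Int.natAbs QuadraticAlgebra.norm_one
  map_mul' := by
    rintro ⟨z⟩ ⟨w⟩
    exact (congrArg Int.natAbs (map_mul QuadraticAlgebra.norm z w)).trans (Int.natAbs_mul _ _)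

theorem absNorm_mk (z : UnitOrder n) : absNorm n (Associates.mk z) = (norm z).natAbs := rfl

/-- The lattice points `(x + 1) + y ε` of the cone `InCone`, parametrized by `(x, y) ∈ ℕ × ℕ`. -/
def conePoint (n : ℤ) (p : ℕ × ℕ) : UnitOrder n := ⟨p.1 + 1, p.2⟩

/-- The cone points of norm `k`. They represent the ideals generated by an element of norm `k`. -/
def coneFiber (n k : ℤ) : Set (ℕ × ℕ) := {p | norm (conePoint n p) = k}

/-- The cone points of norm `(n - 2) k` divisible by `unitSubOne n`. Dividing by `unitSubOne n`,
of norm `-(n - 2)`, they represent the ideals generated by an element of norm `-k`. -/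
def coneFiberNeg (n k : ℤ) : Set (ℕ × ℕ) :=
  {p ∈ coneFiber n ((n - 2) * k) | unitSubOne n ∣ conePoint n p}

theorem norm_conePoint (n : ℤ) (p : ℕ × ℕ) :
    norm (conePoint n p) = ((p.1 : ℤ) + 1) ^ 2 + n * (p.1 + 1) * p.2 + (p.2 : ℤ) ^ 2 :=
  norm_mk _ _

theorem inCone_conePoint (n : ℤ) (p : ℕ × ℕ) : InCone (conePoint n p) :=
  ⟨Int.natCast_succ_pos p.1, Int.natCast_nonneg p.2⟩

theorem InCone.exists_conePoint_eq {z : UnitOrder n} (hz : InCone z) : ∃ p, conePoint n p = z := by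
  obtain ⟨hre, him⟩ := hz
  refine ⟨((z.re - 1).toNat, z.im.toNat), ?_⟩
  ext <;> simp only [conePoint] <;> lia

theorem mk_conePoint_injective (hn : 0 ≤ n) :
    Function.Injective fun p => Associates.mk (conePoint n p) := by
  intro p q hpq
  have hpq' := InCone.eq_of_associated hn (inCone_conePoint n p) (inCone_conePoint n q)
    (Associates.mk_eq_mk_iff_associated.mp hpq)
  have hre : (p.1 : ℤ) + 1 = q.1 + 1 := congrArg re hpq'
  have him : (p.2 : ℤ) = q.2 := congrArg im hpq'
  ext <;> lia

theorem exists_conePoint_associated (hn : 2 ≤ n) {z : UnitOrder n} (hz : 0 < norm z) :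
    ∃ p, Associated (conePoint n p) z := by
  obtain ⟨w, hw, hzw⟩ := exists_inCone_associated hn hz
  obtain ⟨p, rfl⟩ := hw.exists_conePoint_eq
  exact ⟨p, hzw.symm⟩

theorem norm_eq_of_associated (hn : 4 ≤ n) {z w : UnitOrder n} (h : Associated z w) :
    norm z = norm w := by
  obtain ⟨u, rfl⟩ := h
  rw [map_mul, norm_unit hn, mul_one]

theorem finite_coneFiber (hn : 0 ≤ n) (k : ℤ) : (coneFiber n k).Finite := by
  refine ((Set.finite_Iio k.toNat).prod (Set.finite_Iic k.toNat)).subset ?_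
  rintro ⟨x, y⟩ hxy
  have hk : ((x : ℤ) + 1) ^ 2 + n * (x + 1) * y + (y : ℤ) ^ 2 = k :=
    (norm_conePoint n (x, y)).symm.trans hxy
  have hmixed : 0 ≤ n * (x + 1) * y := by positivity [hn]
  have hx : (x : ℤ) < k := by nlinarith
  have hy : (y : ℤ) ≤ k := by nlinarith
  simp only [Set.mem_prod, Set.mem_Iio, Set.mem_Iic]
  lia

theorem finite_coneFiberNeg (hn : 0 ≤ n) (k : ℤ) : (coneFiberNeg n k).Finite :=
  (finite_coneFiber hn _).subset (Set.sep_subset _ _)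

theorem absNorm_preimage_eq_union (hn : 4 ≤ n) {k : ℕ} (hk : 0 < k) :
    absNorm n ⁻¹' {k} = (fun p => Associates.mk (conePoint n p)) '' coneFiber n k ∪
      (fun c => Associates.mk (unitSubOne n) * c) ⁻¹'
        ((fun p => Associates.mk (conePoint n p)) '' coneFiberNeg n k) := by
  refine Set.Subset.antisymm ?_ ?_
  · rintro ⟨z⟩ hz
    rcases Int.natAbs_eq_iff.mp (show (norm z).natAbs = k from hz) with hz | hz
    · obtain ⟨p, hp⟩ := exists_conePoint_associated (by lia) (show 0 < norm z by lia)
      exact Or.inl ⟨p, (norm_eq_of_associated hn hp).trans hz,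
        Associates.mk_eq_mk_iff_associated.mpr hp⟩
    · obtain ⟨p, hp⟩ := exists_conePoint_associated (by lia)
        (norm_unitSubOne_mul_pos (by lia) (show norm z < 0 by lia))
      refine Or.inr ⟨p, ⟨?_, (dvd_mul_right _ z).trans hp.symm.dvd⟩,
        Associates.mk_eq_mk_iff_associated.mpr hp⟩
      change QuadraticAlgebra.norm _ = _
      rw [norm_eq_of_associated hn hp, map_mul, norm_unitSubOne, hz, neg_mul_neg]
  · rintro _ (⟨p, hp, rfl⟩ | h)
    · exact congrArg Int.natAbs hp
    · obtain ⟨p, ⟨hp, -⟩, hpc⟩ := h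
      have hnorm := congrArg (absNorm n) hpc
      rw [map_mul, absNorm_mk, absNorm_mk, hp, norm_unitSubOne, Int.natAbs_neg, Int.natAbs_mul,
        Int.natAbs_natCast] at hnorm
      exact (Nat.eq_of_mul_eq_mul_left (by lia) hnorm).symm

theorem disjoint_image_coneFiber_preimage_coneFiberNeg (hn : 4 ≤ n) {k : ℤ} (hk : 0 < k) :
    Disjoint ((fun p => Associates.mk (conePoint n p)) '' coneFiber n k)
      ((fun c => Associates.mk (unitSubOne n) * c) ⁻¹'
        ((fun p => Associates.mk (conePoint n p)) '' coneFiberNeg n k)) := by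
  rw [Set.disjoint_left]
  rintro _ ⟨p, hp, rfl⟩ ⟨q, ⟨hq, -⟩, hpq⟩
  have hnorm := norm_eq_of_associated hn (Associates.mk_eq_mk_iff_associated.mp hpq)
  rw [map_mul, norm_unitSubOne, hp.out, hq.out] at hnorm
  have := mul_pos (show 0 < n - 2 by lia) hk
  linarith

theorem mk_unitSubOne_mul_injective [IsDomain (UnitOrder n)] (hn : n ≠ 2) :
    Function.Injective fun c => Associates.mk (unitSubOne n) * c := by
  refine mul_right_injective₀ (Associates.mk_ne_zero.mpr fun h => hn ?_)
  have := norm_unitSubOne n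
  rw [h, QuadraticAlgebra.norm_zero] at this
  lia

theorem finite_absNorm_preimage [IsDomain (UnitOrder n)] (hn : 4 ≤ n) {k : ℕ} (hk : 0 < k) :
    (absNorm n ⁻¹' {k}).Finite := by
  rw [absNorm_preimage_eq_union hn hk]
  exact ((finite_coneFiber (by lia) k).image _).union
    (((finite_coneFiberNeg (by lia) k).image _).preimage
      (mk_unitSubOne_mul_injective (by lia)).injOn)

theorem ncard_absNorm_preimage [IsDomain (UnitOrder n)] (hn : 4 ≤ n) {k : ℕ} (hk : 0 < k) :
    (absNorm n ⁻¹' {k}).ncard = (coneFiber n k).ncard + (coneFiberNeg n k).ncard := by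
  have hfin := finite_absNorm_preimage hn hk
  have hinj := mk_unitSubOne_mul_injective (n := n) (by lia)
  have hcone := mk_conePoint_injective (n := n) (by lia)
  rw [absNorm_preimage_eq_union hn hk] at hfin ⊢
  rw [Set.ncard_union_eq (disjoint_image_coneFiber_preimage_coneFiberNeg hn (by lia))
      (hfin.subset Set.subset_union_left) (hfin.subset Set.subset_union_right),
    Set.ncard_image_of_injective _ hcone, Set.ncard_preimage_of_injective_subset_range hinj,
    Set.ncard_image_of_injective _ hcone]
  rintro _ ⟨p, ⟨-, w, hw⟩, rfl⟩
  exact ⟨Associates.mk w, (congrArg Associates.mk hw).symm⟩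

theorem absNorm_preimage_one (n : ℤ) : absNorm n ⁻¹' {1} = {1} := by
  ext ⟨z⟩
  change (norm z).natAbs = 1 ↔ Associates.mk z = 1
  rw [Associates.mk_eq_one, QuadraticAlgebra.isUnit_iff_norm_isUnit, Int.isUnit_iff_natAbs_eq]

theorem prime_of_prime_natAbs_norm [IsDomain (UnitOrder n)] [IsPrincipalIdealRing (UnitOrder n)]
    {g : UnitOrder n} (hg : (norm g).natAbs.Prime) : Prime g := by
  rw [← irreducible_iff_prime, irreducible_iff]
  simp only [QuadraticAlgebra.isUnit_iff_norm_isUnit, Int.isUnit_iff_natAbs_eq]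
  refine ⟨hg.one_lt.ne', fun a b hab => ?_⟩
  rw [hab, map_mul, Int.natAbs_mul] at hg
  exact (Nat.prime_mul_iff.mp hg).symm.imp And.right And.right

theorem star_dvd_iff {a b : UnitOrder n} : star a ∣ b ↔ a ∣ star b := by
  rw [← map_dvd_iff (starRingAut (R := UnitOrder n)), starRingAut_apply, starRingAut_apply,
    star_star]

theorem dvd_or_star_dvd_of_norm_dvd {g z : UnitOrder n} (hg : Prime g) (h : norm g ∣ norm z) :
    g ∣ z ∨ star g ∣ z := by
  rw [star_dvd_iff]
  refine hg.dvd_or_dvd ((dvd_mul_right g (star g)).trans ?_)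
  rw [← algebraMap_norm_eq_mul_star, ← algebraMap_norm_eq_mul_star]
  exact map_dvd _ h

section PrimeRecursion

variable [IsDomain (UnitOrder n)] {p : ℕ}

theorem ncard_absNorm_preimage_mul_of_inert (hp : p.Prime)
    (hdvd : ∀ z : UnitOrder n, (p : ℤ) ∣ norm z → (p : UnitOrder n) ∣ z) (k : ℕ) :
    (absNorm n ⁻¹' {p * k}).ncard = if p ∣ k then (absNorm n ⁻¹' {k / p}).ncard else 0 := by
  refine ncard_preimage_mul_of_inert _ (b := Associates.mk (p : UnitOrder n)) hp.ne_zero ?_ ?_ k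
  · rw [absNorm_mk, QuadraticAlgebra.norm_natCast, Int.natAbs_pow, Int.natAbs_natCast]
  · rintro ⟨z⟩ hz
    exact Associates.mk_dvd_mk.mpr (hdvd z (Int.natCast_dvd.mpr hz))

variable [IsPrincipalIdealRing (UnitOrder n)] {g : UnitOrder n}

theorem ncard_absNorm_preimage_mul_of_ramified (hp : p.Prime) (hg : (norm g).natAbs = p)
    (hstar : g ∣ star g) (k : ℕ) : (absNorm n ⁻¹' {p * k}).ncard = (absNorm n ⁻¹' {k}).ncard := by
  subst hg
  refine ncard_preimage_mul_of_ramified _ (a := Associates.mk g) hp.ne_zero ?_ k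
  rintro ⟨z⟩ hz
  refine Associates.mk_dvd_mk.mpr ?_
  exact (dvd_or_star_dvd_of_norm_dvd (prime_of_prime_natAbs_norm hp)
    (Int.natAbs_dvd_natAbs.mp hz)).elim id hstar.trans

theorem ncard_absNorm_preimage_mul_add_of_split (hn : 4 ≤ n) (hp : p.Prime)
    (hg : (norm g).natAbs = p) (hstar : ¬g ∣ star g) {k : ℕ} (hk : 0 < k) :
    (absNorm n ⁻¹' {p * k}).ncard + (if p ∣ k then (absNorm n ⁻¹' {k / p}).ncard else 0) =
      2 * (absNorm n ⁻¹' {k}).ncard := by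
  subst hg
  have hprime := prime_of_prime_natAbs_norm hp
  refine ncard_preimage_mul_add_of_split _ (a := Associates.mk g) (b := Associates.mk (star g))
    hp.ne_zero rfl (congrArg Int.natAbs (QuadraticAlgebra.norm_star g))
    (Associates.prime_mk.mpr hprime) (mt Associates.mk_dvd_mk.mp hstar) ?_
    (finite_absNorm_preimage hn (Nat.mul_pos hp.pos hk))
  rintro ⟨z⟩ hz
  exact (dvd_or_star_dvd_of_norm_dvd hprime (Int.natAbs_dvd_natAbs.mp hz)).imp
    Associates.mk_dvd_mk.mpr Associates.mk_dvd_mk.mpr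

end PrimeRecursion

end UnitOrder

section DivisorSums

variable {R : Type*} [CommRing R]

/-- The recursion `f (p k) = (1 + χ p) f k - χ p f (k / p)` at primes `p`, with `f (k / p)` read as
`0` when `p ∤ k`: for completely multiplicative `χ` it is satisfied by `∑ b ∣ k, χ b`, and it
determines `f` on positive integers up to the value at `1`. -/
def IsPrimeRecursive (χ f : ℕ → R) : Prop :=
  ∀ ⦃p : ℕ⦄, p.Prime → ∀ ⦃k : ℕ⦄, 0 < k →
    f (p * k) = (1 + χ p) * f k - χ p * if p ∣ k then f (k / p) else 0

theorem IsPrimeRecursive.congr {χ f g : ℕ → R} (hf : IsPrimeRecursive χ f)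
    (hg : IsPrimeRecursive χ g) (hone : f 1 = g 1) {k : ℕ} (hk : 0 < k) : f k = g k := by
  induction k using Nat.strong_induction_on with
  | _ k ih =>
    rcases eq_or_ne k 1 with rfl | hk1
    · exact hone
    obtain ⟨p, hp, j, rfl⟩ := Nat.exists_prime_and_dvd hk1
    have hj : 0 < j := Nat.pos_of_mul_pos_left hk
    have hjk : j < p * j := lt_mul_of_one_lt_left hj hp.one_lt
    rw [hf hp hj, hg hp hj, ih j hjk hj]
    split_ifs with hpj
    · rw [ih (j / p) ((Nat.div_le_self j p).trans_lt hjk)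
        (Nat.div_pos (Nat.le_of_dvd hj hpj) hp.pos)]
    · rfl

theorem divisors_prime_mul {p : ℕ} (hp : p.Prime) (k : ℕ) :
    (p * k).divisors = k.divisors ∪ k.divisors.image (p * ·) := by
  rw [Nat.divisors_mul, hp.divisors]
  ext b
  simp [Finset.mem_mul]

theorem divisors_inter_image_mul {p k : ℕ} (hk : k ≠ 0) (hp : 0 < p) :
    k.divisors ∩ k.divisors.image (p * ·) =
      if p ∣ k then (k / p).divisors.image (p * ·) else ∅ := by
  ext b
  simp only [Finset.mem_inter, Nat.mem_divisors, Finset.mem_image]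
  split_ifs with hpk
  · obtain ⟨j, rfl⟩ := hpk
    have hj : j ≠ 0 := right_ne_zero_of_mul hk
    rw [Nat.mul_div_cancel_left _ hp]
    simp only [Finset.mem_image, Nat.mem_divisors]
    constructor
    · rintro ⟨⟨hb, -⟩, c, -, rfl⟩
      exact ⟨c, ⟨Nat.dvd_of_mul_dvd_mul_left hp hb, hj⟩, rfl⟩
    · rintro ⟨c, ⟨hc, -⟩, rfl⟩
      exact ⟨⟨mul_dvd_mul_left p hc, hk⟩, c, ⟨hc.mul_left p, hk⟩, rfl⟩
  · simp only [Finset.notMem_empty, iff_false]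
    rintro ⟨⟨hb, -⟩, c, -, rfl⟩
    exact hpk ((dvd_mul_right p c).trans hb)

theorem isPrimeRecursive_sum_divisors (χ : ℕ → R) (hχ : ∀ a b, χ (a * b) = χ a * χ b) :
    IsPrimeRecursive χ fun k => ∑ b ∈ k.divisors, χ b := by
  intro p hp k hk
  have hsum_image (s : Finset ℕ) : ∑ b ∈ s.image (p * ·), χ b = χ p * ∑ b ∈ s, χ b := by
    rw [Finset.sum_image (mul_right_injective₀ hp.ne_zero).injOn, Finset.mul_sum]
    exact Finset.sum_congr rfl fun b _ => hχ p b
  have hunion := Finset.sum_union_inter (s₁ := k.divisors) (s₂ := k.divisors.image (p * ·)) (f := χ)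
  rw [← divisors_prime_mul hp, divisors_inter_image_mul hk.ne' hp.pos, hsum_image] at hunion
  split_ifs at hunion ⊢
  · rw [hsum_image] at hunion
    linear_combination hunion
  · rw [Finset.sum_empty] at hunion
    linear_combination hunion

end DivisorSums

namespace UnitOrder

variable {n : ℤ}

theorem natCast_dvd_iff {m : ℕ} {z : UnitOrder n} :
    (m : UnitOrder n) ∣ z ↔ (m : ℤ) ∣ z.re ∧ (m : ℤ) ∣ z.im := by
  rw [← algebraMap_dvd_iff, map_natCast]

theorem natCast_dvd_of_dvd_norm_of_dvd_im {p : ℕ} (hp : p.Prime) {z : UnitOrder n}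
    (hz : (p : ℤ) ∣ norm z) (him : (p : ℤ) ∣ z.im) : (p : UnitOrder n) ∣ z := by
  refine natCast_dvd_iff.mpr ⟨(Nat.prime_iff_prime_int.mp hp).dvd_of_dvd_pow (n := 2) ?_, him⟩
  have hre : z.re ^ 2 = norm z - z.im * (n * z.re + z.im) := by
    rw [norm_mk z.re z.im]
    ring
  rw [hre]
  exact dvd_sub hz (him.mul_right _)

theorem two_dvd_of_two_dvd_norm (hn : Odd n) {z : UnitOrder n} (hz : 2 ∣ norm z) :
    ((2 : ℕ) : UnitOrder n) ∣ z := by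
  rw [← even_iff_two_dvd, norm_mk z.re z.im] at hz
  simp only [Int.even_add, Int.even_mul, Int.even_pow] at hz
  have hn' := Int.not_even_iff_odd.mpr hn
  rw [natCast_dvd_iff, Nat.cast_two, ← even_iff_two_dvd, ← even_iff_two_dvd]
  tauto

theorem natCast_dvd_of_dvd_norm {p : ℕ} (hp : p.Prime)
    (hn : ¬IsSquare ((n ^ 2 - 4 : ℤ) : ZMod p)) {z : UnitOrder n} (hz : (p : ℤ) ∣ norm z) :
    (p : UnitOrder n) ∣ z := by
  have := Fact.mk hp
  refine natCast_dvd_of_dvd_norm_of_dvd_im hp hz (by_contra fun him => hn ?_)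
  have him0 : (z.im : ZMod p) ≠ 0 := mt (ZMod.intCast_zmod_eq_zero_iff_dvd _ _).mp him
  have hnorm := congrArg (Int.cast : ℤ → ZMod p) (four_mul_norm z)
  push_cast at hnorm
  rw [(ZMod.intCast_zmod_eq_zero_iff_dvd _ _).mpr hz] at hnorm
  refine ⟨(2 * z.re + n * z.im) / z.im, ?_⟩
  field_simp
  push_cast
  linear_combination hnorm

theorem not_dvd_im_of_natAbs_norm_eq_prime {p : ℕ} (hp : p.Prime) {g : UnitOrder n}
    (hg : (norm g).natAbs = p) : ¬(p : ℤ) ∣ g.im := by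
  intro him
  have hpg : (p : ℤ) ∣ norm g := by rw [Int.natCast_dvd, hg]
  obtain ⟨w, hw⟩ := natCast_dvd_of_dvd_norm_of_dvd_im hp hpg him
  have hsq : p ^ 2 ∣ p := by
    rw [hw, map_mul, QuadraticAlgebra.norm_natCast, Int.natAbs_mul, Int.natAbs_pow,
      Int.natAbs_natCast] at hg
    exact ⟨_, hg.symm⟩
  have := Nat.le_of_dvd hp.pos hsq
  nlinarith [hp.one_lt]

theorem exists_dvd_two_mul_add_sub {p : ℕ} (hp : Odd p) (n c : ℤ) :
    ∃ b : ℤ, (p : ℤ) ∣ 2 * b + n - c := by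
  obtain ⟨k, rfl⟩ := hp
  exact ⟨(n - c) * k, n - c, by push_cast; ring⟩

theorem exists_natAbs_norm_eq_of_isSquare [IsDomain (UnitOrder n)]
    [IsPrincipalIdealRing (UnitOrder n)] {p : ℕ} (hp : p.Prime) (hodd : Odd p)
    (hn : IsSquare ((n ^ 2 - 4 : ℤ) : ZMod p)) : ∃ g : UnitOrder n, (norm g).natAbs = p := by
  obtain ⟨c, hc⟩ := hn
  obtain ⟨c, rfl⟩ := ZMod.intCast_surjective c
  have hc' : (p : ℤ) ∣ c ^ 2 - (n ^ 2 - 4) := by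
    rw [← ZMod.intCast_zmod_eq_zero_iff_dvd, Int.cast_sub, hc]
    push_cast
    ring
  obtain ⟨b, hb⟩ := exists_dvd_two_mul_add_sub hodd n c
  have hfour : IsCoprime (p : ℤ) 4 :=
    mod_cast Nat.isCoprime_iff_coprime.mpr (hodd.coprime_two_right.pow_right 2)
  refine exists_natAbs_norm_eq_prime hp (z := ⟨b, 1⟩) (hfour.dvd_of_dvd_mul_left ?_) fun h => ?_
  · have : 4 * norm (⟨b, 1⟩ : UnitOrder n) =
        (2 * b + n - c) * (2 * b + n + c) + (c ^ 2 - (n ^ 2 - 4)) := by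
      rw [four_mul_norm]
      ring
    rw [this]
    exact dvd_add (hb.mul_right _) hc'
  · exact (Nat.prime_iff_prime_int.mp hp).not_dvd_one (natCast_dvd_iff.mp h).2

theorem dvd_star_iff_dvd_trace {g : UnitOrder n} :
    g ∣ star g ↔ g ∣ ((2 * g.re + n * g.im : ℤ) : UnitOrder n) := by
  have htrace : ((2 * g.re + n * g.im : ℤ) : UnitOrder n) = star g + g := by
    ext <;> simp only [re_star, im_star, re_add, im_add, re_intCast, im_intCast, Int.cast_id] <;>
      ring
  rw [htrace, dvd_add_self_right]

theorem dvd_star_iff_of_natAbs_norm_eq_prime {p : ℕ} (hp : p.Prime) {g : UnitOrder n}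
    (hg : (norm g).natAbs = p) : g ∣ star g ↔ (p : ℤ) ∣ n ^ 2 - 4 := by
  have hpi := Nat.prime_iff_prime_int.mp hp
  have hpg : (p : ℤ) ∣ norm g := by rw [Int.natCast_dvd, hg]
  have hfour := four_mul_norm g
  rw [dvd_star_iff_dvd_trace]
  constructor
  · rintro ⟨w, hw⟩
    have hnorm := congrArg QuadraticAlgebra.norm hw
    rw [QuadraticAlgebra.norm_intCast, map_mul, Int.cast_id] at hnorm
    have hdvd : (p : ℤ) ∣ (n ^ 2 - 4) * g.im ^ 2 := by
      have : (n ^ 2 - 4) * g.im ^ 2 = norm g * (norm w - 4) := by linear_combination hnorm + hfour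
      rw [this]
      exact hpg.mul_right _
    exact (hpi.dvd_or_dvd hdvd).resolve_right fun h =>
      not_dvd_im_of_natAbs_norm_eq_prime hp hg (hpi.dvd_of_dvd_pow h)
  · intro hpn
    have htrace : (p : ℤ) ∣ 2 * g.re + n * g.im := by
      refine hpi.dvd_of_dvd_pow (n := 2) ?_
      rw [eq_add_of_sub_eq hfour.symm]
      exact dvd_add (hpg.mul_left 4) (hpn.mul_right _)
    have hgp : g ∣ ((norm g : ℤ) : UnitOrder n) :=
      ⟨star g, algebraMap_norm_eq_mul_star g⟩
    refine hgp.trans (map_dvd (Int.castRingHom (UnitOrder n)) ?_)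
    rwa [← Int.natAbs_dvd, hg]

/-- The number of classes of associated elements with norm `± k`, that is, of principal ideals of
norm `k`. -/
def normCount (n : ℤ) (k : ℕ) : ℤ := (absNorm n ⁻¹' {k}).ncard

theorem normCount_one (n : ℤ) : normCount n 1 = 1 := by
  rw [normCount, absNorm_preimage_one, Set.ncard_singleton, Nat.cast_one]

section JacobiSymbol

variable {D : ℕ}

theorem mod_eight_eq_five_of_odd (hD : (D : ℤ) = n ^ 2 - 4) (hn : Odd n) :
    D % 8 = 5 := by
  have := Int.eight_dvd_sq_sub_one_of_odd hn
  lia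

theorem jacobiSym_eq_legendreSym (hD : (D : ℤ) = n ^ 2 - 4) (hn : Odd n) {p : ℕ} [Fact p.Prime]
    (hp : Odd p) : J((p : ℤ) | D) = legendreSym p (n ^ 2 - 4) := by
  have := mod_eight_eq_five_of_odd hD hn
  rw [← hD, jacobiSym.legendreSym.to_jacobiSym,
    jacobiSym.quadratic_reciprocity_one_mod_four (by lia) hp]

theorem isPrimeRecursive_normCount [IsDomain (UnitOrder n)] [IsPrincipalIdealRing (UnitOrder n)]
    (hD : (D : ℤ) = n ^ 2 - 4) (hn : 4 ≤ n) (hodd : Odd n) :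
    IsPrimeRecursive (fun b : ℕ => J((b : ℤ) | D)) (normCount n) := by
  intro p hp k hk
  beta_reduce
  have hcast : ((if p ∣ k then (absNorm n ⁻¹' {k / p}).ncard else 0 : ℕ) : ℤ) =
      if p ∣ k then normCount n (k / p) else 0 := Nat.cast_ite _ _ _
  rw [← hcast]
  rcases hp.eq_two_or_odd' with rfl | hp_odd
  · have hD8 := mod_eight_eq_five_of_odd hD hodd
    have hJ : J(((2 : ℕ) : ℤ) | D) = -1 := by
      rw [Nat.cast_two, jacobiSym.at_two (Nat.odd_iff.mpr (by lia)), ZMod.χ₈_nat_eq_if_mod_eight,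
        if_neg (by lia), if_neg (by lia)]
    rw [hJ, normCount, ncard_absNorm_preimage_mul_of_inert hp fun z => two_dvd_of_two_dvd_norm hodd]
    ring
  have := Fact.mk hp
  simp only [jacobiSym_eq_legendreSym hD hodd hp_odd]
  by_cases hpn : ((n ^ 2 - 4 : ℤ) : ZMod p) = 0
  · obtain ⟨g, hg⟩ := exists_natAbs_norm_eq_of_isSquare hp hp_odd (hpn ▸ IsSquare.zero)
    have hJ := (legendreSym.eq_zero_iff p (n ^ 2 - 4)).mpr hpn
    rw [ZMod.intCast_zmod_eq_zero_iff_dvd] at hpn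
    rw [hJ, normCount, ncard_absNorm_preimage_mul_of_ramified
      hp hg ((dvd_star_iff_of_natAbs_norm_eq_prime hp hg).mpr hpn), normCount]
    ring
  rcases legendreSym.eq_one_or_neg_one p hpn with hJ | hJ
  · obtain ⟨g, hg⟩ := exists_natAbs_norm_eq_of_isSquare hp hp_odd
      ((legendreSym.eq_one_iff p hpn).mp hJ)
    rw [ZMod.intCast_zmod_eq_zero_iff_dvd] at hpn
    have hsplit := ncard_absNorm_preimage_mul_add_of_split hn hp hg
      (mt (dvd_star_iff_of_natAbs_norm_eq_prime hp hg).mp hpn) hk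
    rw [hJ, normCount, normCount]
    linear_combination (norm := (push_cast; ring)) congrArg (Nat.cast : ℕ → ℤ) hsplit
  · rw [hJ, normCount, ncard_absNorm_preimage_mul_of_inert hp
      fun z => natCast_dvd_of_dvd_norm hp ((legendreSym.eq_neg_one_iff p).mp hJ)]
    ring

theorem sum_divisors_jacobiSym [IsDomain (UnitOrder n)] [IsPrincipalIdealRing (UnitOrder n)]
    (hD : (D : ℤ) = n ^ 2 - 4) (hn : 4 ≤ n) (hodd : Odd n) {k : ℕ} (hk : 0 < k) :
    ∑ b ∈ k.divisors, J((b : ℤ) | D) =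
      ((coneFiber n k).ncard : ℤ) + (coneFiberNeg n k).ncard := by
  have hsum := isPrimeRecursive_sum_divisors (fun b : ℕ => J((b : ℤ) | D)) fun a b => by
    rw [Nat.cast_mul, jacobiSym.mul_left]
  rw [hsum.congr (isPrimeRecursive_normCount hD hn hodd) _ hk, normCount,
    ncard_absNorm_preimage hn hk, Nat.cast_add]
  simp [normCount_one]

end JacobiSymbol

end UnitOrder

section ExponentialEstimates

theorem abs_exp_neg_sub_taylor_le {w : ℝ} (hw : 0 ≤ w) :
    |exp (-w) - (1 - w + w ^ 2 / 2)| ≤ 4 * w ^ 3 := by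
  rcases le_total w 1 with h | h
  · have hbound := exp_bound (x := -w) (n := 3) (by rwa [abs_neg, abs_of_nonneg hw]) three_pos
    rw [abs_neg, abs_of_nonneg hw] at hbound
    norm_num [Finset.sum_range_succ, Nat.factorial] at hbound
    rw [sub_eq_add_neg (1 : ℝ) w]
    exact hbound.trans (by nlinarith [pow_nonneg hw 3])
  · have hexp : exp (-w) ≤ 1 := exp_le_one_iff.mpr (neg_nonpos.mpr hw)
    have hsq : w ^ 2 ≤ w ^ 3 := pow_le_pow_right₀ h (by norm_num)
    rw [abs_le]
    constructor <;> nlinarith [exp_pos (-w)]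

theorem one_add_pow_three_mul_exp_le {s : ℝ} (hs : 0 ≤ s) :
    (1 + s) ^ 3 * exp (-(s ^ 2 / 2)) ≤ 6 * exp 3 * exp (-s) := by
  have hpow : (1 + s) ^ 3 ≤ 6 * exp (1 + s) := by
    have := pow_div_factorial_le_exp (1 + s) (by linarith) 3
    norm_num [Nat.factorial] at this
    linarith
  calc (1 + s) ^ 3 * exp (-(s ^ 2 / 2))
      ≤ 6 * exp (1 + s) * exp (-(s ^ 2 / 2)) :=
        mul_le_mul_of_nonneg_right hpow (exp_pos _).le
    _ = 6 * exp (1 + s - s ^ 2 / 2) := by rw [mul_assoc, ← exp_add, sub_eq_add_neg]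
    _ ≤ 6 * exp (3 - s) := by
      gcongr 6 * exp ?_
      nlinarith [sq_nonneg (s - 2)]
    _ = 6 * exp 3 * exp (-s) := by rw [mul_assoc, ← exp_add, sub_eq_add_neg]

theorem hasSum_exp_neg_mul_natCast {h : ℝ} (h0 : 0 < h) :
    HasSum (fun X : ℕ => exp (-(h * X))) (1 - exp (-h))⁻¹ := by
  have hlt : exp (-h) < 1 := exp_lt_one_iff.mpr (neg_neg_of_pos h0)
  convert hasSum_geometric_of_lt_one (exp_pos (-h)).le hlt using 2
  rw [← exp_nat_mul]
  ring_nf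

theorem hasSum_exp_neg_mul_mul_exp_neg_mul {h : ℝ} (h0 : 0 < h) :
    HasSum (fun p : ℕ × ℕ => exp (-(h * p.1)) * exp (-(h * p.2)))
      ((1 - exp (-h))⁻¹ * (1 - exp (-h))⁻¹) := by
  have hgeom := hasSum_exp_neg_mul_natCast h0
  exact hgeom.mul hgeom (hgeom.summable.mul_of_nonneg hgeom.summable
    (fun _ => (exp_pos _).le) fun _ => (exp_pos _).le)

theorem inv_one_sub_exp_neg_nonneg {h : ℝ} (h0 : 0 < h) : 0 ≤ (1 - exp (-h))⁻¹ :=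
  inv_nonneg.mpr (sub_nonneg.mpr (exp_le_one_iff.mpr (neg_nonpos.mpr h0.le)))

theorem inv_one_sub_exp_neg_le {h : ℝ} (h0 : 0 < h) (h1 : h ≤ 1) :
    (1 - exp (-h))⁻¹ ≤ 2 / h := by
  have hexp : exp (-h) ≤ 1 / (1 + h) := by
    rw [exp_neg, ← one_div]
    exact one_div_le_one_div_of_le (by linarith) (by linarith [add_one_le_exp h])
  have hlin : 1 / (1 + h) ≤ 1 - h / 2 := by
    rw [div_le_iff₀ (by linarith)]
    nlinarith
  rw [← inv_div]
  exact inv_anti₀ (by linarith) (by linarith)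

theorem tendsto_tsum_zero_of_abs_le {ι : Type*} {f g : ℝ → ι → ℝ} {S : ℝ → ℝ} {K : ℝ}
    (hg : ∀ h ∈ Set.Ioc (0 : ℝ) 1, HasSum (g h) (S h))
    (hS : ∀ h ∈ Set.Ioc (0 : ℝ) 1, S h ≤ K * h)
    (hfg : ∀ h ∈ Set.Ioc (0 : ℝ) 1, ∀ i, |f h i| ≤ g h i) :
    Tendsto (fun h => ∑' i, f h i) (𝓝[>] 0) (𝓝 0) := by
  have hlim : Tendsto (fun h : ℝ => K * h) (𝓝[>] 0) (𝓝 0) := by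
    have : Tendsto (fun h : ℝ => K * h) (𝓝 0) (𝓝 (K * 0)) := (continuous_const_mul K).tendsto 0
    rw [mul_zero] at this
    exact this.mono_left nhdsWithin_le_nhds
  refine squeeze_zero_norm' ?_ hlim
  filter_upwards [Ioc_mem_nhdsGT one_pos] with h hh
  exact (tsum_of_norm_bounded (hg h hh) (hfg h hh)).trans (hS h hh)

end ExponentialEstimates

section ConeSum

/-- The form `x² + n x y + y²` with real coefficient `n`; for integral `n` it is the norm form of
`UnitOrder n`. -/
def realForm (n x y : ℝ) : ℝ := x ^ 2 + n * x * y + y ^ 2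

/-- The summand of `coneSum` at the lattice point `(X, Y)`. -/
def coneTerm (n h a b X Y : ℝ) : ℝ := exp (-(h ^ 2 * realForm n (X + a) (Y + b)))

/-- The theta-like sum `∑ exp (-h² Q (X + a, Y + b))` of `Q = realForm n` over the points of the
first quadrant shifted by `(a, b)`. -/
def coneSum (n h a b : ℝ) : ℝ := ∑' p : ℕ × ℕ, coneTerm n h a b p.1 p.2

/-- The linear part in `(a, b)` of `h² Q (X + a, Y + b)`. -/
def coneLinear (n h X Y a b : ℝ) : ℝ := h ^ 2 * (a * (2 * X + n * Y) + b * (n * X + 2 * Y))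

/-- The quadratic Taylor polynomial in `(a, b)` of
`coneTerm n h a b X Y / coneTerm n h 0 0 X Y`. -/
def coneTaylor (n h X Y a b : ℝ) : ℝ :=
  1 - (coneLinear n h X Y a b + h ^ 2 * realForm n a b) + coneLinear n h X Y a b ^ 2 / 2

variable {n h a b X Y : ℝ}

theorem coneTerm_pos : 0 < coneTerm n h a b X Y := exp_pos _

theorem coneTerm_zero_zero_zero_zero : coneTerm n h 0 0 0 0 = 1 := by
  simp [coneTerm, realForm]

theorem coneTerm_add_one_left : coneTerm n h a b (X + 1) Y = coneTerm n h (a + 1) b X Y := by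
  rw [coneTerm, coneTerm, add_right_comm, add_assoc X]

theorem coneTerm_add_one_right : coneTerm n h a b X (Y + 1) = coneTerm n h a (b + 1) X Y := by
  rw [coneTerm, coneTerm, add_right_comm, add_assoc Y]

theorem coneTerm_swap : coneTerm n h a b X Y = coneTerm n h b a Y X := by
  simp only [coneTerm, realForm]
  ring_nf

theorem coneTerm_eq_mul_exp :
    coneTerm n h a b X Y =
      coneTerm n h 0 0 X Y * exp (-(coneLinear n h X Y a b + h ^ 2 * realForm n a b)) := by
  rw [coneTerm, coneTerm, ← exp_add, coneLinear]
  congr 1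
  simp only [realForm]
  ring

theorem realForm_nonneg (hn : 0 ≤ n) (hX : 0 ≤ X) (hY : 0 ≤ Y) : 0 ≤ realForm n X Y := by
  unfold realForm
  positivity

theorem coneTerm_zero_zero_le (hn : 0 ≤ n) (hX : 0 ≤ X) (hY : 0 ≤ Y) :
    coneTerm n h 0 0 X Y ≤ exp (-((h * (X + Y)) ^ 2 / 2)) := by
  refine exp_le_exp.mpr (neg_le_neg ?_)
  rw [add_zero, add_zero, mul_pow, mul_div_assoc]
  have : 0 ≤ n * X * Y := by positivity
  gcongr
  unfold realForm
  nlinarith [sq_nonneg (X - Y)]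

theorem coneLinear_nonneg (hn : 0 ≤ n) (ha : 0 ≤ a) (hb : 0 ≤ b) (hX : 0 ≤ X) (hY : 0 ≤ Y) :
    0 ≤ coneLinear n h X Y a b := by
  unfold coneLinear
  positivity

theorem coneLinear_le (hn : 0 ≤ n) (ha : 0 ≤ a) (hb : 0 ≤ b) (hX : 0 ≤ X) (hY : 0 ≤ Y) :
    coneLinear n h X Y a b ≤ h * (h * (X + Y)) * ((a + b) * (n + 2)) := by
  have hdiff : h * (h * (X + Y)) * ((a + b) * (n + 2)) - coneLinear n h X Y a b =
      h ^ 2 * (a * (n * X + 2 * Y) + b * (2 * X + n * Y)) := by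
    unfold coneLinear
    ring
  have : 0 ≤ h ^ 2 * (a * (n * X + 2 * Y) + b * (2 * X + n * Y)) := by positivity
  linarith

theorem abs_exp_neg_add_sub_le {B C c t : ℝ} (hB : 0 ≤ B) (hC : 0 ≤ C) (hh : 0 ≤ h) (ht : 1 ≤ t)
    (hsum : B + C ≤ c * (h * t)) (hCle : C ≤ c * h ^ 2) :
    |exp (-(B + C)) - (1 - (B + C) + B ^ 2 / 2)| ≤ (4 * c ^ 3 + c ^ 2) * (h ^ 3 * t ^ 3) := by
  have hcubic := abs_exp_neg_sub_taylor_le (add_nonneg hB hC)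
  have hcube : (B + C) ^ 3 ≤ c ^ 3 * (h ^ 3 * t ^ 3) := by
    rw [← mul_pow, ← mul_pow]
    gcongr
  have hcross : C * (B + C) ≤ c ^ 2 * (h ^ 3 * t ^ 3) :=
    calc C * (B + C) ≤ c * h ^ 2 * (c * (h * t)) :=
          mul_le_mul hCle hsum (add_nonneg hB hC) (hC.trans hCle)
      _ = c ^ 2 * (h ^ 3 * t ^ 1) := by ring
      _ ≤ c ^ 2 * (h ^ 3 * t ^ 3) := by
        gcongr ?_ * (?_ * ?_)
        exact pow_le_pow_right₀ ht (by norm_num)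
  have hsplit : exp (-(B + C)) - (1 - (B + C) + B ^ 2 / 2) =
      (exp (-(B + C)) - (1 - (B + C) + (B + C) ^ 2 / 2)) + (C * (B + C) - C ^ 2 / 2) := by ring
  have hCsq : C ^ 2 ≤ C * (B + C) := by nlinarith [mul_nonneg hB hC]
  rw [abs_le] at hcubic ⊢
  constructor <;> nlinarith [sq_nonneg C]

theorem exists_abs_coneTerm_sub_coneTaylor_le (hn : 0 ≤ n) (ha : 0 ≤ a) (hb : 0 ≤ b) :
    ∃ K, 0 ≤ K ∧ ∀ h X Y : ℝ, 0 ≤ h → h ≤ 1 → 0 ≤ X → 0 ≤ Y →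
      |coneTerm n h a b X Y - coneTerm n h 0 0 X Y * coneTaylor n h X Y a b| ≤
        K * h ^ 3 * (exp (-(h * X)) * exp (-(h * Y))) := by
  set c := (a + b) * (n + 2) + realForm n a b
  have hQ := realForm_nonneg hn ha hb
  have hc : 0 ≤ c := by positivity
  refine ⟨(4 * c ^ 3 + c ^ 2) * (6 * exp 3), by positivity [hc], fun h X Y h0 h1 hX hY => ?_⟩
  have hs : 0 ≤ h * (X + Y) := by positivity
  have hquad : h ^ 2 * realForm n a b ≤ c * h ^ 2 := by
    rw [mul_comm c]
    exact mul_le_mul_of_nonneg_left (le_add_of_nonneg_left (by positivity)) (sq_nonneg h)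
  have hexponent : coneLinear n h X Y a b + h ^ 2 * realForm n a b ≤
      c * (h * (1 + h * (X + Y))) := by
    have hlin := coneLinear_le (h := h) hn ha hb hX hY
    have hrest : 0 ≤ h * ((a + b) * (n + 2)) + h * (h * (X + Y)) * realForm n a b +
      (h - h ^ 2) * realForm n a b := by
      have : 0 ≤ h - h ^ 2 := by nlinarith
      positivity
    linarith
  rw [coneTerm_eq_mul_exp, coneTaylor, ← mul_sub, abs_mul, abs_of_pos coneTerm_pos]
  calc _ ≤ exp (-((h * (X + Y)) ^ 2 / 2)) *
        ((4 * c ^ 3 + c ^ 2) * (h ^ 3 * (1 + h * (X + Y)) ^ 3)) :=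
      mul_le_mul (coneTerm_zero_zero_le hn hX hY)
        (abs_exp_neg_add_sub_le (coneLinear_nonneg hn ha hb hX hY) (by positivity) h0
          (le_add_of_nonneg_right hs) hexponent hquad) (abs_nonneg _) (exp_pos _).le
    _ = (4 * c ^ 3 + c ^ 2) * h ^ 3 *
        ((1 + h * (X + Y)) ^ 3 * exp (-((h * (X + Y)) ^ 2 / 2))) := by ring
    _ ≤ (4 * c ^ 3 + c ^ 2) * h ^ 3 * (6 * exp 3 * exp (-(h * (X + Y)))) :=
      mul_le_mul_of_nonneg_left (one_add_pow_three_mul_exp_le hs) (by positivity)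
    _ = _ := by
      rw [← exp_add]
      ring_nf

theorem summable_coneTerm (hn : 0 ≤ n) (ha : 0 ≤ a) (hb : 0 ≤ b) (h0 : 0 < h) :
    Summable (fun p : ℕ × ℕ => coneTerm n h a b p.1 p.2) := by
  refine Summable.of_nonneg_of_le (fun _ => coneTerm_pos.le) (fun ⟨X, Y⟩ => ?_)
    ((hasSum_exp_neg_mul_mul_exp_neg_mul (h := h ^ 2 / 2) (by positivity)).summable.mul_left
      (exp (h ^ 2)))
  rw [← exp_add, ← exp_add, coneTerm]
  have hlin : (X : ℝ) / 2 + Y / 2 - 1 ≤ realForm n (X + a) (Y + b) := by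
    have : 0 ≤ n * (X + a) * (Y + b) := by positivity
    unfold realForm
    nlinarith [sq_nonneg ((X : ℝ) + a - 1), sq_nonneg ((Y : ℝ) + b - 1)]
  refine exp_le_exp.mpr ?_
  linarith [mul_le_mul_of_nonneg_left hlin (sq_nonneg h)]

theorem summable_coneTerm_zero_left (hn : 0 ≤ n) (ha : 0 ≤ a) (hb : 0 ≤ b) (h0 : 0 < h) :
    Summable (fun Y : ℕ => coneTerm n h a b 0 Y) := by
  simpa only [Nat.cast_zero] using (summable_coneTerm hn ha hb h0).prod_factor 0

theorem coneSum_swap : coneSum n h a b = coneSum n h b a := by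
  rw [coneSum, ← (Equiv.prodComm ℕ ℕ).tsum_eq]
  exact tsum_congr fun _ => coneTerm_swap

theorem coneSum_sub_coneSum_add_one (hn : 0 ≤ n) (ha : 0 ≤ a) (hb : 0 ≤ b) (h0 : 0 < h) :
    coneSum n h a b - coneSum n h (a + 1) b = ∑' Y : ℕ, coneTerm n h a b 0 Y := by
  have hsum := summable_coneTerm hn ha hb h0
  have hsucc := summable_coneTerm hn (by linarith : 0 ≤ a + 1) hb h0
  rw [coneSum, coneSum, hsum.tsum_prod, hsucc.tsum_prod, hsum.prod.tsum_eq_zero_add]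
  simp only [Nat.cast_add_one, coneTerm_add_one_left, Nat.cast_zero, add_sub_cancel_right]

theorem hasSum_coneTerm_sub_coneTerm (hn : 0 ≤ n) (h0 : 0 < h) :
    HasSum (fun Y : ℕ => coneTerm n h 0 0 0 Y - coneTerm n h 0 1 0 Y) 1 := by
  have hsum := summable_coneTerm_zero_left hn le_rfl le_rfl h0
  have hshift := hsum.tsum_eq_zero_add
  simp only [Nat.cast_add_one, coneTerm_add_one_right, Nat.cast_zero, zero_add,
    coneTerm_zero_zero_zero_zero] at hshift
  have hdiff := hsum.hasSum.sub (summable_coneTerm_zero_left hn le_rfl zero_le_one h0).hasSum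
  rwa [hshift, add_sub_cancel_right] at hdiff

theorem coneSum_mixed_difference (hn : 0 ≤ n) (h0 : 0 < h) :
    coneSum n h 1 1 - coneSum n h 1 0 - coneSum n h 0 1 + coneSum n h 0 0 = 1 := by
  have hrow₀ := coneSum_sub_coneSum_add_one hn le_rfl le_rfl h0
  have hrow₁ := coneSum_sub_coneSum_add_one hn le_rfl zero_le_one h0
  have htelescope := (hasSum_coneTerm_sub_coneTerm hn h0).tsum_eq
  rw [(summable_coneTerm_zero_left hn le_rfl le_rfl h0).tsum_sub
    (summable_coneTerm_zero_left hn le_rfl zero_le_one h0), ← hrow₀, ← hrow₁,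
    zero_add] at htelescope
  linarith

theorem abs_coneTerm_mul_edge_taylor_le (hn : 0 ≤ n) (h0 : 0 ≤ h) (hY : 0 ≤ Y) :
    |coneTerm n h 0 0 0 Y *
        ((1 - coneTaylor n h 0 Y 1 0) - n / 2 * (1 - coneTaylor n h 0 Y 0 1))| ≤
      (1 + n) ^ 2 * (6 * exp 3) * h ^ 2 * exp (-(h * Y)) := by
  set s := h * Y with hs
  have hs0 : 0 ≤ s := mul_nonneg h0 hY
  have htaylor : (1 - coneTaylor n h 0 Y 1 0) - n / 2 * (1 - coneTaylor n h 0 Y 0 1) =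
      h ^ 2 * ((1 - n / 2) * (1 + n * s ^ 2)) := by
    rw [hs]
    unfold coneTaylor coneLinear realForm
    ring
  have hcoeff : |(1 - n / 2) * (1 + n * s ^ 2)| ≤ (1 + n) ^ 2 * (1 + s) ^ 3 := by
    rw [abs_mul, abs_of_nonneg (by positivity : 0 ≤ 1 + n * s ^ 2), pow_two (1 + n), mul_assoc]
    refine mul_le_mul (abs_le.mpr ⟨by linarith, by linarith⟩) ?_ (by positivity) (by positivity)
    have : 0 ≤ n * (1 + 3 * s + 2 * s ^ 2 + s ^ 3) + (3 * s + 3 * s ^ 2 + s ^ 3) := by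
      positivity [hs0]
    linarith
  have hgauss : coneTerm n h 0 0 0 Y ≤ exp (-(s ^ 2 / 2)) := by
    simpa only [zero_add] using coneTerm_zero_zero_le hn le_rfl hY
  rw [htaylor, abs_mul, abs_of_pos coneTerm_pos, abs_mul, abs_of_nonneg (sq_nonneg h)]
  calc _ ≤ exp (-(s ^ 2 / 2)) * (h ^ 2 * ((1 + n) ^ 2 * (1 + s) ^ 3)) :=
      mul_le_mul hgauss (mul_le_mul_of_nonneg_left hcoeff (sq_nonneg h)) (by positivity)
        (exp_pos _).le
    _ = (1 + n) ^ 2 * h ^ 2 * ((1 + s) ^ 3 * exp (-(s ^ 2 / 2))) := by ring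
    _ ≤ (1 + n) ^ 2 * h ^ 2 * (6 * exp 3 * exp (-s)) :=
      mul_le_mul_of_nonneg_left (one_add_pow_three_mul_exp_le hs0) (by positivity)
    _ = _ := by ring

theorem exists_abs_edge_difference_le (hn : 0 ≤ n) :
    ∃ K, 0 ≤ K ∧ ∀ h ∈ Set.Ioc (0 : ℝ) 1, ∀ Y : ℕ,
      |coneTerm n h 0 0 0 Y - coneTerm n h 1 0 0 Y -
        n / 2 * (coneTerm n h 0 0 0 Y - coneTerm n h 0 1 0 Y)| ≤
          K * h ^ 2 * exp (-(h * Y)) := by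
  obtain ⟨K₁, hK₁, hbound₁⟩ := exists_abs_coneTerm_sub_coneTaylor_le hn zero_le_one le_rfl
  obtain ⟨K₂, hK₂, hbound₂⟩ := exists_abs_coneTerm_sub_coneTaylor_le hn le_rfl zero_le_one
  refine ⟨(1 + n) ^ 2 * (6 * exp 3) + K₁ + n / 2 * K₂, by positivity, fun h ⟨h0, h1⟩ Y => ?_⟩
  have hY : (0 : ℝ) ≤ Y := Y.cast_nonneg
  have hn2 : 0 ≤ n / 2 := by positivity
  have hcube : h ^ 3 * exp (-(h * Y)) ≤ h ^ 2 * exp (-(h * Y)) :=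
    mul_le_mul_of_nonneg_right (pow_le_pow_of_le_one h0.le h1 (by norm_num)) (exp_pos _).le
  have hedge := abs_coneTerm_mul_edge_taylor_le hn h0.le hY
  have hbound₁ := hbound₁ h 0 Y h0.le h1 le_rfl hY
  have hbound₂ := hbound₂ h 0 Y h0.le h1 le_rfl hY
  rw [mul_zero, neg_zero, exp_zero, one_mul, mul_assoc] at hbound₁ hbound₂
  have hbound₁ := abs_le.mp (hbound₁.trans (mul_le_mul_of_nonneg_left hcube hK₁))
  have hbound₂ := abs_le.mp (hbound₂.trans (mul_le_mul_of_nonneg_left hcube hK₂))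
  have hlower₂ := mul_le_mul_of_nonneg_left hbound₂.1 hn2
  have hupper₂ := mul_le_mul_of_nonneg_left hbound₂.2 hn2
  rw [abs_le] at hedge ⊢
  constructor <;> linarith

theorem tendsto_coneSum_second_difference (hn : 0 ≤ n) :
    Tendsto (fun h => coneSum n h 2 0 - 2 * coneSum n h 1 0 + coneSum n h 0 0) (𝓝[>] 0)
      (𝓝 (n / 2)) := by
  obtain ⟨K, hK, hbound⟩ := exists_abs_edge_difference_le hn
  have herror := tendsto_tsum_zero_of_abs_le (K := 2 * K)
    (fun h hh => (hasSum_exp_neg_mul_natCast hh.1).mul_left (K * h ^ 2))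
    (fun h ⟨h0, h1⟩ =>
      calc K * h ^ 2 * (1 - exp (-h))⁻¹ ≤ K * h ^ 2 * (2 / h) :=
          mul_le_mul_of_nonneg_left (inv_one_sub_exp_neg_le h0 h1) (by positivity)
        _ = 2 * K * h := by field_simp) hbound
  rw [← zero_add (n / 2)]
  refine (herror.add_const (n / 2)).congr' ?_
  filter_upwards [self_mem_nhdsWithin] with h h0
  have hrow₀ := summable_coneTerm_zero_left hn le_rfl le_rfl h0
  have hrow₁ := summable_coneTerm_zero_left hn zero_le_one le_rfl h0
  have hshift₀ := coneSum_sub_coneSum_add_one hn le_rfl le_rfl h0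
  have hshift₁ := coneSum_sub_coneSum_add_one hn zero_le_one le_rfl h0
  rw [zero_add] at hshift₀
  rw [one_add_one_eq_two] at hshift₁
  rw [((hrow₀.hasSum.sub hrow₁.hasSum).sub
    ((hasSum_coneTerm_sub_coneTerm hn h0).mul_left (n / 2))).tsum_eq, ← hshift₀, ← hshift₁]
  ring

theorem tendsto_sum_mul_coneSum_zero {ι : Type*} [Fintype ι] (hn : 0 ≤ n) {c α β : ι → ℝ}
    (hα : ∀ i, 0 ≤ α i) (hβ : ∀ i, 0 ≤ β i)
    (htaylor : ∀ h X Y, ∑ i, c i * coneTaylor n h X Y (α i) (β i) = 0) :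
    Tendsto (fun h => ∑ i, c i * coneSum n h (α i) (β i)) (𝓝[>] 0) (𝓝 0) := by
  choose K hK hbound using fun i => exists_abs_coneTerm_sub_coneTaylor_le hn (hα i) (hβ i)
  have hKsum : 0 ≤ ∑ i, |c i| * K i :=
    Finset.sum_nonneg fun i _ => mul_nonneg (abs_nonneg _) (hK i)
  have herror := tendsto_tsum_zero_of_abs_le (K := (∑ i, |c i| * K i) * 4)
    (f := fun h (p : ℕ × ℕ) => ∑ i, c i * coneTerm n h (α i) (β i) p.1 p.2)
    (fun h hh => (hasSum_exp_neg_mul_mul_exp_neg_mul hh.1).mul_left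
      ((∑ i, |c i| * K i) * h ^ 3))
    (fun h ⟨h0, h1⟩ =>
      calc _ ≤ (∑ i, |c i| * K i) * h ^ 3 * (2 / h * (2 / h)) :=
          mul_le_mul_of_nonneg_left (mul_le_mul (inv_one_sub_exp_neg_le h0 h1)
            (inv_one_sub_exp_neg_le h0 h1) (inv_one_sub_exp_neg_nonneg h0) (by positivity))
            (by positivity)
        _ = (∑ i, |c i| * K i) * 4 * h := by
          field_simp
          norm_num)
    (fun h ⟨h0, h1⟩ p => ?_)
  · refine herror.congr' ?_
    filter_upwards [self_mem_nhdsWithin] with h h0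
    exact (hasSum_sum fun i _ =>
      (summable_coneTerm hn (hα i) (hβ i) h0).hasSum.mul_left (c i)).tsum_eq
  · have hremainder : ∑ i, c i * coneTerm n h (α i) (β i) p.1 p.2 = ∑ i, c i *
        (coneTerm n h (α i) (β i) p.1 p.2 -
          coneTerm n h 0 0 p.1 p.2 * coneTaylor n h p.1 p.2 (α i) (β i)) := by
      simp only [mul_sub, Finset.sum_sub_distrib, mul_left_comm (c _), ← Finset.mul_sum, htaylor,
        mul_zero, sub_zero]
    rw [hremainder, mul_assoc, Finset.sum_mul]
    refine (Finset.abs_sum_le_sum_abs _ _).trans (Finset.sum_le_sum fun i _ => ?_)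
    rw [abs_mul, mul_assoc, ← mul_assoc (K i)]
    exact mul_le_mul_of_nonneg_left
      (hbound i h p.1 p.2 h0.le h1 p.1.cast_nonneg p.2.cast_nonneg) (abs_nonneg _)

theorem tendsto_coneSum (hn : 0 ≤ n) (ha : 0 ≤ a) (hb : 0 ≤ b) :
    Tendsto (fun h => coneSum n h a b - coneSum n h 0 0 -
        (a + b) * (coneSum n h 1 0 - coneSum n h 0 0)) (𝓝[>] 0)
      (𝓝 (a * b + n / 4 * (a ^ 2 + b ^ 2 - a - b))) := by
  -- Interpolate quadratic polynomials at `(0,0)`, `(1,0)`, `(0,1)`, `(1,1)`, `(2,0)`, `(0,2)`.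
  have hinterp := tendsto_sum_mul_coneSum_zero hn
    (c := ![1, -((1 - a - b) * (2 - a - b) / 2), -(a * (2 - a - b)), -(b * (2 - a - b)),
      -(a * b), -(a * (a - 1) / 2), -(b * (b - 1) / 2)])
    (α := ![a, 0, 1, 0, 1, 2, 0]) (β := ![b, 0, 0, 1, 1, 0, 2])
    (by simp [Fin.forall_fin_succ, ha]) (by simp [Fin.forall_fin_succ, hb])
    (fun h X Y => by
      simp only [Fin.sum_univ_succ, Finset.univ_eq_empty, Finset.sum_empty, Matrix.cons_val_zero,
        Matrix.cons_val_succ]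
      unfold coneTaylor coneLinear realForm
      ring)
  have hlim := (hinterp.add ((tendsto_coneSum_second_difference hn).const_mul
    ((a ^ 2 + b ^ 2 - a - b) / 2))).add_const (a * b)
  convert hlim.congr' ?_ using 2
  · ring
  · filter_upwards [self_mem_nhdsWithin] with h h0
    have hmixed := coneSum_mixed_difference hn h0
    rw [coneSum_swap (a := 0) (b := 1)] at hmixed
    simp only [Fin.sum_univ_succ, Finset.univ_eq_empty, Finset.sum_empty, Matrix.cons_val_zero,
      Matrix.cons_val_succ, coneSum_swap (a := 0) (b := 1), coneSum_swap (a := 0) (b := 2)]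
    linear_combination (-(a * b)) * hmixed

end ConeSum

section PeriodicSum

theorem tsum_eq_sum_range_tsum {P : ℕ} (hP : 0 < P) {g : ℕ → ℝ} (hg : Summable g) :
    ∑' x, g x = ∑ u ∈ Finset.range P, ∑' X : ℕ, g (X * P + u) := by
  have : NeZero P := ⟨hP.ne'⟩
  let e : Fin P × ℕ ≃ ℕ := (Equiv.prodComm _ _).trans (Nat.divModEquiv P).symm
  have hs : Summable fun x => g (e x) := e.summable_iff.mpr hg
  rw [← e.tsum_eq, hs.tsum_prod, tsum_fintype, Finset.sum_range]
  rfl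

theorem tsum_prod_eq_sum_range_sum_range_tsum {P : ℕ} (hP : 0 < P) {g : ℕ × ℕ → ℝ}
    (hg : Summable g) :
    ∑' p, g p = ∑ u ∈ Finset.range P, ∑ v ∈ Finset.range P,
      ∑' p : ℕ × ℕ, g (p.1 * P + u, p.2 * P + v) := by
  have : NeZero P := ⟨hP.ne'⟩
  let e : (Fin P × Fin P) × (ℕ × ℕ) ≃ ℕ × ℕ :=
    (Equiv.prodComm _ _).trans ((Equiv.prodProdProdComm ℕ ℕ (Fin P) (Fin P)).trans
      (Equiv.prodCongr (Nat.divModEquiv P).symm (Nat.divModEquiv P).symm))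
  simp only [Finset.sum_range]
  have hs : Summable fun x => g (e x) := e.summable_iff.mpr hg
  rw [← e.tsum_eq, hs.tsum_prod, tsum_fintype, Fintype.sum_prod_type]
  rfl

theorem periodic_map_mul_add {F : ℕ → ℝ} {P : ℕ} (hF : Function.Periodic F P)
    (X u : ℕ) : F (X * P + u) = F u := by
  rw [← hF.map_mod_nat, Nat.mul_add_mod_self_right, hF.map_mod_nat]

theorem exists_abs_le_of_periodic {F : ℕ → ℕ → ℝ} {P Q : ℕ} (hP : 0 < P) (hQ : 0 < Q)
    (hF₁ : ∀ y, Function.Periodic (fun x => F x y) P) (hF₂ : ∀ x, Function.Periodic (F x) Q) :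
    ∃ C, ∀ x y, |F x y| ≤ C := by
  refine ⟨∑ u ∈ Finset.range P, ∑ v ∈ Finset.range Q, |F u v|, fun x y => ?_⟩
  rw [← (hF₂ x).map_mod_nat, ← (hF₁ (y % Q)).map_mod_nat]
  exact (Finset.single_le_sum (f := fun v => |F (x % P) v|) (fun _ _ => abs_nonneg _)
    (Finset.mem_range.mpr (Nat.mod_lt y hQ))).trans
    (Finset.single_le_sum (f := fun u => ∑ v ∈ Finset.range Q, |F u v|)
      (fun _ _ => Finset.sum_nonneg fun _ _ => abs_nonneg _)
      (Finset.mem_range.mpr (Nat.mod_lt x hP)))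

end PeriodicSum

section ConeSum

variable {n h : ℝ}

theorem summable_mul_coneTerm (hn : 0 ≤ n) (h0 : 0 < h) {F : ℕ → ℕ → ℝ} {C : ℝ}
    (hC : ∀ x y, |F x y| ≤ C) :
    Summable (fun p : ℕ × ℕ => F p.1 p.2 * coneTerm n h 1 0 p.1 p.2) := by
  refine Summable.of_norm_bounded
    ((summable_coneTerm hn zero_le_one le_rfl h0).mul_left C) fun p => ?_
  rw [norm_mul, Real.norm_eq_abs, Real.norm_eq_abs, abs_of_pos coneTerm_pos]
  exact mul_le_mul_of_nonneg_right (hC _ _) coneTerm_pos.le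

theorem coneTerm_natCast_mul_add {P : ℕ} (hP : 0 < P) (u v X Y : ℕ) :
    coneTerm n h 1 0 ((X * P + u : ℕ) : ℝ) ((Y * P + v : ℕ) : ℝ) =
      coneTerm n (h * P) (((u : ℝ) + 1) / P) ((v : ℝ) / P) X Y := by
  have : (P : ℝ) ≠ 0 := by positivity
  unfold coneTerm realForm
  congr 1
  push_cast
  field_simp
  ring

theorem tsum_mul_coneTerm_eq_sum (hn : 0 ≤ n) (h0 : 0 < h) {P : ℕ} (hP : 0 < P)
    {F : ℕ → ℕ → ℝ} (hF₁ : ∀ y, Function.Periodic (fun x => F x y) P)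
    (hF₂ : ∀ x, Function.Periodic (F x) P) :
    ∑' p : ℕ × ℕ, F p.1 p.2 * coneTerm n h 1 0 p.1 p.2 =
      ∑ u ∈ Finset.range P, ∑ v ∈ Finset.range P,
        F u v * coneSum n (h * P) (((u : ℝ) + 1) / P) ((v : ℝ) / P) := by
  obtain ⟨C, hC⟩ := exists_abs_le_of_periodic hP hP hF₁ hF₂
  rw [tsum_prod_eq_sum_range_sum_range_tsum hP (summable_mul_coneTerm hn h0 hC)]
  simp only [coneTerm_natCast_mul_add hP, periodic_map_mul_add (hF₁ _),
    periodic_map_mul_add (hF₂ _), tsum_mul_left, coneSum]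

theorem tendsto_tsum_mul_coneTerm (hn : 0 ≤ n) {P : ℕ} (hP : 0 < P)
    {F : ℕ → ℕ → ℝ} (hF₁ : ∀ y, Function.Periodic (fun x => F x y) P)
    (hF₂ : ∀ x, Function.Periodic (F x) P)
    (hsum : ∑ u ∈ Finset.range P, ∑ v ∈ Finset.range P, F u v = 0)
    (hlin : ∑ u ∈ Finset.range P, ∑ v ∈ Finset.range P, F u v * ((u : ℝ) + 1 + v) = 0) :
    Tendsto (fun h => ∑' p : ℕ × ℕ, F p.1 p.2 * coneTerm n h 1 0 p.1 p.2) (𝓝[>] 0)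
      (𝓝 ((∑ u ∈ Finset.range P, ∑ v ∈ Finset.range P, F u v *
        (4 * ((u : ℝ) + 1) * v + n * (((u : ℝ) + 1) ^ 2 + (v : ℝ) ^ 2))) / (4 * P ^ 2))) := by
  have hP0 : (0 : ℝ) < P := Nat.cast_pos.mpr hP
  have hscale : Tendsto (fun h : ℝ => h * P) (𝓝[>] 0) (𝓝[>] 0) := by
    refine tendsto_nhdsWithin_iff.mpr ⟨?_, ?_⟩
    · have : Tendsto (fun h : ℝ => h * P) (𝓝 0) (𝓝 (0 * P)) :=
        (continuous_mul_const _).tendsto 0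
      rw [zero_mul] at this
      exact this.mono_left nhdsWithin_le_nhds
    · filter_upwards [self_mem_nhdsWithin] with h h0 using mul_pos h0 hP0
  have hlim := tendsto_finsetSum (Finset.range P) fun u _ =>
    tendsto_finsetSum (Finset.range P) fun v _ =>
      ((tendsto_coneSum hn (by positivity : 0 ≤ ((u : ℝ) + 1) / P)
        (by positivity : 0 ≤ (v : ℝ) / P)).comp hscale).const_mul (F u v)
  have hscaled (Z : ℝ) : ∑ u ∈ Finset.range P, ∑ v ∈ Finset.range P,
      F u v * ((((u : ℝ) + 1) / P + v / P) * Z) = 0 := by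
    have (u v : ℕ) : F u v * ((((u : ℝ) + 1) / P + v / P) * Z) =
        F u v * ((u : ℝ) + 1 + v) * (Z / P) := by field_simp
    simp only [this, ← Finset.sum_mul, hlin, zero_mul]
  convert hlim.congr' ?_ using 2
  · rw [div_eq_iff (by positivity)]
    have (u v : ℕ) : F u v * (((u : ℝ) + 1) / P * (v / P) + n / 4 * ((((u : ℝ) + 1) / P) ^ 2 +
        (v / P) ^ 2 - ((u : ℝ) + 1) / P - v / P)) * (4 * P ^ 2) =
        F u v * (4 * ((u : ℝ) + 1) * v + n * (((u : ℝ) + 1) ^ 2 + (v : ℝ) ^ 2)) -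
          F u v * ((u : ℝ) + 1 + v) * (n * P) := by
      field_simp
      ring
    simp only [Finset.sum_mul, this, Finset.sum_sub_distrib]
    simp only [← Finset.sum_mul, hlin, zero_mul, sub_zero]
  · filter_upwards [self_mem_nhdsWithin] with h h0
    rw [tsum_mul_coneTerm_eq_sum hn h0 hP hF₁ hF₂]
    simp only [Function.comp_apply, mul_sub (F _ _), Finset.sum_sub_distrib, hscaled, sub_zero]
    simp only [← Finset.sum_mul, hsum, zero_mul, sub_zero]

end ConeSum

section GeometricNodes

theorem exists_mem_Icc_sub_eq_deriv_mul {f : ℝ → ℝ} (hf : Differentiable ℝ f) {a b : ℝ}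
    (hab : a ≤ b) : ∃ c ∈ Set.Icc a b, f b - f a = deriv f c * (b - a) := by
  rcases hab.eq_or_lt with rfl | hlt
  · exact ⟨a, Set.left_mem_Icc.mpr le_rfl, by simp⟩
  · obtain ⟨c, hc, hslope⟩ :=
      exists_deriv_eq_slope f hlt hf.continuous.continuousOn hf.differentiableOn
    exact ⟨c, Set.Ioo_subset_Icc_self hc,
      by rw [hslope, div_mul_cancel₀ _ (sub_pos.mpr hlt).ne']⟩

variable {f : ℝ → ℝ} {K : NNReal} {x y ρ : ℝ}

theorem abs_sub_sub_mul_sub_le (hf : Differentiable ℝ f)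
    (hK : LipschitzOnWith K (deriv f) (Set.Icc 0 1)) (hx0 : 0 ≤ x) (hx1 : x ≤ 1) (hy0 : 0 ≤ y)
    (hy1 : y < 1) (hyρ : y ≤ ρ) (hρ1 : ρ ≤ 1) :
    |f (x * ρ) - f (x * y) - (ρ - y) / (1 - y) * (f x - f (x * y))| ≤ K * (1 - y) ^ 2 * x := by
  have hxρ : x * ρ ≤ x := mul_le_of_le_one_right hx0 hρ1
  have hxy : x * y ≤ x * ρ := mul_le_mul_of_nonneg_left hyρ hx0
  have hxy0 : 0 ≤ x * y := mul_nonneg hx0 hy0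
  obtain ⟨c, ⟨hcl, hcr⟩, hc⟩ := exists_mem_Icc_sub_eq_deriv_mul hf hxy
  obtain ⟨d, ⟨hdl, hdr⟩, hd⟩ := exists_mem_Icc_sub_eq_deriv_mul hf (hxy.trans hxρ)
  have hderiv : |deriv f c - deriv f d| ≤ K * (x * (1 - y)) := by
    have hlip := hK.dist_le_mul c ⟨by linarith, by linarith⟩ d ⟨by linarith, by linarith⟩
    rw [Real.dist_eq, Real.dist_eq] at hlip
    refine hlip.trans (mul_le_mul_of_nonneg_left (abs_le.mpr ?_) K.coe_nonneg)
    constructor <;> linarith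
  have hy : 1 - y ≠ 0 := by linarith
  rw [hc, hd, show deriv f c * (x * ρ - x * y) - (ρ - y) / (1 - y) * (deriv f d * (x - x * y)) =
    (deriv f c - deriv f d) * (x * (ρ - y)) by field_simp, abs_mul,
    abs_of_nonneg (mul_nonneg hx0 (sub_nonneg.mpr hyρ))]
  calc _ ≤ K * (x * (1 - y)) * (1 * (1 - y)) := by
        refine mul_le_mul hderiv (mul_le_mul hx1 (by linarith) (by linarith) zero_le_one)
          (mul_nonneg hx0 (by linarith)) ?_
        exact mul_nonneg K.coe_nonneg (mul_nonneg hx0 (by linarith))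
    _ = K * (1 - y) ^ 2 * x := by ring

theorem summable_comp_pow_mul (hf : LipschitzOnWith K f (Set.Icc 0 1)) (hf0 : f 0 = 0)
    (hy0 : 0 ≤ y) (hy1 : y < 1) (hρ0 : 0 ≤ ρ) (hρ1 : ρ ≤ 1) :
    Summable (fun X : ℕ => f (y ^ X * ρ)) := by
  refine Summable.of_norm_bounded ((summable_geometric_of_lt_one hy0 hy1).mul_left (K : ℝ))
    fun X => ?_
  have hpow : y ^ X * ρ ≤ y ^ X := mul_le_of_le_one_right (pow_nonneg hy0 X) hρ1
  have hnonneg : 0 ≤ y ^ X * ρ := mul_nonneg (pow_nonneg hy0 X) hρ0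
  have hlip := hf.dist_le_mul (y ^ X * ρ) ⟨hnonneg, hpow.trans (pow_le_one₀ hy0 hy1.le)⟩ 0
    ⟨le_rfl, zero_le_one⟩
  rw [Real.dist_eq, Real.dist_eq, hf0, sub_zero, sub_zero, abs_of_nonneg hnonneg] at hlip
  exact hlip.trans (mul_le_mul_of_nonneg_left hpow K.coe_nonneg)

theorem abs_tsum_sub_tsum_sub_le {L : NNReal} (hf : Differentiable ℝ f)
    (hL : LipschitzOnWith L f (Set.Icc 0 1)) (hK : LipschitzOnWith K (deriv f) (Set.Icc 0 1))
    (hf0 : f 0 = 0) (hy0 : 0 ≤ y) (hy1 : y < 1) (hyρ : y ≤ ρ) (hρ1 : ρ ≤ 1) :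
    |∑' X : ℕ, f (y ^ X * ρ) - ∑' X : ℕ, f (y ^ X * y) - (ρ - y) / (1 - y) * f 1| ≤
      K * (1 - y) := by
  have hρ := (summable_comp_pow_mul hL hf0 hy0 hy1 (hy0.trans hyρ) hρ1).hasSum
  have hy := (summable_comp_pow_mul hL hf0 hy0 hy1 hy0 hy1.le).hasSum
  have hone := summable_comp_pow_mul hL hf0 hy0 hy1 zero_le_one le_rfl
  simp only [mul_one] at hone
  have htelescope := hone.hasSum.sub hy
  rw [hone.tsum_eq_zero_add] at htelescope
  simp only [pow_zero, pow_succ, add_sub_cancel_right] at htelescope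
  rw [← ((hρ.sub hy).sub (htelescope.mul_left ((ρ - y) / (1 - y)))).tsum_eq]
  refine (tsum_of_norm_bounded
    (f := fun X => f (y ^ X * ρ) - f (y ^ X * y) - (ρ - y) / (1 - y) * (f (y ^ X) - f (y ^ X * y)))
    ((hasSum_geometric_of_lt_one hy0 hy1).mul_left (K * (1 - y) ^ 2))
    fun X => abs_sub_sub_mul_sub_le hf hK (pow_nonneg hy0 X) (pow_le_one₀ hy0 hy1.le) hy0 hy1
      hyρ hρ1).trans_eq ?_
  have : 1 - y ≠ 0 := by linarith
  field_simp

theorem tendsto_pow_sub_pow_div (a : ℕ) {q : ℕ} (hq : 0 < q) :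
    Tendsto (fun z : ℝ => (z ^ a - z ^ q) / (1 - z ^ q)) (𝓝[<] 1) (𝓝 (1 - a / q)) := by
  have hlim : Tendsto (fun z : ℝ =>
      1 - (∑ i ∈ Finset.range a, z ^ i) / (∑ i ∈ Finset.range q, z ^ i)) (𝓝 1)
      (𝓝 (1 - (∑ i ∈ Finset.range a, (1 : ℝ) ^ i) / (∑ i ∈ Finset.range q, (1 : ℝ) ^ i))) := by
    refine Tendsto.const_sub _ (Tendsto.div ?_ ?_ (by simpa using hq.ne'))
    · exact Continuous.tendsto (by fun_prop) 1
    · exact Continuous.tendsto (by fun_prop) 1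
  simp only [one_pow, Finset.sum_const, Finset.card_range, nsmul_eq_mul, mul_one] at hlim
  refine (hlim.mono_left nhdsWithin_le_nhds).congr' ?_
  filter_upwards [Ioo_mem_nhdsLT one_pos] with z ⟨hz0, hz1⟩
  have hz : 1 - z ≠ 0 := by linarith
  have hpos : 0 < ∑ i ∈ Finset.range q, z ^ i :=
    Finset.sum_pos (fun i _ => pow_pos hz0 i) (Finset.nonempty_range_iff.mpr hq.ne')
  rw [show z ^ a - z ^ q = (1 - z ^ q) - (1 - z ^ a) by ring, ← geom_sum_mul_neg z a,
    ← geom_sum_mul_neg z q]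
  field_simp

theorem summable_comp_pow_mul_pow (hf : ContDiff ℝ 1 f) (hf0 : f 0 = 0) {z : ℝ} (hz0 : 0 ≤ z)
    (hz1 : z < 1) {q : ℕ} (hq : 0 < q) (a : ℕ) :
    Summable (fun X : ℕ => f ((z ^ q) ^ X * z ^ a)) := by
  obtain ⟨L, hL⟩ :=
    hf.contDiffOn.exists_lipschitzOnWith one_ne_zero (convex_Icc 0 1) isCompact_Icc
  exact summable_comp_pow_mul hL hf0 (pow_nonneg hz0 q) (pow_lt_one₀ hz0 hz1 hq.ne')
    (pow_nonneg hz0 a) (pow_le_one₀ hz0 hz1.le)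

theorem tendsto_tsum_comp_pow_sub (hf : ContDiff ℝ 2 f) (hf0 : f 0 = 0) {q : ℕ} (hq : 0 < q)
    {a : ℕ} (ha : a ≤ q) :
    Tendsto (fun z : ℝ =>
        ∑' X : ℕ, f ((z ^ q) ^ X * z ^ a) - ∑' X : ℕ, f ((z ^ q) ^ X * z ^ q))
      (𝓝[<] 1) (𝓝 ((1 - a / q) * f 1)) := by
  have hf1 : ContDiff ℝ 1 f := hf.of_le one_le_two
  have hf' : ContDiff ℝ 1 (deriv f) := by
    rw [← one_add_one_eq_two] at hf
    exact (contDiff_succ_iff_deriv.mp hf).2.2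
  obtain ⟨L, hL⟩ :=
    hf1.contDiffOn.exists_lipschitzOnWith one_ne_zero (convex_Icc 0 1) isCompact_Icc
  obtain ⟨K, hK⟩ :=
    hf'.contDiffOn.exists_lipschitzOnWith one_ne_zero (convex_Icc 0 1) isCompact_Icc
  have hzero : Tendsto (fun z : ℝ => K * (1 - z ^ q)) (𝓝[<] 1) (𝓝 0) := by
    have : Tendsto (fun z : ℝ => K * (1 - z ^ q)) (𝓝 1) (𝓝 (K * (1 - 1 ^ q))) :=
      Continuous.tendsto (by fun_prop) 1
    rw [one_pow, sub_self, mul_zero] at this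
    exact this.mono_left nhdsWithin_le_nhds
  have herror : Tendsto (fun z : ℝ =>
      ∑' X : ℕ, f ((z ^ q) ^ X * z ^ a) - ∑' X : ℕ, f ((z ^ q) ^ X * z ^ q) -
        (z ^ a - z ^ q) / (1 - z ^ q) * f 1) (𝓝[<] 1) (𝓝 0) := by
    refine squeeze_zero_norm' ?_ hzero
    filter_upwards [Ioo_mem_nhdsLT one_pos] with z ⟨hz0, hz1⟩
    exact abs_tsum_sub_tsum_sub_le (hf1.differentiable one_ne_zero) hL hK hf0 (pow_nonneg hz0.le q)
      (pow_lt_one₀ hz0.le hz1 hq.ne') (pow_le_pow_of_le_one hz0.le hz1.le ha)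
      (pow_le_one₀ hz0.le hz1.le)
  have hlim := herror.add ((tendsto_pow_sub_pow_div a hq).mul_const (f 1))
  simpa only [sub_add_cancel, zero_add] using hlim

end GeometricNodes

section DivisorSum

/-- For `N`-periodic coefficients `w` with zero sum over a period, the rational function of `s`
equal to `∑ b, w b * s ^ (b + 1)` for `s < 1`; unlike the series, it is smooth through `s = 1`. -/
def residueSeries (N : ℕ) (w : ℕ → ℝ) (s : ℝ) : ℝ :=
  -∑ b ∈ Finset.range N,
    w b * ((∑ i ∈ Finset.range (b + 1), s ^ i) / ∑ i ∈ Finset.range N, s ^ i)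

variable {N q : ℕ} {w : ℕ → ℝ} {C s z : ℝ}

theorem contDiff_residueSeries (hN : Odd N) (w : ℕ → ℝ) : ContDiff ℝ 2 (residueSeries N w) := by
  refine (ContDiff.sum fun b _ => contDiff_const.mul (ContDiff.div ?_ ?_ fun s => ?_)).neg
  · fun_prop
  · fun_prop
  · exact hN.geom_sum_pos.ne'

theorem residueSeries_zero (hN : 0 < N) (hw : ∑ b ∈ Finset.range N, w b = 0) :
    residueSeries N w 0 = 0 := by
  obtain ⟨m, rfl⟩ : ∃ m, N = m + 1 := ⟨N - 1, by lia⟩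
  simp [residueSeries, Finset.sum_range_succ' (fun i => (0 : ℝ) ^ i), hw]

theorem residueSeries_one (N : ℕ) (w : ℕ → ℝ) :
    residueSeries N w 1 = -∑ b ∈ Finset.range N, w b * (((b : ℝ) + 1) / N) := by
  simp [residueSeries]

theorem summable_mul_pow_succ (hC : ∀ b, |w b| ≤ C) (hs0 : 0 ≤ s) (hs1 : s < 1) :
    Summable (fun b => w b * s ^ (b + 1)) := by
  refine Summable.of_norm_bounded
    (((summable_nat_add_iff 1).mpr (summable_geometric_of_lt_one hs0 hs1)).mul_left C) fun b => ?_
  rw [norm_mul, Real.norm_eq_abs, Real.norm_of_nonneg (pow_nonneg hs0 _)]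
  exact mul_le_mul_of_nonneg_right (hC b) (pow_nonneg hs0 _)

theorem tsum_mul_pow_succ_eq_residueSeries (hN : Odd N) (hper : Function.Periodic w N)
    (hC : ∀ b, |w b| ≤ C) (hw : ∑ b ∈ Finset.range N, w b = 0) (hs0 : 0 ≤ s) (hs1 : s < 1) :
    ∑' b, w b * s ^ (b + 1) = residueSeries N w s := by
  have hsN : s ^ N < 1 := pow_lt_one₀ hs0 hs1 hN.pos.ne'
  have hG : ∑ i ∈ Finset.range N, s ^ i ≠ 0 := hN.geom_sum_pos.ne'
  have h1s : 1 - s ≠ 0 := by linarith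
  have hclass (b : ℕ) : ∑' X : ℕ, w (X * N + b) * s ^ (X * N + b + 1) =
      w b * (1 / (1 - s ^ N)) -
        w b * ((∑ i ∈ Finset.range (b + 1), s ^ i) / ∑ i ∈ Finset.range N, s ^ i) := by
    have hterm (X : ℕ) : w (X * N + b) * s ^ (X * N + b + 1) =
        w b * s ^ (b + 1) * (s ^ N) ^ X := by
      rw [periodic_map_mul_add hper]
      ring
    simp only [hterm]
    rw [tsum_mul_left, tsum_geometric_of_lt_one (pow_nonneg hs0 N) hsN,
      show s ^ (b + 1) = 1 - (1 - s ^ (b + 1)) by ring, ← geom_sum_mul_neg s (b + 1),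
      ← geom_sum_mul_neg s N]
    field_simp
  rw [tsum_eq_sum_range_tsum hN.pos (summable_mul_pow_succ hC hs0 hs1),
    Finset.sum_congr rfl fun b _ => hclass b, Finset.sum_sub_distrib, ← Finset.sum_mul, hw,
    zero_mul, zero_sub, residueSeries]

variable {W : ℕ → ℕ → ℝ}

theorem summable_mul_pow_succ_mul_succ (hC : ∀ a b, |W a b| ≤ C) (hz0 : 0 ≤ z) (hz1 : z < 1) :
    Summable (fun p : ℕ × ℕ => W p.1 p.2 * z ^ ((p.1 + 1) * (p.2 + 1))) := by
  have hgeom := summable_geometric_of_lt_one hz0 hz1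
  refine Summable.of_norm_bounded ((hgeom.mul_of_nonneg hgeom (fun n => pow_nonneg hz0 n)
    fun n => pow_nonneg hz0 n).mul_left C) ?_
  rintro ⟨a, b⟩
  rw [norm_mul, Real.norm_eq_abs, Real.norm_of_nonneg (pow_nonneg hz0 _), ← pow_add]
  refine mul_le_mul (hC a b) (pow_le_pow_of_le_one hz0 hz1.le ?_) (pow_nonneg hz0 _)
    ((abs_nonneg _).trans (hC a b))
  lia

theorem sum_residueSeries_eq_zero (hcol : ∀ b, ∑ a ∈ Finset.range q, W a b = 0) (s : ℝ) :
    ∑ a ∈ Finset.range q, residueSeries N (W a) s = 0 := by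
  simp only [residueSeries]
  rw [Finset.sum_neg_distrib, Finset.sum_comm]
  simp only [← Finset.sum_mul, hcol, zero_mul, Finset.sum_const_zero, neg_zero]

theorem tsum_mul_pow_eq_sum_residueSeries (hq : 0 < q) (hN : Odd N)
    (hper₁ : ∀ b, Function.Periodic (fun a => W a b) q) (hper₂ : ∀ a, Function.Periodic (W a) N)
    (hcol : ∀ b, ∑ a ∈ Finset.range q, W a b = 0) (hrow : ∀ a, ∑ b ∈ Finset.range N, W a b = 0)
    (hz0 : 0 < z) (hz1 : z < 1) :
    ∑' p : ℕ × ℕ, W p.1 p.2 * z ^ ((p.1 + 1) * (p.2 + 1)) =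
      ∑ a ∈ Finset.range q, (∑' X : ℕ, residueSeries N (W a) ((z ^ q) ^ X * z ^ (a + 1)) -
        ∑' X : ℕ, residueSeries N (W a) ((z ^ q) ^ X * z ^ q)) := by
  obtain ⟨C, hC⟩ := exists_abs_le_of_periodic hq hN.pos hper₁ hper₂
  have hs := summable_mul_pow_succ_mul_succ hC hz0.le hz1
  have hinner (a : ℕ) :
      ∑' b : ℕ, W a b * z ^ ((a + 1) * (b + 1)) = residueSeries N (W a) (z ^ (a + 1)) := by
    rw [← tsum_mul_pow_succ_eq_residueSeries hN (hper₂ a) (hC a) (hrow a) (pow_nonneg hz0.le _)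
      (pow_lt_one₀ hz0.le hz1 a.succ_ne_zero)]
    simp only [pow_mul]
  have hclass (a : ℕ) : ∑' X : ℕ, residueSeries N (W (X * q + a)) (z ^ (X * q + a + 1)) =
      ∑' X : ℕ, residueSeries N (W a) ((z ^ q) ^ X * z ^ (a + 1)) := by
    refine tsum_congr fun X => ?_
    rw [show W (X * q + a) = W a from funext fun b => periodic_map_mul_add (hper₁ b) X a,
      ← pow_mul, ← pow_add, mul_comm q, add_assoc]
  have hzero :
      ∑ a ∈ Finset.range q, ∑' X : ℕ, residueSeries N (W a) ((z ^ q) ^ X * z ^ q) = 0 := by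
    rw [← Summable.tsum_finsetSum fun a _ => summable_comp_pow_mul_pow
      ((contDiff_residueSeries hN (W a)).of_le one_le_two) (residueSeries_zero hN.pos (hrow a))
      hz0.le hz1 hq q]
    simp only [sum_residueSeries_eq_zero hcol, tsum_zero]
  rw [Finset.sum_sub_distrib, hzero, sub_zero, hs.tsum_prod, tsum_congr hinner,
    tsum_eq_sum_range_tsum hq (by simpa only [← hinner] using hs.prod)]
  exact Finset.sum_congr rfl fun a _ => hclass a

theorem tendsto_tsum_mul_pow (hq : 0 < q) (hN : Odd N)
    (hper₁ : ∀ b, Function.Periodic (fun a => W a b) q) (hper₂ : ∀ a, Function.Periodic (W a) N)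
    (hcol : ∀ b, ∑ a ∈ Finset.range q, W a b = 0)
    (hrow : ∀ a, ∑ b ∈ Finset.range N, W a b = 0) :
    Tendsto (fun z : ℝ => ∑' p : ℕ × ℕ, W p.1 p.2 * z ^ ((p.1 + 1) * (p.2 + 1))) (𝓝[<] 1)
      (𝓝 ((∑ a ∈ Finset.range q, ∑ b ∈ Finset.range N, W a b * (((a : ℝ) + 1) * ((b : ℝ) + 1))) /
        (q * N))) := by
  have hclass (a : ℕ) (ha : a ∈ Finset.range q) :=
    tendsto_tsum_comp_pow_sub (contDiff_residueSeries hN (W a))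
      (residueSeries_zero hN.pos (hrow a)) hq (Nat.succ_le_of_lt (Finset.mem_range.mp ha))
  have hlim := tendsto_finsetSum (Finset.range q) hclass
  refine (hlim.congr' ?_).trans_eq ?_
  · filter_upwards [Ioo_mem_nhdsLT one_pos] with z ⟨hz0, hz1⟩
    exact (tsum_mul_pow_eq_sum_residueSeries hq hN hper₁ hper₂ hcol hrow hz0 hz1).symm
  · congr 1
    simp only [sub_mul, one_mul, Finset.sum_sub_distrib, sum_residueSeries_eq_zero hcol, zero_sub]
    simp only [residueSeries_one, mul_neg, Finset.sum_neg_distrib, neg_neg, Finset.sum_div,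
      Finset.mul_sum]
    refine Finset.sum_congr rfl fun a _ => Finset.sum_congr rfl fun b _ => ?_
    push_cast
    field_simp

end DivisorSum

section Regrouping

variable {α β : Type*}

theorem hasSum_tsum_preimage_mul {g : α → β} {c : α → ℝ} {v : β → ℝ}
    (hs : Summable fun p => c p * v (g p)) :
    HasSum (fun k => (∑' p : g ⁻¹' {k}, c p) * v k) (∑' p, c p * v (g p)) := by
  have hfiber (k : β) :
      ∑' p : g ⁻¹' {k}, c p * v (g p) = (∑' p : g ⁻¹' {k}, c p) * v k := by
    rw [← tsum_mul_right]
    exact tsum_congr fun p => by rw [Set.mem_singleton_iff.mp p.2]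
  simpa only [hfiber] using HasSum.tsum_fiberwise hs.hasSum g

theorem hasSum_ncard_mul {g : α → β} {T : Set α} {v : β → ℝ}
    (hs : Summable fun p => T.indicator 1 p * v (g p)) :
    HasSum (fun k => ((g ⁻¹' {k} ∩ T).ncard : ℝ) * v k) (∑' p, T.indicator 1 p * v (g p)) := by
  convert hasSum_tsum_preimage_mul hs using 3 with k
  rw [tsum_subtype (g ⁻¹' {k}), Set.indicator_indicator, ← tsum_subtype, ← Nat.card_coe_set_eq]
  simp only [Pi.one_apply, tsum_const, nsmul_eq_mul, mul_one]

theorem tsum_preimage_eq_sum_divisors (c : ℕ → ℝ) {k : ℕ} (hk : k ≠ 0) :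
    ∑' p : (fun p : ℕ × ℕ => (((p.1 + 1) * (p.2 + 1) : ℕ) : ℤ)) ⁻¹' {(k : ℤ)},
      c ((p : ℕ × ℕ).2 + 1) = ∑ b ∈ k.divisors, c b := by
  have himage : (fun p : ℕ × ℕ => (((p.1 + 1) * (p.2 + 1) : ℕ) : ℤ)) ⁻¹' {(k : ℤ)} =
      (k.divisorsAntidiagonal.image fun p => (p.1 - 1, p.2 - 1) : Finset (ℕ × ℕ)) := by
    ext ⟨a, b⟩
    simp only [Set.mem_preimage, Set.mem_singleton_iff, Nat.cast_inj, Finset.coe_image,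
      Set.mem_image, SetLike.mem_coe, Nat.mem_divisorsAntidiagonal, Prod.mk.injEq, Prod.exists]
    constructor
    · intro hab
      exact ⟨a + 1, b + 1, ⟨hab, hk⟩, rfl, rfl⟩
    · rintro ⟨x, y, ⟨hxy, -⟩, rfl, rfl⟩
      obtain ⟨hx, hy⟩ := mul_ne_zero_iff.mp (hxy.trans_ne hk)
      rw [Nat.sub_one_add_one hx, Nat.sub_one_add_one hy, hxy]
  have hpos {p : ℕ × ℕ} (hp : p ∈ k.divisorsAntidiagonal) : p.1 ≠ 0 ∧ p.2 ≠ 0 := by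
    obtain ⟨hp, -⟩ := Nat.mem_divisorsAntidiagonal.mp hp
    exact mul_ne_zero_iff.mp (hp.trans_ne hk)
  rw [himage, Finset.tsum_subtype' _ fun p : ℕ × ℕ => c (p.2 + 1), Finset.sum_image,
    ← Nat.sum_divisorsAntidiagonal' fun _ b => c b]
  · exact Finset.sum_congr rfl fun p hp => by rw [Nat.sub_one_add_one (hpos hp).2]
  · intro p hp p' hp' h
    have := hpos hp
    have := hpos hp'
    simp only [Prod.mk.injEq] at h
    ext <;> lia

end Regrouping

section OddSums

theorem sum_range_add_one_eq_zero_of_odd {N : ℕ} {G : ℤ → ℤ} (hper : Function.Periodic G N)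
    (hodd : Function.Odd G) : ∑ b ∈ Finset.range N, G (b + 1) = 0 := by
  have hreflect : ∑ b ∈ Finset.range N, G (b + 1) = -∑ b ∈ Finset.range N, G b := by
    rw [← Finset.sum_range_reflect (fun b : ℕ => G (b + 1)), ← Finset.sum_neg_distrib]
    refine Finset.sum_congr rfl fun j hj => ?_
    rw [Finset.mem_range] at hj
    rw [← hodd, ← hper (-(j : ℤ))]
    congr 1
    lia
  have hshift := Finset.sum_range_succ (fun b : ℕ => G b) N
  rw [Finset.sum_range_succ', Nat.cast_zero, hper.eq] at hshift
  push_cast at hshift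
  linarith

theorem jacobiSym_add_mul (D : ℕ) (x k : ℤ) : J(x + k * D | D) = J(x | D) := by
  rw [jacobiSym.mod_left, Int.add_mul_emod_self_right, ← jacobiSym.mod_left]

theorem jacobiSym_neg_of_mod_four_eq_one {D : ℕ} (hD : D % 4 = 1) (x : ℤ) :
    J(-x | D) = J(x | D) := by
  rw [jacobiSym.neg _ (Nat.odd_iff.mpr (by lia)), ZMod.χ₄_nat_one_mod_four hD, one_mul]

end OddSums

section Weights

variable {q : ℕ}

/-- The weight `w(k) (J(· | D) ∗ 1)(k)` spread over the factorisations `k = (a + 1) * (b + 1)`. -/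
def divisorWeight (D : ℕ) (w : ZMod q → ℤ) (a b : ℕ) : ℤ :=
  w (((a + 1) * (b + 1) : ℕ) : ZMod q) * J(((b + 1 : ℕ) : ℤ) | D)

variable {D : ℕ} {w : ZMod q → ℤ}

theorem periodic_divisorWeight_left (b : ℕ) :
    Function.Periodic (fun a => divisorWeight D w a b) q := fun a => by
  simp [divisorWeight]

theorem periodic_divisorWeight_right (a : ℕ) :
    Function.Periodic (divisorWeight D w a) (q * D) := fun b => by
  have hJ : J(((b + q * D + 1 : ℕ) : ℤ) | D) = J(((b + 1 : ℕ) : ℤ) | D) := by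
    rw [← jacobiSym_add_mul D ((b + 1 : ℕ) : ℤ) q]
    congr 1
    push_cast
    ring
  rw [divisorWeight, divisorWeight, hJ]
  simp

theorem sum_divisorWeight_left (hw : Function.Odd w) (b : ℕ) :
    ∑ a ∈ Finset.range q, divisorWeight D w a b = 0 := by
  have hsum := sum_range_add_one_eq_zero_of_odd (N := q)
    (G := fun x => w ((x : ZMod q) * ((b + 1 : ℕ) : ZMod q))) (fun x => by simp)
    fun x => by simp only [Int.cast_neg, neg_mul, hw (_ * _)]
  simp only [divisorWeight, ← Finset.sum_mul]
  push_cast at hsum ⊢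
  rw [hsum, zero_mul]

theorem sum_divisorWeight_right (hD : D % 4 = 1) (hw : Function.Odd w) (a : ℕ) :
    ∑ b ∈ Finset.range (q * D), divisorWeight D w a b = 0 := by
  have hsum := sum_range_add_one_eq_zero_of_odd (N := q * D)
    (G := fun x => w (((a + 1 : ℕ) : ZMod q) * (x : ZMod q)) * J(x | D))
    (fun x => by simp [jacobiSym_add_mul])
    fun x => by
      simp only [jacobiSym_neg_of_mod_four_eq_one hD, Int.cast_neg, mul_neg, hw (_ * _), neg_mul]
  simp only [divisorWeight]
  push_cast at hsum ⊢
  exact hsum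

theorem tendsto_tsum_divisorWeight_mul_pow (hD : D % 4 = 1) (hq : Odd q) (hw : Function.Odd w) :
    Tendsto (fun z : ℝ => ∑' p : ℕ × ℕ, (divisorWeight D w p.1 p.2 : ℝ) *
        z ^ ((p.1 + 1) * (p.2 + 1))) (𝓝[<] 1)
      (𝓝 ((∑ a ∈ Finset.range q, ∑ b ∈ Finset.range (q * D),
        divisorWeight D w a b * (((a : ℤ) + 1) * ((b : ℤ) + 1)) : ℤ) / (q * (q * D)))) := by
  have hDodd : Odd D := Nat.odd_iff.mpr (by lia)
  have hlim := tendsto_tsum_mul_pow (W := fun a b => (divisorWeight D w a b : ℝ)) hq.pos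
    (hq.mul hDodd) (fun b => (periodic_divisorWeight_left b).comp Int.cast)
    (fun a => (periodic_divisorWeight_right a).comp Int.cast)
    (fun b => mod_cast sum_divisorWeight_left hw b)
    (fun a => mod_cast sum_divisorWeight_right hD hw a)
  push_cast at hlim ⊢
  exact hlim

/-- The function `k ↦ w(k) exp (-h² k)` on the positive integers, extended by zero. -/
def expWeight (w : ZMod q → ℤ) (h : ℝ) (k : ℤ) : ℝ := if 0 < k then w k * exp (-(h ^ 2 * k)) else 0

theorem expWeight_of_pos {h : ℝ} {k : ℤ} (hk : 0 < k) :
    expWeight w h k = w k * exp (-(h ^ 2 * k)) := if_pos hk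

theorem expWeight_of_nonpos {h : ℝ} {k : ℤ} (hk : k ≤ 0) : expWeight w h k = 0 :=
  if_neg hk.not_gt

theorem divisorWeight_mul_exp_pow (h : ℝ) (a b : ℕ) :
    (divisorWeight D w a b : ℝ) * exp (-h ^ 2) ^ ((a + 1) * (b + 1)) =
      (J(((b + 1 : ℕ) : ℤ) | D) : ℝ) * expWeight w h ((a + 1) * (b + 1) : ℕ) := by
  rw [expWeight_of_pos (by positivity), ← exp_nat_mul, divisorWeight]
  push_cast
  rw [mul_neg, mul_comm (_ * _ : ℝ) (h ^ 2)]
  ring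

end Weights

section ConeMoments

/-- The vanishing conditions on a `P`-periodic function on the cone under which its weighted cone
sums have a limit as the scale tends to zero. -/
structure IsBalanced (P : ℕ) (F : ℕ → ℕ → ℤ) : Prop where
  sum_eq_zero : ∑ u ∈ Finset.range P, ∑ v ∈ Finset.range P, F u v = 0
  sum_mul_eq_zero :
    ∑ u ∈ Finset.range P, ∑ v ∈ Finset.range P, F u v * ((u : ℤ) + 1 + v) = 0

/-- The quadratic moment of a `P`-periodic function `F` on the cone; divided by `4 * P ^ 2`, it is
the limit of the weighted cone sums of `F`. -/
def coneMoment (n : ℤ) (P : ℕ) (F : ℕ → ℕ → ℤ) : ℤ :=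
  ∑ u ∈ Finset.range P, ∑ v ∈ Finset.range P,
    F u v * (4 * ((u : ℤ) + 1) * v + n * (((u : ℤ) + 1) ^ 2 + (v : ℤ) ^ 2))

theorem IsBalanced.tendsto_tsum_mul_coneTerm {n : ℤ} (hn : 0 ≤ n) {P : ℕ} (hP : 0 < P)
    {F : ℕ → ℕ → ℤ} (hF : IsBalanced P F) (hF₁ : ∀ y, Function.Periodic (fun x => F x y) P)
    (hF₂ : ∀ x, Function.Periodic (F x) P) :
    Tendsto (fun h => ∑' p : ℕ × ℕ, (F p.1 p.2 : ℝ) * coneTerm n h 1 0 p.1 p.2) (𝓝[>] 0)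
      (𝓝 (coneMoment n P F / (4 * P ^ 2))) := by
  have hlim := _root_.tendsto_tsum_mul_coneTerm (n := n) (F := fun x y => (F x y : ℝ))
    (mod_cast hn) hP (fun y => (hF₁ y).comp Int.cast) (fun x => (hF₂ x).comp Int.cast)
    (mod_cast hF.sum_eq_zero) (mod_cast hF.sum_mul_eq_zero)
  rw [coneMoment]
  push_cast
  exact hlim

end ConeMoments

theorem tendsto_exp_neg_sq : Tendsto (fun h : ℝ => exp (-h ^ 2)) (𝓝[>] 0) (𝓝[<] 1) := by
  refine tendsto_nhdsWithin_iff.mpr ⟨?_, ?_⟩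
  · have h : Tendsto (fun h : ℝ => exp (-h ^ 2)) (𝓝 0) (𝓝 (exp (-0 ^ 2))) :=
      Continuous.tendsto (by fun_prop) 0
    rw [zero_pow two_ne_zero, neg_zero, exp_zero] at h
    exact h.mono_left nhdsWithin_le_nhds
  · filter_upwards [self_mem_nhdsWithin] with h hh
    exact exp_lt_one_iff.mpr (neg_neg_of_pos (pow_pos hh 2))

theorem tendsto_div_const_nhdsGT_zero {c : ℝ} (hc : 0 < c) :
    Tendsto (fun h : ℝ => h / c) (𝓝[>] 0) (𝓝[>] 0) := by
  refine tendsto_nhdsWithin_iff.mpr ⟨?_, ?_⟩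
  · have h : Tendsto (fun h : ℝ => h / c) (𝓝 0) (𝓝 (0 / c)) := Continuous.tendsto (by fun_prop) 0
    rw [zero_div] at h
    exact h.mono_left nhdsWithin_le_nhds
  · filter_upwards [self_mem_nhdsWithin] with h hh
    exact div_pos hh hc

namespace UnitOrder

variable {n : ℤ}

section ConeWeights

/-- The norm of the cone point with coordinates `(x, y)`. -/
def coneNorm (n : ℤ) (x y : ℕ) : ℤ := QuadraticAlgebra.norm (conePoint n (x, y))

theorem coneNorm_eq (n : ℤ) (x y : ℕ) :
    coneNorm n x y = ((x : ℤ) + 1) ^ 2 + n * (x + 1) * y + (y : ℤ) ^ 2 :=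
  norm_conePoint n (x, y)

theorem coneNorm_pos (hn : 0 ≤ n) (x y : ℕ) : 0 < coneNorm n x y := by
  rw [coneNorm_eq]
  positivity [hn]

theorem sub_two_dvd_coneNorm {x y : ℕ} (hxy : n - 2 ∣ (x : ℤ) + 1 + y) :
    n - 2 ∣ coneNorm n x y := by
  rw [coneNorm_eq, show ((x : ℤ) + 1) ^ 2 + n * (x + 1) * y + (y : ℤ) ^ 2 =
    ((x : ℤ) + 1 + y) * ((x : ℤ) + 1 + y) + (n - 2) * ((x + 1) * y) by ring]
  exact dvd_add (hxy.mul_right _) (dvd_mul_right _ _)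

variable {q : ℕ} {w : ZMod q → ℤ} {c : ZMod q}

/-- The weight `w` evaluated at the norm of a cone point; it weighs the elements of positive norm.
-/
def coneWeight (n : ℤ) (w : ZMod q → ℤ) (x y : ℕ) : ℤ := w (coneNorm n x y : ZMod q)

/-- The weight of the elements of negative norm: they correspond to the cone points divisible by
`unitSubOne n`, and their absolute norm is `c` times that of the cone point if `c` is the inverse
of `n - 2` modulo `q`. -/
def coneWeightNeg (n : ℤ) (w : ZMod q → ℤ) (c : ZMod q) (x y : ℕ) : ℤ :=
  if n - 2 ∣ (x : ℤ) + 1 + y then w (c * (coneNorm n x y : ZMod q)) else 0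

theorem coneNorm_add_mul_left (n : ℤ) (x y k : ℕ) :
    (coneNorm n (x + q * k) y : ZMod q) = coneNorm n x y := by
  simp [coneNorm_eq]

theorem coneNorm_add_mul_right (n : ℤ) (x y k : ℕ) :
    (coneNorm n x (y + q * k) : ZMod q) = coneNorm n x y := by
  simp [coneNorm_eq]

theorem periodic_coneWeight_left (y : ℕ) :
    Function.Periodic (fun x => coneWeight n w x y) q := fun x => by
  simpa [coneWeight] using congrArg w (coneNorm_add_mul_left n x y 1)

theorem periodic_coneWeight_right (x : ℕ) : Function.Periodic (coneWeight n w x) q := fun y => by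
  simpa [coneWeight] using congrArg w (coneNorm_add_mul_right n x y 1)

variable {m : ℕ}

theorem periodic_coneWeightNeg_left (hm : (m : ℤ) = n - 2) (y : ℕ) :
    Function.Periodic (fun x => coneWeightNeg n w c x y) (q * m) := fun x => by
  have hdvd : n - 2 ∣ ((x + q * m : ℕ) : ℤ) + 1 + y ↔ n - 2 ∣ (x : ℤ) + 1 + y := by
    rw [← hm, show ((x + q * m : ℕ) : ℤ) + 1 + y = (x : ℤ) + 1 + y + q * m by push_cast; ring]
    exact dvd_add_left (dvd_mul_left _ _)
  simp only [coneWeightNeg, hdvd, coneNorm_add_mul_left]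

theorem periodic_coneWeightNeg_right (hm : (m : ℤ) = n - 2) (x : ℕ) :
    Function.Periodic (coneWeightNeg n w c x) (q * m) := fun y => by
  have hdvd : n - 2 ∣ (x : ℤ) + 1 + ((y + q * m : ℕ) : ℤ) ↔ n - 2 ∣ (x : ℤ) + 1 + y := by
    rw [← hm, show (x : ℤ) + 1 + ((y + q * m : ℕ) : ℤ) = (x : ℤ) + 1 + y + q * m by push_cast; ring]
    exact dvd_add_left (dvd_mul_left _ _)
  simp only [coneWeightNeg, hdvd, coneNorm_add_mul_right]

variable {h : ℝ}

theorem coneWeight_mul_coneTerm (hn : 0 ≤ n) (x y : ℕ) :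
    (coneWeight n w x y : ℝ) * coneTerm n h 1 0 x y = expWeight w h (coneNorm n x y) := by
  rw [expWeight_of_pos (coneNorm_pos hn x y), coneWeight, coneTerm, realForm, coneNorm_eq]
  push_cast
  ring_nf

theorem coneWeightNeg_mul_coneTerm (hn : 0 ≤ n) (hm : (m : ℤ) = n - 2) (hm0 : 0 < m)
    (hc : c * m = 1) (p : ℕ × ℕ) :
    (coneWeightNeg n w c p.1 p.2 : ℝ) * coneTerm n (h / √m) 1 0 p.1 p.2 =
      {p : ℕ × ℕ | n - 2 ∣ (p.1 : ℤ) + 1 + p.2}.indicator 1 p *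
        expWeight w h (coneNorm n p.1 p.2 / (n - 2)) := by
  by_cases hp : n - 2 ∣ (p.1 : ℤ) + 1 + p.2
  · obtain ⟨k, hk⟩ := sub_two_dvd_coneNorm hp
    rw [← hm] at hk
    have hk0 : 0 < k := pos_of_mul_pos_right (hk ▸ coneNorm_pos hn p.1 p.2) (Int.natCast_nonneg m)
    have hform : realForm n (p.1 + 1) (p.2 + 0) = m * k := by
      have := congrArg (Int.cast : ℤ → ℝ) hk
      rw [coneNorm_eq] at this
      push_cast at this
      rw [← this, realForm, add_zero]
    rw [Set.indicator_of_mem (by exact hp), coneWeightNeg, if_pos hp, coneTerm, hform, hk, ← hm,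
      Int.mul_ediv_cancel_left _ (by positivity), expWeight_of_pos hk0, div_pow,
      Real.sq_sqrt (Nat.cast_nonneg m), Int.cast_mul, Int.cast_natCast, ← mul_assoc, hc, one_mul,
      Pi.one_apply, one_mul]
    congr 3
    field_simp
  · rw [Set.indicator_of_notMem (by exact hp), coneWeightNeg, if_neg hp, Int.cast_zero, zero_mul,
      zero_mul]

end ConeWeights

section LimitIdentity

variable {q : ℕ} {w : ZMod q → ℤ} {c : ZMod q} {m : ℕ} {h : ℝ}

theorem hasSum_ncard_coneFiber_mul_expWeight (hn : 0 ≤ n) (hq : 0 < q) (hh : 0 < h) :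
    HasSum (fun k : ℤ => ((coneFiber n k).ncard : ℝ) * expWeight w h k)
      (∑' p : ℕ × ℕ, (coneWeight n w p.1 p.2 : ℝ) * coneTerm n h 1 0 p.1 p.2) := by
  obtain ⟨C, hC⟩ := exists_abs_le_of_periodic (F := fun x y => (coneWeight n w x y : ℝ)) hq hq
    (fun y => (periodic_coneWeight_left y).comp Int.cast)
    fun x => (periodic_coneWeight_right x).comp Int.cast
  have hs := summable_mul_coneTerm (n := n) (mod_cast hn) hh hC
  have hterm (p : ℕ × ℕ) : (coneWeight n w p.1 p.2 : ℝ) * coneTerm n h 1 0 p.1 p.2 =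
      Set.univ.indicator 1 p * expWeight w h (coneNorm n p.1 p.2) := by
    rw [coneWeight_mul_coneTerm hn, Set.indicator_univ, Pi.one_apply, one_mul]
  simp only [hterm] at hs ⊢
  have hcount := hasSum_ncard_mul hs
  simp only [Set.inter_univ] at hcount
  exact hcount

theorem preimage_coneNorm_ediv_inter (hn : 2 < n) (k : ℤ) :
    (fun p : ℕ × ℕ => coneNorm n p.1 p.2 / (n - 2)) ⁻¹' {k} ∩
      {p | n - 2 ∣ (p.1 : ℤ) + 1 + p.2} = coneFiberNeg n k := by
  ext p
  have hdvd : unitSubOne n ∣ conePoint n p ↔ n - 2 ∣ (p.1 : ℤ) + 1 + p.2 := unitSubOne_dvd_iff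
  change coneNorm n p.1 p.2 / (n - 2) = k ∧ n - 2 ∣ (p.1 : ℤ) + 1 + p.2 ↔
    coneNorm n p.1 p.2 = (n - 2) * k ∧ unitSubOne n ∣ conePoint n p
  rw [hdvd]
  exact and_congr_left fun hp =>
    Int.ediv_eq_iff_eq_mul_right (by lia) (sub_two_dvd_coneNorm hp)

theorem hasSum_ncard_coneFiberNeg_mul_expWeight (hn : 2 < n) (hm : (m : ℤ) = n - 2) (hq : 0 < q)
    (hc : c * m = 1) (hh : 0 < h) :
    HasSum (fun k : ℤ => ((coneFiberNeg n k).ncard : ℝ) * expWeight w h k)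
      (∑' p : ℕ × ℕ, (coneWeightNeg n w c p.1 p.2 : ℝ) * coneTerm n (h / √m) 1 0 p.1 p.2) := by
  have hm0 : 0 < m := by lia
  have hqm : 0 < q * m := Nat.mul_pos hq hm0
  obtain ⟨C, hC⟩ := exists_abs_le_of_periodic (F := fun x y => (coneWeightNeg n w c x y : ℝ))
    hqm hqm (fun y => (periodic_coneWeightNeg_left hm y).comp Int.cast)
    fun x => (periodic_coneWeightNeg_right hm x).comp Int.cast
  have hs := summable_mul_coneTerm (n := n) (h := h / √m) (by exact_mod_cast (by lia : 0 ≤ n))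
    (by positivity) hC
  simp only [coneWeightNeg_mul_coneTerm (by lia : 0 ≤ n) hm hm0 hc] at hs ⊢
  simpa only [preimage_coneNorm_ediv_inter hn] using hasSum_ncard_mul hs

variable {D : ℕ}

theorem hasSum_tsum_preimage_mul_expWeight (hD : 0 < D) (hq : 0 < q) (hh : 0 < h) :
    HasSum (fun k : ℤ =>
      (∑' p : (fun p : ℕ × ℕ => (((p.1 + 1) * (p.2 + 1) : ℕ) : ℤ)) ⁻¹' {k},
        (J((((p : ℕ × ℕ).2 + 1 : ℕ) : ℤ) | D) : ℝ)) * expWeight w h k)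
      (∑' p : ℕ × ℕ,
        (divisorWeight D w p.1 p.2 : ℝ) * exp (-h ^ 2) ^ ((p.1 + 1) * (p.2 + 1))) := by
  obtain ⟨C, hC⟩ := exists_abs_le_of_periodic (F := fun a b => (divisorWeight D w a b : ℝ)) hq
    (Nat.mul_pos hq hD) (fun b => (periodic_divisorWeight_left b).comp Int.cast)
    fun a => (periodic_divisorWeight_right a).comp Int.cast
  have hs := summable_mul_pow_succ_mul_succ hC (exp_pos (-h ^ 2)).le
    (exp_lt_one_iff.mpr (neg_neg_of_pos (pow_pos hh 2)))
  simp only [divisorWeight_mul_exp_pow] at hs ⊢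
  exact hasSum_tsum_preimage_mul hs

variable [IsDomain (UnitOrder n)] [IsPrincipalIdealRing (UnitOrder n)]

theorem tsum_divisorWeight_mul_exp_pow_eq_add (hD : (D : ℤ) = n ^ 2 - 4) (hn : 4 ≤ n)
    (hodd : Odd n) (hm : (m : ℤ) = n - 2) (hq : 0 < q) (hc : c * m = 1) (hh : 0 < h) :
    ∑' p : ℕ × ℕ, (divisorWeight D w p.1 p.2 : ℝ) * exp (-h ^ 2) ^ ((p.1 + 1) * (p.2 + 1)) =
      ∑' p : ℕ × ℕ, (coneWeight n w p.1 p.2 : ℝ) * coneTerm n h 1 0 p.1 p.2 +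
      ∑' p : ℕ × ℕ, (coneWeightNeg n w c p.1 p.2 : ℝ) * coneTerm n (h / √m) 1 0 p.1 p.2 := by
  have hD0 : 0 < D := by
    zify
    rw [hD]
    nlinarith
  refine (hasSum_tsum_preimage_mul_expWeight hD0 hq hh).unique ?_
  convert (hasSum_ncard_coneFiber_mul_expWeight (n := n) (by lia) hq hh).add
    (hasSum_ncard_coneFiberNeg_mul_expWeight (n := n) (by lia) hm hq hc hh) using 2 with k
  rcases lt_or_ge 0 k with hk | hk
  · lift k to ℕ using hk.le
    have hk0 : 0 < k := mod_cast hk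
    have hcount := congrArg (Int.cast : ℤ → ℝ) (sum_divisors_jacobiSym hD hn hodd hk0)
    push_cast at hcount
    rw [← add_mul, ← hcount, tsum_preimage_eq_sum_divisors (fun b => (J((b : ℤ) | D) : ℝ)) hk0.ne']
  · simp only [expWeight_of_nonpos hk, mul_zero, add_zero]

theorem four_mul_sum_divisorWeight_eq (hD : (D : ℤ) = n ^ 2 - 4) (hn : 4 ≤ n) (hodd : Odd n)
    (hm : (m : ℤ) = n - 2) (hq : Odd q) (hw : Function.Odd w) (hc : c * m = 1)
    (hpos : IsBalanced q (coneWeight n w)) (hneg : IsBalanced (q * m) (coneWeightNeg n w c)) :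
    4 * (m : ℤ) ^ 2 * ∑ a ∈ Finset.range q, ∑ b ∈ Finset.range (q * D),
        divisorWeight D w a b * (((a : ℤ) + 1) * ((b : ℤ) + 1)) =
      D * ((m : ℤ) ^ 2 * coneMoment n q (coneWeight n w) +
        coneMoment n (q * m) (coneWeightNeg n w c)) := by
  have hm0 : 0 < m := by lia
  have hD8 : D % 8 = 5 := mod_eight_eq_five_of_odd hD hodd
  have hn0 : 0 ≤ n := by lia
  have hlhs := (tendsto_tsum_divisorWeight_mul_pow (D := D) (by lia) hq hw).comp tendsto_exp_neg_sq
  have hlimPos := hpos.tendsto_tsum_mul_coneTerm hn0 hq.pos periodic_coneWeight_left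
    periodic_coneWeight_right
  have hlimNeg := (hneg.tendsto_tsum_mul_coneTerm hn0 (Nat.mul_pos hq.pos hm0)
    (periodic_coneWeightNeg_left hm) (periodic_coneWeightNeg_right hm)).comp
    (tendsto_div_const_nhdsGT_zero (c := √m) (by positivity))
  have hlimits := tendsto_nhds_unique (hlhs.congr' (by
    filter_upwards [self_mem_nhdsWithin] with h hh
    exact tsum_divisorWeight_mul_exp_pow_eq_add hD hn hodd hm hq.pos hc hh))
    (hlimPos.add hlimNeg)
  have hq0 : (q : ℝ) ≠ 0 := Nat.cast_ne_zero.mpr hq.pos.ne'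
  have hD0 : (D : ℝ) ≠ 0 := Nat.cast_ne_zero.mpr (by lia)
  rw [Nat.cast_mul] at hlimits
  field_simp at hlimits
  exact_mod_cast (by linear_combination hlimits :
    4 * (m : ℝ) ^ 2 * ((∑ a ∈ Finset.range q, ∑ b ∈ Finset.range (q * D),
        divisorWeight D w a b * (((a : ℤ) + 1) * ((b : ℤ) + 1)) : ℤ) : ℝ) =
      D * ((m : ℝ) ^ 2 * coneMoment n q (coneWeight n w) +
        coneMoment n (q * m) (coneWeightNeg n w c)))

end LimitIdentity

end UnitOrder

section CongruenceSums

theorem sum_range_mul_eq_sum_sum {M : Type*} [AddCommMonoid M] (q m : ℕ) (f : ℕ → M) :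
    ∑ x ∈ Finset.range (q * m), f x =
      ∑ i ∈ Finset.range m, ∑ u ∈ Finset.range q, f (q * i + u) := by
  induction m with
  | zero => simp
  | succ m ih => rw [Nat.mul_succ, Finset.sum_range_add, ih, Finset.sum_range_succ]

theorem two_mul_sum_range_natCast (m : ℕ) : 2 * ∑ i ∈ Finset.range m, (i : ℤ) = m * (m - 1) := by
  induction m with
  | zero => simp
  | succ m ih =>
    rw [Finset.sum_range_succ, mul_add, ih]
    push_cast
    ring

theorem sum_range_add_mul_sq (q m : ℕ) (c : ℤ) :
    ∑ i ∈ Finset.range m, (c + q * (i : ℤ)) ^ 2 =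
      m * c ^ 2 + q * m * (m - 1) * c + q ^ 2 * ∑ i ∈ Finset.range m, (i : ℤ) ^ 2 := by
  have hexpand (i : ℕ) : (c + q * (i : ℤ)) ^ 2 = c ^ 2 + 2 * q * c * i + q ^ 2 * (i : ℤ) ^ 2 := by
    ring
  simp only [hexpand, Finset.sum_add_distrib, ← Finset.mul_sum, Finset.sum_const,
    Finset.card_range, nsmul_eq_mul]
  linear_combination q * c * two_mul_sum_range_natCast m

theorem sum_range_ite_le {m κ : ℕ} (hκ : κ < m) (a b : ℤ) :
    ∑ i ∈ Finset.range m, (if i ≤ κ then a else b) = (κ + 1) * a + (m - κ - 1) * b := by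
  obtain ⟨k, rfl⟩ := Nat.exists_eq_add_of_lt hκ
  rw [show κ + k + 1 = κ + 1 + k by ring, Finset.sum_range_add,
    Finset.sum_congr (g := fun _ => a) rfl fun i hi => if_pos (by
      rw [Finset.mem_range] at hi
      lia),
    Finset.sum_congr (s₁ := Finset.range k) (g := fun _ => b) rfl fun i _ => if_neg (by lia)]
  simp only [Finset.sum_const, Finset.card_range, nsmul_eq_mul]
  push_cast
  ring

variable {q m κ s : ℕ}

theorem dvd_add_mul_iff_modEq {σ k : ℕ} (hco : q.Coprime m) (hs : q * κ + σ = m * s) :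
    m ∣ σ + q * k ↔ k ≡ κ [MOD m] := by
  have hκ : σ + q * κ ≡ 0 [MOD m] := Nat.modEq_zero_iff_dvd.mpr ⟨s, by lia⟩
  refine ⟨fun hdvd => ?_, fun hk => ?_⟩
  · have hk : σ + q * k ≡ 0 [MOD m] := Nat.modEq_zero_iff_dvd.mpr hdvd
    exact Nat.ModEq.cancel_left_of_coprime hco.symm ((hk.trans hκ.symm).add_left_cancel' σ)
  · exact Nat.modEq_zero_iff_dvd.mp (((hk.mul_left q).add_left σ).trans hκ)

theorem sum_range_ite_add_modEq {i : ℕ} (hκ : κ < m) (hi : i < m) (f : ℕ → ℤ) :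
    ∑ j ∈ Finset.range m, (if i + j ≡ κ [MOD m] then f j else 0) =
      f (if i ≤ κ then κ - i else κ + m - i) := by
  set j₀ := if i ≤ κ then κ - i else κ + m - i with hj₀
  have hj₀m : j₀ < m := by grind
  have hj₀κ : i + j₀ ≡ κ [MOD m] := by
    rw [hj₀]
    split_ifs with hiκ
    · rw [Nat.add_sub_cancel' hiκ]
    · rw [Nat.add_sub_cancel' (by lia)]
      exact Nat.add_modEq_right
  have hiff (j : ℕ) (hj : j < m) : i + j ≡ κ [MOD m] ↔ j = j₀ := by
    refine ⟨fun h => ?_, fun h => h ▸ hj₀κ⟩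
    exact Nat.ModEq.eq_of_lt_of_lt ((h.trans hj₀κ.symm).add_left_cancel' i) hj hj₀m
  rw [Finset.sum_congr rfl fun j hj => if_congr (hiff j (Finset.mem_range.mp hj)) rfl rfl,
    Finset.sum_ite_eq', if_pos (Finset.mem_range.mpr hj₀m)]

theorem sum_sum_ite_add_modEq_left (hκ : κ < m) (g : ℕ → ℤ) :
    ∑ i ∈ Finset.range m, ∑ j ∈ Finset.range m, (if i + j ≡ κ [MOD m] then g i else 0) =
      ∑ i ∈ Finset.range m, g i :=
  Finset.sum_congr rfl fun _ hi => sum_range_ite_add_modEq hκ (Finset.mem_range.mp hi) _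

theorem sum_sum_ite_add_modEq_right (hκ : κ < m) (g : ℕ → ℤ) :
    ∑ i ∈ Finset.range m, ∑ j ∈ Finset.range m, (if i + j ≡ κ [MOD m] then g j else 0) =
      ∑ i ∈ Finset.range m, g i := by
  rw [Finset.sum_comm, ← sum_sum_ite_add_modEq_left hκ g]
  simp only [add_comm]

theorem sum_sum_ite_add_modEq (hκ : κ < m) (g : ℕ → ℤ) :
    ∑ i ∈ Finset.range m, ∑ j ∈ Finset.range m, (if i + j ≡ κ [MOD m] then g (i + j) else 0) =
      (κ + 1) * g κ + (m - κ - 1) * g (κ + m) := by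
  rw [← sum_range_ite_le hκ]
  refine Finset.sum_congr rfl fun i hi => ?_
  rw [Finset.mem_range] at hi
  rw [sum_range_ite_add_modEq hκ hi fun j => g (i + j)]
  split_ifs with hiκ <;> congr 1 <;> lia

variable {a b : ℕ}

theorem sum_sum_ite_dvd_one (hco : q.Coprime m) (hκ : κ < m) (hs : q * κ + (a + b) = m * s) :
    ∑ i ∈ Finset.range m, ∑ j ∈ Finset.range m,
      (if m ∣ a + b + q * (i + j) then 1 else 0 : ℤ) = m := by
  simp only [dvd_add_mul_iff_modEq hco hs]
  rw [sum_sum_ite_add_modEq hκ fun _ => 1]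
  ring

theorem sum_sum_ite_dvd_linear (hco : q.Coprime m) (hκ : κ < m) (hs : q * κ + (a + b) = m * s) :
    ∑ i ∈ Finset.range m, ∑ j ∈ Finset.range m,
      (if m ∣ a + b + q * (i + j) then ((a : ℤ) + q * i) + ((b : ℤ) + q * j) else 0) =
      m * (q * (m - 1) + (a + b)) := by
  simp only [dvd_add_mul_iff_modEq hco hs]
  have hsum := sum_sum_ite_add_modEq hκ fun k => (a : ℤ) + b + q * k
  have hs' : (a : ℤ) + b = m * s - q * κ := by
    rw [eq_sub_iff_add_eq']
    exact_mod_cast hs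
  push_cast at hsum
  refine (Finset.sum_congr rfl fun i _ => Finset.sum_congr rfl fun j _ => ?_).trans (hsum.trans ?_)
  · congr 1
    ring
  · rw [hs']
    ring

theorem sum_sum_ite_dvd_quadratic (hco : q.Coprime m) (hκ : κ < m)
    (hs : q * κ + (a + b) = m * s) :
    ∑ i ∈ Finset.range m, ∑ j ∈ Finset.range m,
      (if m ∣ a + b + q * (i + j) then
        4 * ((a : ℤ) + q * i) * ((b : ℤ) + q * j) +
          (m + 2) * (((a : ℤ) + q * i) ^ 2 + ((b : ℤ) + q * j) ^ 2) else 0) =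
      (m : ℤ) ^ 2 * ((a : ℤ) ^ 2 + (b : ℤ) ^ 2 + 4 * s * (a + b) + 2 * q * (m - 2) * s
        - 2 * m * (s : ℤ) ^ 2) + (2 * q ^ 2 * (m ^ 2 * (m - 1) +
        m * ∑ i ∈ Finset.range m, (i : ℤ) ^ 2) + m ^ 2 * q * (m + 1) * (a + b)) := by
  have hsq := sum_sum_ite_add_modEq hκ fun k => 2 * ((a : ℤ) + b + q * k) ^ 2
  have hleft := sum_sum_ite_add_modEq_left hκ fun i => (m : ℤ) * ((a : ℤ) + q * i) ^ 2
  have hright := sum_sum_ite_add_modEq_right hκ fun j => (m : ℤ) * ((b : ℤ) + q * j) ^ 2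
  rw [← Finset.mul_sum, sum_range_add_mul_sq] at hleft hright
  simp only [dvd_add_mul_iff_modEq hco hs]
  have hsplit (i j : ℕ) : (if i + j ≡ κ [MOD m] then
        4 * ((a : ℤ) + q * i) * ((b : ℤ) + q * j) +
          (m + 2) * (((a : ℤ) + q * i) ^ 2 + ((b : ℤ) + q * j) ^ 2) else 0) =
      (if i + j ≡ κ [MOD m] then 2 * ((a : ℤ) + b + q * (i + j : ℕ)) ^ 2 else 0) +
      (if i + j ≡ κ [MOD m] then m * ((a : ℤ) + q * i) ^ 2 else 0) +
      (if i + j ≡ κ [MOD m] then m * ((b : ℤ) + q * j) ^ 2 else 0) := by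
    split_ifs
    · push_cast
      ring
    · simp only [add_zero]
  have hs' : (a : ℤ) = m * s - q * κ - b := by
    rw [eq_sub_iff_add_eq, eq_sub_iff_add_eq']
    exact_mod_cast hs
  simp only [hsplit, Finset.sum_add_distrib]
  rw [hsq, hleft, hright, hs']
  push_cast
  ring

end CongruenceSums

section Balanced

theorem sum_range_natCast_zmod {M : Type*} [AddCommMonoid M] (q : ℕ) [NeZero q]
    (f : ZMod q → M) : ∑ u ∈ Finset.range q, f u = ∑ x : ZMod q, f x := by
  refine Finset.sum_nbij' (fun u => (u : ZMod q)) ZMod.val (fun _ _ => Finset.mem_univ _)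
    (fun x _ => Finset.mem_range.mpr x.val_lt)
    (fun u hu => ZMod.val_cast_of_lt (Finset.mem_range.mp hu)) (fun x _ => x.natCast_zmod_val)
    fun _ _ => rfl

theorem IsBalanced.sum_mul_affine_eq_zero {P : ℕ} {F : ℕ → ℕ → ℤ} (hF : IsBalanced P F)
    (α β : ℤ) :
    ∑ u ∈ Finset.range P, ∑ v ∈ Finset.range P, F u v * (α + β * ((u : ℤ) + 1 + v)) = 0 := by
  have hsum : α * ∑ u ∈ Finset.range P, ∑ v ∈ Finset.range P, F u v +
      β * ∑ u ∈ Finset.range P, ∑ v ∈ Finset.range P, F u v * ((u : ℤ) + 1 + v) = 0 := by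
    rw [hF.sum_eq_zero, hF.sum_mul_eq_zero, mul_zero, mul_zero, add_zero]
  rw [← hsum]
  simp only [Finset.mul_sum, ← Finset.sum_add_distrib]
  exact Finset.sum_congr rfl fun u _ => Finset.sum_congr rfl fun v _ => by ring

theorem sum_sum_range_reflect {M : Type*} [AddCommMonoid M] (P : ℕ) (G : ℕ → ℕ → M) :
    ∑ u ∈ Finset.range P, ∑ v ∈ Finset.range P, G (P - 1 - v) (P - 1 - u) =
      ∑ u ∈ Finset.range P, ∑ v ∈ Finset.range P, G u v := by
  rw [Finset.sum_comm, Finset.sum_range_reflect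
    (fun v => ∑ u ∈ Finset.range P, G v (P - 1 - u)) P]
  exact Finset.sum_congr rfl fun v _ => Finset.sum_range_reflect (G v) P

theorem isBalanced_of_reflect {P : ℕ} {F : ℕ → ℕ → ℤ}
    (hsum : ∑ u ∈ Finset.range P, ∑ v ∈ Finset.range P, F u v = 0)
    (hF : ∀ u < P, ∀ v < P, F (P - 1 - v) (P - 1 - u) = F u v) : IsBalanced P F := by
  refine ⟨hsum, ?_⟩
  set S := ∑ u ∈ Finset.range P, ∑ v ∈ Finset.range P, F u v * ((u : ℤ) + 1 + v)
  have hreflect : S = 2 * P * ∑ u ∈ Finset.range P, ∑ v ∈ Finset.range P, F u v - S := by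
    refine (sum_sum_range_reflect P fun u v => F u v * ((u : ℤ) + 1 + v)).symm.trans ?_
    simp only [S, Finset.mul_sum, ← Finset.sum_sub_distrib]
    refine Finset.sum_congr rfl fun u hu => Finset.sum_congr rfl fun v hv => ?_
    rw [Finset.mem_range] at hu hv
    rw [hF u hu v hv, Nat.sub_sub, Nat.sub_sub, Nat.cast_sub (by lia), Nat.cast_sub (by lia)]
    push_cast
    ring
  rw [hsum] at hreflect
  lia

end Balanced

namespace UnitOrder

variable {n : ℤ} {q : ℕ} {w : ZMod q → ℤ}

theorem intCast_coneNorm (n : ℤ) (u v : ℕ) : (coneNorm n u v : ZMod q) =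
    QuadraticAlgebra.norm (⟨(u : ZMod q) + 1, v⟩ : QuadraticAlgebra (ZMod q) (-1) n) := by
  rw [coneNorm_eq, QuadraticAlgebra.norm_def]
  push_cast
  ring

theorem sum_sum_coneWeight [NeZero q] : ∑ u ∈ Finset.range q, ∑ v ∈ Finset.range q,
    coneWeight n w u v = ∑ p : ZMod q × ZMod q,
      w (QuadraticAlgebra.norm (⟨p.1, p.2⟩ : QuadraticAlgebra (ZMod q) (-1) n)) := by
  simp only [coneWeight, intCast_coneNorm]
  rw [Fintype.sum_prod_type, ← Equiv.sum_comp (Equiv.addRight 1), ← sum_range_natCast_zmod]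
  exact Finset.sum_congr rfl fun u _ => sum_range_natCast_zmod q fun y =>
    w (QuadraticAlgebra.norm (⟨(u : ZMod q) + 1, y⟩ : QuadraticAlgebra (ZMod q) (-1) n))

theorem sum_sum_coneWeight_eq_zero [NeZero q] (hw : Function.Odd w)
    {ν : QuadraticAlgebra (ZMod q) (-1) n} (hν : QuadraticAlgebra.norm ν = -1) :
    ∑ u ∈ Finset.range q, ∑ v ∈ Finset.range q, coneWeight n w u v = 0 := by
  have hunit : IsUnit ν := by
    rw [QuadraticAlgebra.isUnit_iff_norm_isUnit, hν]
    exact isUnit_one.neg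
  let e := QuadraticAlgebra.equivProd (-1 : ZMod q) (n : ZMod q)
  let mulν : ZMod q × ZMod q ≃ ZMod q × ZMod q := (e.symm.trans hunit.unit.mulLeft).trans e
  have hneg : ∑ p, w (QuadraticAlgebra.norm (e.symm p)) =
      -∑ p, w (QuadraticAlgebra.norm (e.symm p)) := by
    conv_lhs => rw [← mulν.sum_comp]
    rw [← Finset.sum_neg_distrib]
    refine Finset.sum_congr rfl fun p _ => ?_
    have hp : e.symm (mulν p) = ν * e.symm p := e.symm_apply_apply _
    rw [hp, map_mul, hν, neg_one_mul, hw]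
  rw [sum_sum_coneWeight]
  change ∑ p, w (QuadraticAlgebra.norm (e.symm p)) = 0
  lia

theorem isBalanced_coneWeight [NeZero q] (hw : Function.Odd w)
    {ν : QuadraticAlgebra (ZMod q) (-1) n} (hν : QuadraticAlgebra.norm ν = -1) :
    IsBalanced q (coneWeight n w) := by
  refine isBalanced_of_reflect (sum_sum_coneWeight_eq_zero hw hν) fun u hu v hv => ?_
  have hcast {k : ℕ} (hk : k < q) : ((q - 1 - k : ℕ) : ZMod q) = -(k + 1) := by
    rw [Nat.sub_sub, Nat.cast_sub (by lia), ZMod.natCast_self]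
    push_cast
    ring
  rw [coneWeight, coneWeight, intCast_coneNorm, intCast_coneNorm, hcast hu, hcast hv,
    QuadraticAlgebra.norm_def, QuadraticAlgebra.norm_def]
  ring_nf

variable {m : ℕ} {c : ZMod q}

/-- The representative in `{1, …, q}` of `c * (u + 1 + v)`. If `c` is the inverse of `m` modulo
`q`, this is the smallest `s` with `m * s ≡ u + 1 + v` modulo `q` and `0 < s`. -/
def coneIndex (c : ZMod q) (u v : ℕ) : ℕ := (c * ((u : ZMod q) + 1 + v) - 1).val + 1

theorem exists_mul_add_eq_mul_coneIndex [NeZero q] (hc : c * m = 1) (hqm : 2 * q ≤ m) {u v : ℕ}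
    (hu : u < q) (hv : v < q) : ∃ κ < m, q * κ + (u + 1 + v) = m * coneIndex c u v := by
  have hle : coneIndex c u v ≤ q := ZMod.val_lt _
  have hcast : ((m * coneIndex c u v : ℕ) : ZMod q) = (u + 1 + v : ℕ) := by
    rw [coneIndex]
    push_cast
    rw [ZMod.natCast_zmod_val]
    linear_combination ((u : ZMod q) + 1 + v) * hc
  have hσ : u + 1 + v ≤ m * coneIndex c u v := by
    have : m ≤ m * coneIndex c u v := Nat.le_mul_of_pos_right m (Nat.succ_pos _)
    lia
  obtain ⟨κ, hκ⟩ := (Nat.modEq_iff_dvd' hσ).mp ((ZMod.natCast_eq_natCast_iff _ _ q).mp hcast.symm)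
  refine ⟨κ, lt_of_mul_lt_mul_left (?_ : q * κ < q * m) (Nat.zero_le q), by lia⟩
  have : m * coneIndex c u v ≤ m * q := Nat.mul_le_mul_left m hle
  rw [mul_comm q m]
  lia

theorem sum_sum_coneWeightNeg_mul (hm : (m : ℤ) = n - 2) (W : ℤ → ℤ → ℤ) :
    ∑ x ∈ Finset.range (q * m), ∑ y ∈ Finset.range (q * m),
      coneWeightNeg n w c x y * W ((x : ℤ) + 1) y =
    ∑ u ∈ Finset.range q, ∑ v ∈ Finset.range q, coneWeight n (fun x => w (c * x)) u v *
      ∑ i ∈ Finset.range m, ∑ j ∈ Finset.range m, if m ∣ u + 1 + v + q * (i + j) then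
        W (((u + 1 : ℕ) : ℤ) + q * i) ((v : ℤ) + q * j) else 0 := by
  simp only [sum_range_mul_eq_sum_sum q m, Finset.mul_sum]
  rw [Finset.sum_comm]
  refine Finset.sum_congr rfl fun u _ => ?_
  refine (Finset.sum_congr rfl fun i _ => Finset.sum_comm).trans (Finset.sum_comm.trans ?_)
  refine Finset.sum_congr rfl fun v _ => Finset.sum_congr rfl fun i _ =>
    Finset.sum_congr rfl fun j _ => ?_
  have hdvd : n - 2 ∣ ((q * i + u : ℕ) : ℤ) + 1 + (q * j + v : ℕ) ↔
      m ∣ u + 1 + v + q * (i + j) := by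
    rw [← hm, ← Int.natCast_dvd_natCast]
    push_cast
    ring_nf
  have hnorm : (coneNorm n (q * i + u) (q * j + v) : ZMod q) = coneNorm n u v := by
    simp [coneNorm_eq]
  simp only [coneWeightNeg, coneWeight, hdvd, hnorm, ite_mul, zero_mul, mul_ite, mul_zero]
  push_cast
  ring_nf

theorem isBalanced_coneWeightNeg [NeZero q] (hm : (m : ℤ) = n - 2) (hco : q.Coprime m)
    (hc : c * m = 1) (hqm : 2 * q ≤ m) (h : IsBalanced q (coneWeight n fun x => w (c * x))) :
    IsBalanced (q * m) (coneWeightNeg n w c) := by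
  constructor
  · have hsplit := sum_sum_coneWeightNeg_mul (w := w) (c := c) hm fun _ _ => 1
    simp only [mul_one] at hsplit
    refine hsplit.trans (Eq.trans ?_ (h.sum_mul_affine_eq_zero m 0))
    refine Finset.sum_congr rfl fun u hu => Finset.sum_congr rfl fun v hv => ?_
    obtain ⟨κ, hκ, hs⟩ := exists_mul_add_eq_mul_coneIndex hc hqm (Finset.mem_range.mp hu)
      (Finset.mem_range.mp hv)
    rw [sum_sum_ite_dvd_one hco hκ hs, zero_mul, add_zero]
  · refine (sum_sum_coneWeightNeg_mul hm fun x y => x + y).trans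
      (Eq.trans ?_ (h.sum_mul_affine_eq_zero (m * (q * (m - 1))) m))
    refine Finset.sum_congr rfl fun u hu => Finset.sum_congr rfl fun v hv => ?_
    obtain ⟨κ, hκ, hs⟩ := exists_mul_add_eq_mul_coneIndex hc hqm (Finset.mem_range.mp hu)
      (Finset.mem_range.mp hv)
    rw [sum_sum_ite_dvd_linear hco hκ hs]
    push_cast
    ring

theorem coneMoment_coneWeightNeg [NeZero q] (hm : (m : ℤ) = n - 2) (hco : q.Coprime m)
    (hc : c * m = 1) (hqm : 2 * q ≤ m) (h : IsBalanced q (coneWeight n fun x => w (c * x))) :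
    coneMoment n (q * m) (coneWeightNeg n w c) =
      (m : ℤ) ^ 2 * ∑ u ∈ Finset.range q, ∑ v ∈ Finset.range q,
        coneWeight n (fun x => w (c * x)) u v * (((u : ℤ) + 1) ^ 2 + (v : ℤ) ^ 2 +
          4 * coneIndex c u v * ((u : ℤ) + 1 + v) + 2 * q * (m - 2) * coneIndex c u v -
          2 * m * (coneIndex c u v : ℤ) ^ 2) := by
  have hzero := h.sum_mul_affine_eq_zero (2 * q ^ 2 * (m ^ 2 * (m - 1) +
    m * ∑ i ∈ Finset.range m, (i : ℤ) ^ 2)) (m ^ 2 * q * (m + 1))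
  refine (sum_sum_coneWeightNeg_mul hm fun x y => 4 * x * y + n * (x ^ 2 + y ^ 2)).trans
    (Eq.trans ?_ ((congrArg (_ + ·) hzero).trans (add_zero _)))
  rw [Finset.mul_sum, ← Finset.sum_add_distrib]
  refine Finset.sum_congr rfl fun u hu => ?_
  rw [Finset.mul_sum, ← Finset.sum_add_distrib]
  refine Finset.sum_congr rfl fun v hv => ?_
  obtain ⟨κ, hκ, hs⟩ := exists_mul_add_eq_mul_coneIndex hc hqm (Finset.mem_range.mp hu)
    (Finset.mem_range.mp hv)
  rw [show n = m + 2 by lia, sum_sum_ite_dvd_quadratic hco hκ hs]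
  push_cast
  ring

end UnitOrder

section OddFunctions

theorem odd_of_map_neg_one {R S : Type*} [CommRing R] [CommRing S] {χ : R →* S}
    (hχ : χ (-1) = -1) : Function.Odd χ := fun x => by
  rw [← neg_one_mul, map_mul, hχ, neg_one_mul]

theorem odd_valMinAbs_comp {R : Type*} [Neg R] {r : ℕ} (hr : Odd r) {f : R → ZMod r}
    (hf : Function.Odd f) : Function.Odd fun x => (f x).valMinAbs := fun x => by
  simp only [hf x]
  exact ZMod.valMinAbs_neg_of_ne_half fun h => Nat.not_even_iff_odd.mpr hr ⟨(f x).val, by lia⟩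

end OddFunctions

namespace UnitOrder

variable {n : ℤ}

section MomentIdentity

variable {q : ℕ} {w : ZMod q → ℤ} {c : ZMod q} {m D : ℕ}
  [IsDomain (UnitOrder n)] [IsPrincipalIdealRing (UnitOrder n)]

theorem four_mul_sum_divisorWeight_eq_mul_sum (hD : (D : ℤ) = n ^ 2 - 4) (hn : 4 ≤ n)
    (hodd : Odd n) (hm : (m : ℤ) = n - 2) (hq : Odd q) (hw : Function.Odd w) (hc : c * m = 1)
    (hqm : 2 * q ≤ m) {ν : QuadraticAlgebra (ZMod q) (-1) n} (hν : QuadraticAlgebra.norm ν = -1) :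
    4 * ∑ a ∈ Finset.range q, ∑ b ∈ Finset.range (q * D),
        divisorWeight D w a b * (((a : ℤ) + 1) * ((b : ℤ) + 1)) =
      D * ∑ u ∈ Finset.range q, ∑ v ∈ Finset.range q,
        (coneWeight n w u v * (4 * ((u : ℤ) + 1) * v + n * (((u : ℤ) + 1) ^ 2 + (v : ℤ) ^ 2)) +
        coneWeight n (fun x => w (c * x)) u v * (((u : ℤ) + 1) ^ 2 + (v : ℤ) ^ 2 +
          4 * coneIndex c u v * ((u : ℤ) + 1 + v) + 2 * q * (m - 2) * coneIndex c u v -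
          2 * m * (coneIndex c u v : ℤ) ^ 2)) := by
  have : NeZero q := ⟨hq.pos.ne'⟩
  have hco : q.Coprime m :=
    ((ZMod.isUnit_iff_coprime m q).mp (.of_mul_eq_one_right _ hc)).symm
  have hwc : Function.Odd fun x => w (c * x) := fun x => by simp only [mul_neg, hw _]
  have hbal := isBalanced_coneWeight hwc hν
  have hkey := four_mul_sum_divisorWeight_eq hD hn hodd hm hq hw hc (isBalanced_coneWeight hw hν)
    (isBalanced_coneWeightNeg hm hco hc hqm hbal)
  rw [coneMoment_coneWeightNeg hm hco hc hqm hbal, coneMoment] at hkey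
  have hm0 : (m : ℤ) ^ 2 ≠ 0 := pow_ne_zero 2 (by lia)
  simp only [Finset.sum_add_distrib]
  apply mul_left_cancel₀ hm0
  linear_combination hkey

end MomentIdentity

section Characters

variable {q r : ℕ} {χ : ZMod q →* ZMod r} {D : ℕ}

theorem sum_divisorWeight_valMinAbs_eq_zero
    (hsum : ∑ a ∈ Finset.range q, χ (a + 1 : ℕ) * (a + 1) = 0) :
    ((∑ a ∈ Finset.range q, ∑ b ∈ Finset.range (q * D),
      divisorWeight D (fun x => (χ x).valMinAbs) a b * (((a : ℤ) + 1) * ((b : ℤ) + 1)) : ℤ) :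
        ZMod r) = 0 := by
  have hfactor : (∑ a ∈ Finset.range q, χ (a + 1 : ℕ) * ((a : ZMod r) + 1)) *
      ∑ b ∈ Finset.range (q * D), χ (b + 1 : ℕ) * (J(((b + 1 : ℕ) : ℤ) | D) : ZMod r) * (b + 1) =
        0 := by rw [hsum, zero_mul]
  rw [← hfactor, Finset.sum_mul_sum]
  simp only [divisorWeight]
  push_cast
  simp only [map_mul]
  refine Finset.sum_congr rfl fun a _ => Finset.sum_congr rfl fun b _ => ?_
  ring

theorem sum_char_coneNorm_mul_eq_zero [IsDomain (UnitOrder n)] [IsPrincipalIdealRing (UnitOrder n)]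
    (hodd : Odd n) (hq : Odd q) (hqn : 2 * (q : ℤ) + 2 ≤ n) (hr : Odd r)
    (hD : IsUnit ((n ^ 2 - 4 : ℤ) : ZMod r)) (hχ : Function.Odd χ)
    (hsum : ∑ a ∈ Finset.range q, χ (a + 1 : ℕ) * (a + 1) = 0) {c : ZMod q} (hc : c * (n - 2) = 1)
    {ν : QuadraticAlgebra (ZMod q) (-1) n} (hν : QuadraticAlgebra.norm ν = -1) :
    ∑ u ∈ Finset.range q, ∑ v ∈ Finset.range q, χ (coneNorm n u v : ZMod q) *
      (2 * ((u : ZMod r) + 1 + v) ^ 2 + χ c * (((u : ZMod r) + 1) ^ 2 + (v : ZMod r) ^ 2 +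
          4 * coneIndex c u v * ((u : ZMod r) + 1 + v - q)) +
        (n - 2) * (((u : ZMod r) + 1) ^ 2 + (v : ZMod r) ^ 2 +
          χ c * (2 * coneIndex c u v * (q - coneIndex c u v)))) = 0 := by
  obtain ⟨m, hm⟩ : ∃ m : ℕ, (m : ℤ) = n - 2 := ⟨(n - 2).toNat, by lia⟩
  obtain ⟨D, hDn⟩ : ∃ D : ℕ, (D : ℤ) = n ^ 2 - 4 := ⟨(n ^ 2 - 4).toNat, by
    have : 0 ≤ n ^ 2 - 4 := by nlinarith
    lia⟩
  have hn : n = m + 2 := by lia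
  have hc' : c * m = 1 := by rw [← hc, hn]; push_cast; ring
  have hkey := congrArg (Int.cast : ℤ → ZMod r) <|
    four_mul_sum_divisorWeight_eq_mul_sum hDn (by have := hq.pos; lia) hodd hm hq
      (odd_valMinAbs_comp hr hχ) hc' (by lia) hν
  rw [Int.cast_mul, sum_divisorWeight_valMinAbs_eq_zero hsum, mul_zero, Int.cast_mul, hDn] at hkey
  rw [← (hD.mul_right_eq_zero).mp hkey.symm]
  simp only [coneWeight]
  push_cast
  simp only [map_mul]
  refine Finset.sum_congr rfl fun u _ => Finset.sum_congr rfl fun v _ => ?_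
  rw [hn]
  push_cast
  ring

/-- The residue in `{1, …, q}` of `c * (u + 1 + v)` modulo `q`, computed in `ℕ`. -/
def natConeIndex (q c u v : ℕ) : ℕ := (c * (u + 1 + v) + (q - 1)) % q + 1

theorem coneIndex_natCast [NeZero q] (c u v : ℕ) :
    coneIndex (c : ZMod q) u v = natConeIndex q c u v := by
  have hq : 1 ≤ q := NeZero.one_le
  rw [coneIndex, natConeIndex, ← ZMod.val_natCast]
  push_cast [Nat.cast_sub hq]
  simp [sub_eq_add_neg]

/-- The part free of `n` of the character sum `sum_char_coneNorm_mul_eq_zero`, for `n ≡ a` modulo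
`q` and the character modulo `q` with values `t x` modulo `r`. Being a sum of natural numbers it
can be evaluated by the kernel; this is why `r - 1` stands for `-1`. -/
def momentConst (q r : ℕ) (t : ℕ → ℕ) (a c : ℕ) : ℕ :=
  ∑ u ∈ Finset.range q, ∑ v ∈ Finset.range q, t ((u + 1) * (u + 1 + a * v) + v * v) *
    (2 * ((u + 1 + v) * (u + 1 + v)) + t c * ((u + 1) * (u + 1) + v * v +
      4 * natConeIndex q c u v * (u + 1 + v + (r - 1) * q)))

/-- The coefficient of `n - 2` that goes with `momentConst`. -/
def momentSlope (q : ℕ) (t : ℕ → ℕ) (a c : ℕ) : ℕ :=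
  ∑ u ∈ Finset.range q, ∑ v ∈ Finset.range q, t ((u + 1) * (u + 1 + a * v) + v * v) *
    ((u + 1) * (u + 1) + v * v +
      t c * (2 * natConeIndex q c u v * (q - natConeIndex q c u v)))

theorem momentConst_add_mul_momentSlope [IsDomain (UnitOrder n)]
    [IsPrincipalIdealRing (UnitOrder n)] (hodd : Odd n) (hq : Odd q)
    (hqn : 2 * (q : ℤ) + 2 ≤ n) (hr : Odd r) (hD : IsUnit ((n ^ 2 - 4 : ℤ) : ZMod r))
    (hχ : Function.Odd χ) {t : ℕ → ℕ} (ht : ∀ x : ℕ, χ x = t x)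
    (hsum : r ∣ ∑ a ∈ Finset.range q, t (a + 1) * (a + 1)) {a c x y : ℕ} (ha : (n : ZMod q) = a)
    (hc : (c * (a - 2) : ZMod q) = 1) (hxy : (x ^ 2 + a * x * y + y ^ 2 : ZMod q) = -1) :
    (momentConst q r t a c + (n - 2) * momentSlope q t a c : ZMod r) = 0 := by
  have : NeZero q := ⟨hq.pos.ne'⟩
  have hsum' : ∑ a ∈ Finset.range q, χ (a + 1 : ℕ) * (a + 1) = 0 := by
    rw [← ZMod.natCast_eq_zero_iff] at hsum
    push_cast at hsum
    simpa only [ht] using hsum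
  have hν : QuadraticAlgebra.norm (⟨x, y⟩ : QuadraticAlgebra (ZMod q) (-1) n) = -1 := by
    refine Eq.trans ?_ hxy
    rw [QuadraticAlgebra.norm_def, ha]
    ring
  rw [← sum_char_coneNorm_mul_eq_zero hodd hq hqn hr hD hχ hsum' (by rwa [ha]) hν, momentConst,
    momentSlope]
  push_cast
  simp only [Finset.mul_sum, ← Finset.sum_add_distrib]
  refine Finset.sum_congr rfl fun u _ => Finset.sum_congr rfl fun v _ => ?_
  have hnorm : (coneNorm n u v : ZMod q) = ((u + 1) * (u + 1 + a * v) + v * v : ℕ) := by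
    rw [coneNorm_eq]
    push_cast
    rw [ha]
    ring
  have hle : natConeIndex q c u v ≤ q := Nat.mod_lt _ hq.pos
  rw [hnorm, ht, ht, coneIndex_natCast, Nat.cast_sub hle, Nat.cast_sub hr.pos, ZMod.natCast_self]
  push_cast
  ring

end Characters

end UnitOrder

section TabulatedCharacters

/-- The `x`-th pair of decimal digits of `t`, counted from the right; this encodes a table of
small numbers in a form that the kernel looks up fast. -/
def digitPair (t x : ℕ) : ℕ := t / Nat.pow 100 x % 100

/-- The multiplicative function modulo `p` with values modulo `r` that are tabulated by `t`. -/
def digitPairHom (p r t : ℕ) (hone : (digitPair t (1 : ZMod p).val : ZMod r) = 1)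
    (hmul : ∀ x y : ZMod p,
      (digitPair t (x * y).val : ZMod r) = digitPair t x.val * digitPair t y.val) :
    ZMod p →* ZMod r where
  toFun x := digitPair t x.val
  map_one' := hone
  map_mul' := hmul

theorem digitPairHom_natCast {p r t : ℕ} (hone : (digitPair t (1 : ZMod p).val : ZMod r) = 1)
    (hmul : ∀ x y : ZMod p,
      (digitPair t (x * y).val : ZMod r) = digitPair t x.val * digitPair t y.val) (x : ℕ) :
    digitPairHom p r t hone hmul x = digitPair t (x % p) := by
  rw [← ZMod.val_natCast]
  rfl

/-- The odd character modulo `105` with values modulo `13` that is the product of the quadratic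
character modulo `3`, the quartic one modulo `5` with `2 ↦ 5` and the sextic one modulo `7` with
`3 ↦ 4`. -/
def char105 : ZMod 105 →* ZMod 13 :=
  (digitPairHom 3 13 120100 (by decide) (by decide)).comp
      (ZMod.castHom (by norm_num : 3 ∣ 105) (ZMod 3)) *
    (digitPairHom 5 13 1208050100 (by decide) (by decide)).comp
      (ZMod.castHom (by norm_num : 5 ∣ 105) (ZMod 5)) *
    (digitPairHom 7 13 12100904030100 (by decide) (by decide)).comp
      (ZMod.castHom (by norm_num : 7 ∣ 105) (ZMod 7))

/-- The values of `char105` as natural numbers. -/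
def natChar105 (x : ℕ) : ℕ :=
  digitPair 120100 (x % 3) * digitPair 1208050100 (x % 5) * digitPair 12100904030100 (x % 7)

theorem char105_natCast (x : ℕ) : char105 x = natChar105 x := by
  simp [char105, natChar105, digitPairHom_natCast]

theorem odd_char105 : Function.Odd char105 :=
  odd_of_map_neg_one (by decide)

theorem thirteen_dvd_sum_natChar105 :
    13 ∣ ∑ a ∈ Finset.range 105, natChar105 (a + 1) * (a + 1) := by
  decide +kernel

/-- The odd character modulo `91` with values modulo `37` that is the product of the cubic
character modulo `7` with `3 ↦ 10` and the character of order `12` modulo `13` with `2 ↦ 8`. -/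
def char91 : ZMod 91 →* ZMod 37 :=
  (digitPairHom 7 37 1261010260100 (by decide) (by decide)).comp
      (ZMod.castHom (by norm_num : 7 ∣ 91) (ZMod 7)) *
    (digitPairHom 13 37 36291110311423062726080100 (by decide) (by decide)).comp
      (ZMod.castHom (by norm_num : 13 ∣ 91) (ZMod 13))

/-- The values of `char91` as natural numbers. -/
def natChar91 (x : ℕ) : ℕ :=
  digitPair 1261010260100 (x % 7) * digitPair 36291110311423062726080100 (x % 13)

theorem char91_natCast (x : ℕ) : char91 x = natChar91 x := by
  simp [char91, natChar91, digitPairHom_natCast]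

theorem odd_char91 : Function.Odd char91 :=
  odd_of_map_neg_one (by decide)

theorem thirtySeven_dvd_sum_natChar91 :
    37 ∣ ∑ a ∈ Finset.range 91, natChar91 (a + 1) * (a + 1) := by
  decide +kernel

end TabulatedCharacters

theorem exists_prime_dvd_sq_add_mul_add_one : ∀ n < 214, 6 ≤ n → n ≠ 9 → n ≠ 21 →
    ∃ p ∈ [2, 3, 5, 7, 11, 13, 17, 19, 23, 29, 31, 37], p + 2 < n ∧
      ∃ b < p, (b * b + n * b + 1) % p = 0 := by
  decide +kernel

theorem intCast_ninetyOne_eq {n : ℤ} {a : ZMod 105} {k : ZMod 13} {l : ZMod 91}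
    (ha : (n : ZMod 105) = a) (hk : (n : ZMod 13) = k)
    (hl : ∀ z : ZMod 91, (z.cast : ZMod 7) = a.cast → (z.cast : ZMod 13) = k → z = l) :
    (n : ZMod 91) = l := by
  apply hl
  · rw [← ha, ZMod.cast_intCast (by norm_num), ZMod.cast_intCast (by norm_num)]
  · rw [← hk, ZMod.cast_intCast (by norm_num)]

namespace UnitOrder

variable {n : ℤ} [IsDomain (UnitOrder n)] [IsPrincipalIdealRing (UnitOrder n)]

theorem intCast_sq_add_mul_add_one_ne_zero (hn : 3 ≤ n) {p : ℕ} (hp : p.Prime)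
    (hpn : (p : ℤ) < n - 2) (b : ZMod p) : b ^ 2 + n * b + 1 ≠ 0 := by
  have hdvd := not_prime_dvd_of_lt hn hp hpn b.cast
  rw [← ZMod.intCast_zmod_eq_zero_iff_dvd] at hdvd
  push_cast at hdvd
  exact hdvd

theorem isUnit_sq_sub_four (hn : 3 ≤ n) {p : ℕ} (hp : p.Prime) (hpn : (p : ℤ) < n - 2) :
    IsUnit ((n ^ 2 - 4 : ℤ) : ZMod p) := by
  have : Fact p.Prime := ⟨hp⟩
  have hadd := intCast_sq_add_mul_add_one_ne_zero hn hp hpn 1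
  have hsub := intCast_sq_add_mul_add_one_ne_zero hn hp hpn (-1)
  have hfactor : n ^ 2 - 4 = -((1 ^ 2 + n * 1 + 1) * ((-1) ^ 2 + n * (-1) + 1)) := by ring
  rw [isUnit_iff_ne_zero, hfactor]
  simpa only [Int.cast_neg, Int.cast_mul, Int.cast_add, Int.cast_pow, Int.cast_one, neg_ne_zero]
    using mul_ne_zero hadd hsub

theorem eq_nine_or_eq_twentyOne_of_lt (hn : 6 ≤ n) (hlt : n < 214) : n = 9 ∨ n = 21 := by
  lift n to ℕ using by lia
  by_contra! hne
  obtain ⟨p, hp, hpn, b, -, hb⟩ := exists_prime_dvd_sq_add_mul_add_one n (by lia) (by lia) (by lia)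
    (by lia)
  have hprime : p.Prime := by
    clear hpn hb
    decide +revert
  refine not_prime_dvd_of_lt (n := n) (by lia) hprime (by lia) b ?_
  exact_mod_cast (Nat.dvd_of_mod_eq_zero hb : p ∣ b * b + n * b + 1) |>.trans (by rw [sq])

theorem odd_of_le (hn : 214 ≤ n) : Odd n := by
  have h := not_prime_dvd_of_lt (n := n) (by lia) Nat.prime_two (by lia) 1
  rw [Int.odd_iff]
  lia

theorem intCast_thirteen_eq (hn : 214 ≤ n) {a c x y A B : ℕ} {k : ZMod 13}
    (ha : (n : ZMod 105) = a) (hA : momentConst 105 13 natChar105 a c % 13 = A)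
    (hB : momentSlope 105 natChar105 a c % 13 = B) (hc : (c * (a - 2) : ZMod 105) = 1)
    (hxy : (x ^ 2 + a * x * y + y ^ 2 : ZMod 105) = -1)
    (hk : ∀ z : ZMod 13, A + (z - 2) * B = 0 → z = k) : (n : ZMod 13) = k := by
  apply hk
  rw [← hA, ← hB, ZMod.natCast_mod, ZMod.natCast_mod]
  exact momentConst_add_mul_momentSlope (odd_of_le hn) (by decide) (by lia) (by decide)
    (isUnit_sq_sub_four (by lia) (by norm_num) (by lia)) odd_char105 char105_natCast
    thirteen_dvd_sum_natChar105 ha hc hxy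

theorem intCast_thirtySeven_eq (hn : 214 ≤ n) {a c x y A B : ℕ} {k : ZMod 37}
    (ha : (n : ZMod 91) = a) (hA : momentConst 91 37 natChar91 a c % 37 = A)
    (hB : momentSlope 91 natChar91 a c % 37 = B) (hc : (c * (a - 2) : ZMod 91) = 1)
    (hxy : (x ^ 2 + a * x * y + y ^ 2 : ZMod 91) = -1)
    (hk : ∀ z : ZMod 37, A + (z - 2) * B = 0 → z = k) : (n : ZMod 37) = k := by
  apply hk
  rw [← hA, ← hB, ZMod.natCast_mod, ZMod.natCast_mod]
  exact momentConst_add_mul_momentSlope (odd_of_le hn) (by decide) (by lia) (by decide)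
    (isUnit_sq_sub_four (by lia) (by norm_num) (by lia)) odd_char91 char91_natCast
    thirtySeven_dvd_sum_natChar91 ha hc hxy

theorem intCast_oneHundredFive_mem (hn : 214 ≤ n) :
    (n : ZMod 105) ∈ ({21, 24, 39, 66, 81, 84} : Finset (ZMod 105)) := by
  have hne (p : ℕ) (hp : p.Prime) (hp7 : p ≤ 7) :=
    intCast_sq_add_mul_add_one_ne_zero (n := n) (by lia) hp (by lia)
  have hinert : ∀ z : ZMod 105, (∀ b : ZMod 3, b ^ 2 + z.cast * b + 1 ≠ 0) →
      (∀ b : ZMod 5, b ^ 2 + z.cast * b + 1 ≠ 0) → (∀ b : ZMod 7, b ^ 2 + z.cast * b + 1 ≠ 0) →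
      z ∈ ({21, 24, 39, 66, 81, 84} : Finset (ZMod 105)) := by
    decide +kernel
  apply hinert
  · rw [ZMod.cast_intCast (by norm_num)]
    exact hne 3 (by norm_num) (by norm_num)
  · rw [ZMod.cast_intCast (by norm_num)]
    exact hne 5 (by norm_num) (by norm_num)
  · rw [ZMod.cast_intCast (by norm_num)]
    exact hne 7 (by norm_num) (by norm_num)

theorem intCast_thirteen_eq_eight (hn : 214 ≤ n) (h : (n : ZMod 105) = 21) : (n : ZMod 13) = 8 :=
  intCast_thirteen_eq hn (a := 21) (c := 94) (x := 2) (y := 10) (A := 9) (B := 5) h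
    (by decide +kernel) (by decide +kernel) (by decide) (by decide) (by decide)

theorem intCast_thirteen_eq_nine (hn : 214 ≤ n) (h : (n : ZMod 105) = 24) : (n : ZMod 13) = 9 :=
  intCast_thirteen_eq hn (a := 24) (c := 43) (x := 2) (y := 2) (A := 10) (B := 6) h
    (by decide +kernel) (by decide +kernel) (by decide) (by decide) (by decide)

theorem intCast_thirteen_eq_one (hn : 214 ≤ n) (h : (n : ZMod 105) = 39) : (n : ZMod 13) = 1 :=
  intCast_thirteen_eq hn (a := 39) (c := 88) (x := 2) (y := 5) (A := 6) (B := 6) h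
    (by decide +kernel) (by decide +kernel) (by decide) (by decide) (by decide)

theorem intCast_thirteen_eq_twelve (hn : 214 ≤ n) (h : (n : ZMod 105) = 66) :
    (n : ZMod 13) = 12 :=
  intCast_thirteen_eq hn (a := 66) (c := 64) (x := 5) (y := 8) (A := 5) (B := 6) h
    (by decide +kernel) (by decide +kernel) (by decide) (by decide) (by decide)

theorem intCast_thirteen_eq_four (hn : 214 ≤ n) (h : (n : ZMod 105) = 81) : (n : ZMod 13) = 4 :=
  intCast_thirteen_eq hn (a := 81) (c := 4) (x := 2) (y := 5) (A := 1) (B := 6) h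
    (by decide +kernel) (by decide +kernel) (by decide) (by decide) (by decide)

theorem intCast_thirteen_eq_five (hn : 214 ≤ n) (h : (n : ZMod 105) = 84) : (n : ZMod 13) = 5 :=
  intCast_thirteen_eq hn (a := 84) (c := 73) (x := 2) (y := 10) (A := 11) (B := 5) h
    (by decide +kernel) (by decide +kernel) (by decide) (by decide) (by decide)

theorem intCast_thirtySeven_eq_twentyOne (hn : 214 ≤ n) (h : (n : ZMod 91) = 21) :
    (n : ZMod 37) = 21 :=
  intCast_thirtySeven_eq hn (a := 21) (c := 24) (x := 3) (y := 12) (A := 3) (B := 31) h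
    (by decide +kernel) (by decide +kernel) (by decide) (by decide) (by decide)

theorem intCast_thirtySeven_eq_sixteen (hn : 214 ≤ n) (h : (n : ZMod 91) = 70) :
    (n : ZMod 37) = 16 :=
  intCast_thirtySeven_eq hn (a := 70) (c := 87) (x := 10) (y := 12) (A := 10) (B := 31) h
    (by decide +kernel) (by decide +kernel) (by decide) (by decide) (by decide)

theorem intCast_ninetyOne_eq_or (hn : 214 ≤ n) : (n : ZMod 91) = 21 ∨ (n : ZMod 91) = 70 := by
  have hne := intCast_sq_add_mul_add_one_ne_zero (n := n) (p := 13) (by lia) (by norm_num) (by lia)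
  have hmem := intCast_oneHundredFive_mem hn
  simp only [Finset.mem_insert, Finset.mem_singleton] at hmem
  rcases hmem with h | h | h | h | h | h
  · exact .inl (intCast_ninetyOne_eq h (intCast_thirteen_eq_eight hn h) (by decide +kernel))
  · exact absurd (by rw [intCast_thirteen_eq_nine hn h]; rfl) (hne 6)
  · exact absurd (by rw [intCast_thirteen_eq_one hn h]; rfl) (hne 3)
  · exact absurd (by rw [intCast_thirteen_eq_twelve hn h]; rfl) (hne 4)
  · exact absurd (by rw [intCast_thirteen_eq_four hn h]; rfl) (hne 2)
  · exact .inr (intCast_ninetyOne_eq h (intCast_thirteen_eq_five hn h) (by decide +kernel))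

theorem lt_of_isPrincipalIdealRing : n < 214 := by
  by_contra! hn
  have hne := intCast_sq_add_mul_add_one_ne_zero (n := n) (p := 37) (by lia) (by norm_num) (by lia)
  rcases intCast_ninetyOne_eq_or hn with h | h
  · exact absurd (by rw [intCast_thirtySeven_eq_twentyOne hn h]; rfl) (hne 18)
  · exact absurd (by rw [intCast_thirtySeven_eq_sixteen hn h]; rfl) (hne 2)

end UnitOrder

/-- For `n ≥ 0` with `n² - 4` nonsquare and `O_{n²-4}` a maximal order, the class number
`h_{n²-4}` is `1` iff `n ∈ {0, 1, 3, 4, 5, 9, 21}`. -/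
theorem maximal_sub_classNumber_one_iff (n : ℤ) (hn : 0 ≤ n)
    (hns : ¬ IsSquare (n ^ 2 - 4)) (hmax : IsMaximalOrder (n ^ 2 - 4)) :
    classNumber (n ^ 2 - 4) = 1 ↔ n ∈ ({0, 1, 3, 4, 5, 9, 21} : Set ℤ) := by
  refine ⟨fun h => ?_, UnitOrder.classNumber_eq_one_of_mem hns⟩
  have : IsDomain (UnitOrder n) := UnitOrder.isDomain hns
  have := UnitOrder.isPrincipalIdealRing_of_classNumber_eq_one hns hmax h
  have hn2 : n ≠ 2 := by
    rintro rfl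
    exact hns ⟨0, by norm_num⟩
  simp only [Set.mem_insert_iff, Set.mem_singleton_iff]
  rcases lt_or_ge n 6 with hlt | hge
  · lia
  · have := UnitOrder.eq_nine_or_eq_twentyOne_of_lt hge UnitOrder.lt_of_isPrincipalIdealRing
    lia
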